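/- arXiv:1405.0531 — 12 statements merged into one kernel-verified Lean document; each statement's English description precedes it below -/
import Mathlib

section
/- Let S be a commutative ring and let A, B, C, D ∈ S be such that {A,B} and {C,D} are both regular sequences on S. Suppose C = aA + bB and D = cA + dB for elements a, b, c, d ∈ S, and set E := ad − bc. If some entry of the matrix ((a,b),(c,d)) is a nonzerodivisor on S/(A,B), then the colon ideal (C,D) : E equals the ideal (A,B). -/
/-- Let `S` be a commutative ring, `{A,B}` and `{C,D}` regular
sequences on `S`, with `C = a*A + b*B`, `D = c*A + d*B`.  If some entry of the
matrix `((a,b),(c,d))` is a nonzerodivisor on `S/(A,B)`, then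
`(C,D) : E = (A,B)` where `E = a*d - b*c`. -/
theorem stmt0 {S : Type*} [CommRing S] (A B C D a b c d : S)
    (hA : ∀ x : S, A * x = 0 → x = 0)
    (hB : ∀ x : S, B * x ∈ Ideal.span {A} → x ∈ Ideal.span {A})
    (hC : ∀ x : S, C * x = 0 → x = 0)
    (hD : ∀ x : S, D * x ∈ Ideal.span {C} → x ∈ Ideal.span {C})
    (hCdef : C = a * A + b * B) (hDdef : D = c * A + d * B)
    (hreg : ∃ e ∈ ({a, b, c, d} : Set S),
      ∀ x : S, e * x ∈ Ideal.span {A, B} → x ∈ Ideal.span {A, B}) :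
    (Ideal.span {C, D}).colon (Ideal.span {a * d - b * c}) = Ideal.span {A, B} := by
  have hAm : A ∈ Ideal.span {A, B} := Ideal.subset_span (by simp)
  have hBm : B ∈ Ideal.span {A, B} := Ideal.subset_span (by simp)
  have key : ∀ p q : S, D * p = C * q → ∃ t, p = t * C ∧ q = t * D := by
    intro p q h
    have h1 : p ∈ Ideal.span {C} := by
      apply hD
      rw [h]
      exact Ideal.mem_span_singleton'.2 ⟨q, mul_comm _ _⟩
    obtain ⟨t, rfl⟩ := Ideal.mem_span_singleton'.1 h1
    refine ⟨t, rfl, ?_⟩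
    have := hC (q - t * D) (by linear_combination -h)
    linear_combination this
  have mem : ∀ y r s : S, y = r * A + s * B → y ∈ Ideal.span {A, B} := fun y r s h =>
    Ideal.mem_span_pair.2 ⟨r, s, h.symm⟩
  ext f
  rw [Submodule.mem_colon]
  constructor
  · intro h
    have hE := h (a * d - b * c) (Ideal.subset_span (by simp))
    obtain ⟨u, v, huv⟩ := Ideal.mem_span_pair.1 hE
    rw [smul_eq_mul] at huv
    obtain ⟨t, ht1, ht2⟩ := key (f * b + v * A) (f * d - u * A) (by
      subst hCdef hDdef; linear_combination A * huv)
    obtain ⟨s, hs1, hs2⟩ := key (f * a - v * B) (f * c + u * B) (by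
      subst hCdef hDdef; linear_combination -B * huv)
    obtain ⟨e, he, hreg⟩ := hreg
    apply hreg
    simp only [Set.mem_insert_iff, Set.mem_singleton_iff] at he
    rcases he with rfl | rfl | rfl | rfl
    · exact mem _ (s * e) (s * b + v) (by linear_combination hs1 + s * hCdef)
    · exact mem _ (t * a - v) (t * e) (by linear_combination ht1 + t * hCdef)
    · exact mem _ (s * e) (s * d - u) (by linear_combination hs2 + s * hDdef)
    · exact mem _ (t * c + u) (t * e) (by linear_combination ht2 + t * hDdef)
  · intro h p hp
    obtain ⟨r, s, rfl⟩ := Ideal.mem_span_pair.1 h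
    obtain ⟨w, rfl⟩ := Ideal.mem_span_singleton'.1 hp
    refine Ideal.mem_span_pair.2 ⟨w * (r * d - s * c), w * (s * a - r * b), ?_⟩
    rw [smul_eq_mul]
    subst hCdef hDdef
    ring
end

section
/- With the reparametrization setup, the Rees ideal 𝒥 of I equals the ideal of R[T_1,…,T_{n+1}] generated by the image δ(𝒥') of the Rees ideal 𝒥' of I', i.e., 𝒥 = Ideal.map δ 𝒥'. -/
open MvPolynomial

theorem aux_span {R S : Type*} [CommRing R] [CommRing S] {ι σ : Type*} [Fintype ι]
    (f : R →+* S) (e : ι → S) (hs : ∀ s, ∃ u : ι → R, s = ∑ i, e i * f (u i))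
    (P : MvPolynomial σ S) :
    ∃ U : ι → MvPolynomial σ R, P = ∑ i, C (e i) * MvPolynomial.map f (U i) := by
  induction P using MvPolynomial.induction_on' with
  | monomial m s =>
    obtain ⟨u, hu⟩ := hs s
    refine ⟨fun i => monomial m (u i), ?_⟩
    simp only [map_monomial, C_mul_monomial]
    rw [hu, map_sum]
  | add p q hp hq =>
    obtain ⟨U, hU⟩ := hp
    obtain ⟨V, hV⟩ := hq
    refine ⟨fun i => U i + V i, ?_⟩
    simp only [map_add, mul_add, Finset.sum_add_distrib]
    rw [← hU, ← hV]

theorem aux_ker {R S : Type*} [CommRing R] [CommRing S] {ι σ : Type*} [Fintype ι]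
    (f : R →+* S) (e : ι → S) (hs : ∀ s, ∃ u : ι → R, s = ∑ i, e i * f (u i))
    (hi : ∀ u : ι → R, ∑ i, e i * f (u i) = 0 → ∀ i, u i = 0)
    (g : σ → Polynomial S) (g' : σ → Polynomial R)
    (hg : ∀ j, g j = Polynomial.map f (g' j)) :
    RingHom.ker (aeval g : MvPolynomial σ S →ₐ[S] Polynomial S).toRingHom =
      Ideal.map (MvPolynomial.map f)
        (RingHom.ker (aeval g' : MvPolynomial σ R →ₐ[R] Polynomial R).toRingHom) := by
  have key : ∀ p : MvPolynomial σ R,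
      aeval g (MvPolynomial.map f p) = Polynomial.map f (aeval g' p) := by
    intro p
    induction p using MvPolynomial.induction_on with
    | C r => simp [Polynomial.algebraMap_eq]
    | add p q hp hq => simp [hp, hq]
    | mul_X p j hp => simp [hp, hg]
  apply le_antisymm
  · intro P hP
    have hP : aeval g P = 0 := hP
    obtain ⟨U, hU⟩ := aux_span f e hs P
    have hz : ∀ i, aeval g' (U i) = 0 := by
      rw [hU, map_sum] at hP
      simp only [map_mul, key, algHom_C, Polynomial.algebraMap_eq] at hP
      intro i
      ext d
      refine hi (fun i => (aeval g' (U i)).coeff d) ?_ i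
      have := congrArg (fun q => Polynomial.coeff q d) hP
      simpa [Polynomial.finsetSum_coeff] using this
    rw [hU]
    exact Ideal.sum_mem _ fun i _ => Ideal.mul_mem_left _ _ (Ideal.mem_map_of_mem _ (hz i))
  · rw [Ideal.map_le_iff_le_comap]
    intro p hp
    have hp : aeval g' p = 0 := hp
    change aeval g (MvPolynomial.map f p) = 0
    rw [key, hp, Polynomial.map_zero]

/-- The exponent vector with entries `c i * q i + r i`. -/
noncomputable def auxExp {n : ℕ} (c q r : Fin n → ℕ) : Fin n →₀ ℕ :=
  Finsupp.equivFunOnFinite.symm (fun i => c i * q i + r i)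

theorem aux_monomial {k : Type*} [Field k] {n : ℕ} (c r : Fin n → ℕ) (q : Fin n →₀ ℕ) (t : k) :
    (∏ i, (X i : MvPolynomial (Fin n) k) ^ r i) *
      aeval (fun i : Fin n => (X i : MvPolynomial (Fin n) k) ^ c i) (monomial q t) =
      monomial (auxExp c q r) t := by
  rw [aeval_monomial, monomial_eq, Finsupp.prod_fintype _ _ (by simp),
    Finsupp.prod_fintype _ _ (by simp), mul_left_comm, ← Finset.prod_mul_distrib]
  congr 1
  refine Finset.prod_congr rfl fun i _ => ?_
  simp [auxExp, pow_add, pow_mul, mul_comm]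

theorem aux_exp_inj {n : ℕ} (c : Fin n → ℕ) (q q' : Fin n →₀ ℕ) (r r' : (i : Fin n) → Fin (c i)) :
    auxExp c q (fun i => r i) = auxExp c q' (fun i => r' i) ↔ q = q' ∧ r = r' := by
  constructor
  · intro h
    have h1 : ∀ i, c i * q i + r i = c i * q' i + r' i := fun i => by
      simpa [auxExp] using DFunLike.congr_fun h i
    have h2 : ∀ i, (r i : ℕ) = r' i := fun i => by
      have := congrArg (· % c i) (h1 i)
      simpa [Nat.mul_add_mod, Nat.mod_eq_of_lt (r i).2, Nat.mod_eq_of_lt (r' i).2] using this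
    refine ⟨?_, funext fun i => Fin.ext (h2 i)⟩
    ext i
    have h3 := h1 i
    rw [h2 i] at h3
    exact Nat.eq_of_mul_eq_mul_left (Nat.zero_lt_of_lt (r i).2) (Nat.add_right_cancel h3)
  · rintro ⟨rfl, rfl⟩
    rfl

theorem aux_coeff {k : Type*} [Field k] {n : ℕ} (c : Fin n → ℕ) (r s : (i : Fin n) → Fin (c i))
    (m : Fin n →₀ ℕ) (u : MvPolynomial (Fin n) k) :
    coeff (auxExp c m (fun i => r i)) ((∏ i, (X i : MvPolynomial (Fin n) k) ^ (s i : ℕ)) *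
      aeval (fun i : Fin n => (X i : MvPolynomial (Fin n) k) ^ c i) u) =
      if s = r then coeff m u else 0 := by
  classical
  induction u using MvPolynomial.induction_on' with
  | monomial q t =>
    rw [aux_monomial c (fun i => (s i : ℕ)), coeff_monomial, coeff_monomial]
    simp only [aux_exp_inj]
    split_ifs <;> simp_all
  | add p q hp hq =>
    rw [map_add, mul_add, coeff_add, hp, hq]
    split_ifs <;> simp

/-- (Reparametrization of monomial almost complete intersections.)
With `I = (x_1^{a_1},…,x_n^{a_n}, x^{b})` and the reparametrized ideal `I'`, the Rees
ideal `𝒥` of `I` equals the ideal generated by the image under `δ` of the Rees ideal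
`𝒥'` of `I'`, i.e. `𝒥 = Ideal.map δ 𝒥'`. -/
theorem stmt1 {k : Type*} [Field k] (n : ℕ) (hn : 2 ≤ n)
    (a b : Fin n → ℕ) (ha : ∀ i, 1 ≤ a i) (hb : ∀ i, b i < a i)
    (htwo : ∃ i j : Fin n, i ≠ j ∧ b i ≠ 0 ∧ b j ≠ 0)
    (a' b' c : Fin n → ℕ)
    (ha' : ∀ i, a' i = if b i = 0 then a i else a i / Nat.gcd (a i) (b i))
    (hb' : ∀ i, b' i = if b i = 0 then 0 else b i / Nat.gcd (a i) (b i))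
    (hc : ∀ i, c i = if b i = 0 then 1 else Nat.gcd (a i) (b i)) :
    let R := MvPolynomial (Fin n) k
    -- the Rees map for `I`
    let ψ : MvPolynomial (Fin (n + 1)) R →ₐ[R] Polynomial R :=
      aeval (Fin.snoc (fun i : Fin n => Polynomial.C (X i ^ a i) * Polynomial.X)
        (Polynomial.C (∏ i, X i ^ b i) * Polynomial.X))
    -- the Rees map for `I'`
    let ψ' : MvPolynomial (Fin (n + 1)) R →ₐ[R] Polynomial R :=
      aeval (Fin.snoc (fun i : Fin n => Polynomial.C (X i ^ a' i) * Polynomial.X)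
        (Polynomial.C (∏ i, X i ^ b' i) * Polynomial.X))
    -- the k-algebra endomorphism `δ` fixing the `T_j` and sending `x_i ↦ x_i^{c_i}`
    let δ : MvPolynomial (Fin (n + 1)) R →+* MvPolynomial (Fin (n + 1)) R :=
      MvPolynomial.map
        ((aeval (fun i : Fin n => (X i : R) ^ c i) : R →ₐ[k] R) : R →+* R)
    RingHom.ker ψ.toRingHom = Ideal.map δ (RingHom.ker ψ'.toRingHom) := by
  intro R ψ ψ' δ
  have hcpos : ∀ i, 0 < c i := fun i => by
    rw [hc]
    split_ifs
    · exact Nat.one_pos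
    · exact Nat.gcd_pos_of_pos_left _ (ha i)
  have hac : ∀ i, a i = c i * a' i := fun i => by
    rw [hc, ha']
    split_ifs
    · simp
    · exact (Nat.mul_div_cancel' (Nat.gcd_dvd_left _ _)).symm
  have hbc : ∀ i, b i = c i * b' i := fun i => by
    rw [hc, hb']
    split_ifs with h
    · simpa using h
    · exact (Nat.mul_div_cancel' (Nat.gcd_dvd_right _ _)).symm
  refine aux_ker (ι := (i : Fin n) → Fin (c i)) _
    (fun s => ∏ i, (X i : MvPolynomial (Fin n) k) ^ (s i : ℕ)) ?_ ?_ _ _ ?_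
  · intro p
    induction p using MvPolynomial.induction_on' with
    | monomial m t =>
      classical
      refine ⟨Pi.single (fun i => ⟨m i % c i, Nat.mod_lt _ (hcpos i)⟩)
        (monomial (Finsupp.equivFunOnFinite.symm fun i => m i / c i) t), ?_⟩
      rw [Finset.sum_eq_single (fun i => ⟨m i % c i, Nat.mod_lt _ (hcpos i)⟩)]
      · rw [Pi.single_eq_same]
        refine Eq.trans ?_ (aux_monomial c (fun i => m i % c i) _ t).symm
        congr 1
        ext i
        simp [auxExp, Nat.div_add_mod]
      · intro s _ hs
        rw [Pi.single_eq_of_ne hs, map_zero, mul_zero]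
      · simp
    | add p q hp hq =>
      obtain ⟨U, hU⟩ := hp
      obtain ⟨V, hV⟩ := hq
      refine ⟨fun i => U i + V i, ?_⟩
      simp only [map_add, mul_add, Finset.sum_add_distrib]
      rw [← hU, ← hV]
  · intro u hu r
    classical
    ext m
    have h := congrArg (coeff (auxExp c m (fun i => r i))) hu
    rw [coeff_sum] at h
    have h2 := (Finset.sum_congr rfl fun s _ => (aux_coeff c r s m (u s)).symm).trans h
    simpa using h2
  · intro j
    have hX : ∀ i, (aeval (fun i : Fin n => (X i : R) ^ c i) : R →ₐ[k] R) (X i) = X i ^ c i :=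
      fun i => aeval_X _ i
    refine Fin.lastCases ?_ (fun i => ?_) j
    · simp [hX, Polynomial.map_mul, hbc, pow_mul, Polynomial.map_prod, map_prod]
    · simp [hX, Polynomial.map_mul, hac, pow_mul]
end

section
/- With the reparametrization setup and J = (x_1^{a_1},…,x_n^{a_n}), J' = (x_1^{a'_1},…,x_n^{a'_n}): for every integer r ≥ 0 one has I'^{r+1} = J' I'^r if and only if I^{r+1} = J I^r. In particular, if J' is a reduction of I' then J is a reduction of I and the reduction numbers red_{J'}(I') and red_J(I) coincide. -/
open MvPolynomial

section Helpers

variable {k : Type*} [Field k] {n : ℕ}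

/-- The substitution `x_i ↦ x_i ^ d_i`. -/
noncomputable def phi (k : Type*) [Field k] {n : ℕ} (d : Fin n → ℕ) :
    MvPolynomial (Fin n) k →ₐ[k] MvPolynomial (Fin n) k :=
  aeval (fun i => X i ^ d i)

open Classical in
/-- The `phi`-linear retraction of `phi`. -/
noncomputable def psi (k : Type*) [Field k] {n : ℕ} (d : Fin n → ℕ) :
    MvPolynomial (Fin n) k →ₗ[k] MvPolynomial (Fin n) k :=
  (basisMonomials (Fin n) k).constr k (fun m => if ∀ i, d i ∣ m i then
    monomial (Finsupp.equivFunOnFinite.symm (fun i => m i / d i)) (1 : k) else 0)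

open Classical in
theorem psi_monomial (d : Fin n → ℕ) (m : Fin n →₀ ℕ) :
    psi k d (monomial m 1) = if ∀ i, d i ∣ m i then
      monomial (Finsupp.equivFunOnFinite.symm (fun i => m i / d i)) (1 : k) else 0 := by
  have := (basisMonomials (Fin n) k).constr_basis k (fun m => if ∀ i, d i ∣ m i then
    monomial (Finsupp.equivFunOnFinite.symm (fun i => m i / d i)) (1 : k) else 0) m
  rw [coe_basisMonomials] at this
  exact this

theorem psi_X_pow_mul (d : Fin n → ℕ) (hd : ∀ i, 0 < d i) (i : Fin n)
    (g : MvPolynomial (Fin n) k) :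
    psi k d (X i ^ d i * g) = X i * psi k d g := by
  classical
  have key : (psi k d) ∘ₗ (LinearMap.mulLeft k (X i ^ d i)) =
      (LinearMap.mulLeft k (X i)) ∘ₗ (psi k d) := by
    refine (basisMonomials (Fin n) k).ext fun m => ?_
    simp only [coe_basisMonomials, LinearMap.comp_apply, LinearMap.mulLeft_apply]
    rw [X_pow_eq_monomial, monomial_mul, one_mul, psi_monomial, psi_monomial]
    have hiff : (∀ j, d j ∣ (Finsupp.single i (d i) + m) j) ↔ ∀ j, d j ∣ m j := by
      refine forall_congr' fun j => ?_
      rw [Finsupp.add_apply, Finsupp.single_apply]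
      split_ifs with h
      · subst h
        simp
      · simp
    simp only [hiff]
    split_ifs with h
    · rw [X, monomial_mul, one_mul]
      congr 2
      ext j
      simp only [Finsupp.equivFunOnFinite_symm_apply_apply, Finsupp.add_apply,
        Finsupp.single_apply]
      split_ifs with h
      · subst h
        rw [Nat.add_div_left _ (hd i), add_comm]
      · simp
    · simp
  exact LinearMap.congr_fun key g

theorem psi_phi_mul (d : Fin n → ℕ) (hd : ∀ i, 0 < d i) (f : MvPolynomial (Fin n) k) :
    ∀ g, psi k d (phi k d f * g) = f * psi k d g := by
  induction f using MvPolynomial.induction_on with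
  | C c =>
    intro g
    have : phi k d (C c) = C c := by simp [phi, algebraMap_eq]
    rw [this, C_mul', C_mul', map_smul]
  | add p q hp hq =>
    intro g
    rw [map_add, add_mul, map_add, hp, hq, add_mul]
  | mul_X p i hp =>
    intro g
    have : phi k d (X i) = X i ^ d i := by simp [phi]
    rw [map_mul (phi k d), mul_assoc, hp, this, psi_X_pow_mul d hd, mul_assoc]

theorem psi_one (d : Fin n → ℕ) : psi k d 1 = 1 := by
  classical
  have h : (1 : MvPolynomial (Fin n) k) = monomial 0 1 := rfl
  rw [h, psi_monomial]
  have h0 : (Finsupp.equivFunOnFinite.symm fun i => (0 : Fin n →₀ ℕ) i / d i) = 0 := by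
    ext i
    simp
  rw [h0, if_pos (fun i => by simp)]

theorem comap_map_phi (d : Fin n → ℕ) (hd : ∀ i, 0 < d i)
    (A : Ideal (MvPolynomial (Fin n) k)) {f : MvPolynomial (Fin n) k}
    (hf : phi k d f ∈ A.map (phi k d)) : f ∈ A := by
  have main : ∀ g ∈ A.map (phi k d), ∀ c, psi k d (g * c) ∈ A := by
    intro g hg
    rw [Ideal.map] at hg
    induction hg using Submodule.span_induction with
    | zero => simp
    | add x y _ _ hx hy =>
      intro c
      rw [add_mul, map_add]
      exact A.add_mem (hx c) (hy c)
    | mem x hx =>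
      obtain ⟨y, hy, rfl⟩ := hx
      intro c
      rw [psi_phi_mul d hd y c]
      exact A.mul_mem_right _ hy
    | smul c x _ hx =>
      intro c'
      have : c • x * c' = x * (c * c') := by
        rw [smul_eq_mul]
        ring
      rw [this]
      exact hx _
  have h1 := main _ hf 1
  rwa [psi_phi_mul d hd f 1, psi_one, mul_one] at h1

theorem map_phi_injective (d : Fin n → ℕ) (hd : ∀ i, 0 < d i)
    {A B : Ideal (MvPolynomial (Fin n) k)} (h : A.map (phi k d) = B.map (phi k d)) : A = B := by
  apply le_antisymm
  · intro f hf
    exact comap_map_phi d hd B (h ▸ Ideal.mem_map_of_mem _ hf)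
  · intro f hf
    exact comap_map_phi d hd A (h ▸ Ideal.mem_map_of_mem _ hf)

theorem phi_X_pow (d : Fin n → ℕ) (i : Fin n) (e : ℕ) :
    phi k d (X i ^ e) = X i ^ (d i * e) := by
  simp [phi, pow_mul]

theorem map_J (d a a' : Fin n → ℕ) (h : ∀ i, a i = d i * a' i) :
    (Ideal.span (Set.range fun i : Fin n => (X i ^ a' i : MvPolynomial (Fin n) k))).map (phi k d)
      = Ideal.span (Set.range fun i : Fin n => X i ^ a i) := by
  rw [Ideal.map_span, ← Set.range_comp]
  congr 2
  funext i
  rw [h i]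
  exact phi_X_pow d i _

theorem map_I (d a a' b b' : Fin n → ℕ) (h : ∀ i, a i = d i * a' i)
    (h' : ∀ i, b i = d i * b' i) :
    (Ideal.span ((Set.range fun i : Fin n => (X i ^ a' i : MvPolynomial (Fin n) k)) ∪
        {∏ i, X i ^ b' i})).map (phi k d)
      = Ideal.span ((Set.range fun i : Fin n => X i ^ a i) ∪ {∏ i, X i ^ b i}) := by
  rw [Ideal.span_union, Ideal.map_sup, map_J d a a' h, Ideal.span_union, Ideal.map_span,
    Set.image_singleton]
  congr 3
  rw [map_prod]
  refine Finset.prod_congr rfl fun i _ => ?_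
  rw [h' i]
  exact phi_X_pow d i _

end Helpers

/-- With the reparametrization setup: for every `r ≥ 0`,
`I'^{r+1} = J' I'^r ↔ I^{r+1} = J I^r`.  In particular, if `J'` is a reduction of `I'`
then `J` is a reduction of `I` and the reduction numbers coincide. -/
theorem stmt2 {k : Type*} [Field k] (n : ℕ) (hn : 2 ≤ n)
    (a b : Fin n → ℕ) (ha : ∀ i, 1 ≤ a i) (hb : ∀ i, b i < a i)
    (htwo : ∃ i j : Fin n, i ≠ j ∧ b i ≠ 0 ∧ b j ≠ 0)
    (a' b' : Fin n → ℕ)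
    (ha' : ∀ i, a' i = if b i = 0 then a i else a i / Nat.gcd (a i) (b i))
    (hb' : ∀ i, b' i = if b i = 0 then 0 else b i / Nat.gcd (a i) (b i)) :
    let R := MvPolynomial (Fin n) k
    let I : Ideal R :=
      Ideal.span ((Set.range fun i : Fin n => X i ^ a i) ∪ {∏ i, X i ^ b i})
    let J : Ideal R := Ideal.span (Set.range fun i : Fin n => X i ^ a i)
    let I' : Ideal R :=
      Ideal.span ((Set.range fun i : Fin n => X i ^ a' i) ∪ {∏ i, X i ^ b' i})
    let J' : Ideal R := Ideal.span (Set.range fun i : Fin n => X i ^ a' i)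
    (∀ r : ℕ, I' ^ (r + 1) = J' * I' ^ r ↔ I ^ (r + 1) = J * I ^ r) ∧
    ((∃ r : ℕ, I' ^ (r + 1) = J' * I' ^ r) →
      (∃ r : ℕ, I ^ (r + 1) = J * I ^ r) ∧
      sInf {r : ℕ | I' ^ (r + 1) = J' * I' ^ r} =
        sInf {r : ℕ | I ^ (r + 1) = J * I ^ r}) := by
  intro R I J I' J'
  obtain ⟨d, hd, hda, hdb⟩ : ∃ d : Fin n → ℕ, (∀ i, 0 < d i) ∧ (∀ i, a i = d i * a' i) ∧
      ∀ i, b i = d i * b' i := by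
    refine ⟨fun i => if b i = 0 then 1 else Nat.gcd (a i) (b i), fun i => ?_, fun i => ?_,
      fun i => ?_⟩
    · dsimp only
      split_ifs
      · exact one_pos
      · exact Nat.gcd_pos_of_pos_left _ (ha i)
    · rw [ha' i]
      dsimp only
      split_ifs
      · rw [one_mul]
      · exact (Nat.mul_div_cancel' (Nat.gcd_dvd_left _ _)).symm
    · rw [hb' i]
      dsimp only
      split_ifs with h
      · rw [h]
      · exact (Nat.mul_div_cancel' (Nat.gcd_dvd_right _ _)).symm
  have hI : I'.map (phi k d) = I := map_I d a a' b b' hda hdb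
  have hJ : J'.map (phi k d) = J := map_J d a a' hda
  have key : ∀ r : ℕ, I' ^ (r + 1) = J' * I' ^ r ↔ I ^ (r + 1) = J * I ^ r := by
    intro r
    rw [← hI, ← hJ, ← Ideal.map_pow, ← Ideal.map_pow, ← Ideal.map_mul]
    exact ⟨fun h => by rw [h], fun h => map_phi_injective d hd h⟩
  refine ⟨key, ?_⟩
  rintro ⟨r, hr⟩
  refine ⟨⟨r, (key r).1 hr⟩, ?_⟩
  congr 1
  ext r
  exact key r
end

section
/- Suppose J = (x_1^{a_1},…,x_n^{a_n}) is a reduction of I. Then the reduction number red_J(I) equals the least integer r ≥ 1 for which there exist an integer t ≥ 2, distinct indices i_1,…,i_t ∈ {1,…,n}, and positive integers s_{i_1},…,s_{i_t} with s_{i_1} + ⋯ + s_{i_t} = r+1 satisfying (r+1)·b_{i_ℓ} ≥ s_{i_ℓ}·a_{i_ℓ} for every ℓ = 1,…,t. -/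
open MvPolynomial

lemma aux_pow {R : Type*} [CommRing R] (I J K : Ideal R) (h : I = J ⊔ K) (r : ℕ) :
    I ^ (r + 1) ≤ J * I ^ r ⊔ K ^ (r + 1) := by
  induction r with
  | zero => simp [h]
  | succ r ih =>
    have hK : K ≤ I := h ▸ le_sup_right
    calc I ^ (r + 1 + 1) = J * I ^ (r + 1) ⊔ K * I ^ (r + 1) := by
            rw [pow_succ' I (r + 1)]
            conv_lhs => rw [h]
            rw [Ideal.sup_mul, ← h]
      _ ≤ J * I ^ (r + 1) ⊔ K ^ (r + 1 + 1) := by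
            refine sup_le le_sup_left ?_
            refine (Ideal.mul_mono_right ih).trans ?_
            rw [Ideal.mul_sup, ← pow_succ']
            refine sup_le (le_sup_of_le_left ?_) le_sup_right
            rw [mul_left_comm, pow_succ' I r]
            exact Ideal.mul_mono_right (Ideal.mul_mono_left hK)

lemma aux_mul {k : Type*} [Field k] {n : ℕ} (A B C : Set (Fin n →₀ ℕ))
    (J K : Ideal (MvPolynomial (Fin n) k))
    (hJ : J ≤ Ideal.span ((fun s => monomial s (1 : k)) '' A))
    (hK : K ≤ Ideal.span ((fun s => monomial s (1 : k)) '' B))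
    (h : ∀ x ∈ A, ∀ y ∈ B, x + y ∈ C) :
    J * K ≤ Ideal.span ((fun s => monomial s (1 : k)) '' C) := by
  refine (Ideal.mul_mono hJ hK).trans ?_
  rw [Ideal.span_mul_span', Ideal.span_le]
  rintro _ ⟨_, ⟨x, hx, rfl⟩, _, ⟨y, hy, rfl⟩, rfl⟩
  refine Ideal.subset_span ⟨x + y, h x hx y hy, ?_⟩
  simp [monomial_mul]

lemma aux_prod {k : Type*} [Field k] {n : ℕ} (b : Fin n → ℕ) :
    (∏ i, X i ^ b i : MvPolynomial (Fin n) k)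
      = monomial (Finsupp.equivFunOnFinite.symm b) 1 := by
  rw [monomial_eq, Finsupp.prod_fintype _ _ (by simp)]
  simp

/-- exponents of the generators of `J^p I^r` with at least `p` factors from `J` -/
def expSet {n : ℕ} (a b : Fin n → ℕ) (p r : ℕ) : Set (Fin n →₀ ℕ) :=
  {e | ∃ (c : Fin n → ℕ) (j : ℕ), ∑ i, c i + j = r ∧ p ≤ ∑ i, c i ∧
    ∀ i, e i = c i * a i + j * b i}

lemma aux_add {n : ℕ} (a b : Fin n → ℕ) (p r q t : ℕ) :
    ∀ x ∈ expSet a b p r, ∀ y ∈ expSet a b q t, x + y ∈ expSet a b (p + q) (r + t) := by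
  rintro x ⟨c, j, h1, h2, h3⟩ y ⟨d, l, h4, h5, h6⟩
  refine ⟨c + d, j + l, ?_, ?_, ?_⟩
  · simp only [Pi.add_apply, Finset.sum_add_distrib]; omega
  · simp only [Pi.add_apply, Finset.sum_add_distrib]; omega
  · intro i
    simp only [Finsupp.add_apply, Pi.add_apply, h3, h6]; ring

lemma aux_J {k : Type*} [Field k] {n : ℕ} (a b : Fin n → ℕ) :
    (Ideal.span (Set.range fun i : Fin n => X i ^ a i) : Ideal (MvPolynomial (Fin n) k))
      ≤ Ideal.span ((fun s => monomial s (1 : k)) '' expSet a b 1 1) := by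
  rw [Ideal.span_le]
  rintro _ ⟨i, rfl⟩
  refine Ideal.subset_span ⟨Finsupp.single i (a i), ⟨Pi.single i 1, 0, ?_, ?_, ?_⟩, ?_⟩
  · simp
  · simp
  · intro l
    by_cases h : l = i
    · subst h; simp
    · simp [h]
  · simp [X_pow_eq_monomial]

lemma aux_I {k : Type*} [Field k] {n : ℕ} (a b : Fin n → ℕ) :
    (Ideal.span ((Set.range fun i : Fin n => X i ^ a i) ∪ {∏ i, X i ^ b i}) :
      Ideal (MvPolynomial (Fin n) k))
      ≤ Ideal.span ((fun s => monomial s (1 : k)) '' expSet a b 0 1) := by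
  rw [Ideal.span_union]
  refine sup_le ((aux_J a b).trans (Ideal.span_mono (Set.image_mono ?_))) ?_
  · rintro x ⟨c, j, h1, h2, h3⟩
    exact ⟨c, j, h1, Nat.zero_le _, h3⟩
  · rw [Ideal.span_le, Set.singleton_subset_iff]
    refine Ideal.subset_span ⟨Finsupp.equivFunOnFinite.symm b, ⟨0, 1, ?_, ?_, ?_⟩, ?_⟩
    · simp
    · simp
    · simp
    · exact (aux_prod b).symm

lemma aux_Ipow {k : Type*} [Field k] {n : ℕ} (a b : Fin n → ℕ) (r : ℕ) :
    (Ideal.span ((Set.range fun i : Fin n => X i ^ a i) ∪ {∏ i, X i ^ b i}) :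
      Ideal (MvPolynomial (Fin n) k)) ^ r
      ≤ Ideal.span ((fun s => monomial s (1 : k)) '' expSet a b 0 r) := by
  induction r with
  | zero =>
    rw [pow_zero, Ideal.one_eq_top, top_le_iff, Ideal.eq_top_iff_one]
    exact Ideal.subset_span ⟨0, ⟨0, 0, by simp, by simp, by simp⟩, by simp⟩
  | succ r ih =>
    rw [pow_succ]
    exact aux_mul _ _ _ _ _ ih (aux_I a b) (aux_add a b 0 r 0 1)

lemma aux_nec {k : Type*} [Field k] {n : ℕ} (a b : Fin n → ℕ) (r : ℕ)
    (h : (∏ i, X i ^ b i : MvPolynomial (Fin n) k) ^ (r + 1) ∈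
      (Ideal.span (Set.range fun i : Fin n => X i ^ a i) : Ideal (MvPolynomial (Fin n) k)) *
      (Ideal.span ((Set.range fun i : Fin n => X i ^ a i) ∪ {∏ i, X i ^ b i})) ^ r) :
    ∃ c : Fin n → ℕ, 1 ≤ ∑ i, c i ∧ ∑ i, c i ≤ r + 1 ∧ ∀ i, c i * a i ≤ (∑ l, c l) * b i := by
  have h2 := aux_mul _ _ _ _ _ (aux_J a b) (aux_Ipow a b r) (aux_add a b 1 1 0 r) h
  rw [aux_prod, monomial_pow, one_pow, mem_ideal_span_monomial_image] at h2
  obtain ⟨e, ⟨c, j, h3, h4, h5⟩, h6⟩ := h2 ((r + 1) • Finsupp.equivFunOnFinite.symm b)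
    (by simp [mem_support_iff, coeff_monomial])
  refine ⟨c, by omega, by omega, fun i => ?_⟩
  have := h6 i
  rw [h5] at this
  simp only [Finsupp.smul_apply, Finsupp.equivFunOnFinite_symm_apply_apply, smul_eq_mul] at this
  have h7 : r + 1 = ∑ l, c l + j := by omega
  rw [h7, add_mul] at this
  omega

lemma aux_suf {k : Type*} [Field k] {n : ℕ} (a b : Fin n → ℕ) (T : Finset (Fin n))
    (s : Fin n → ℕ) (m : ℕ) (hs : ∑ i ∈ T, s i = m) (h : ∀ i ∈ T, s i * a i ≤ m * b i) :
    (∏ i, X i ^ b i : MvPolynomial (Fin n) k) ^ m ∈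
      (Ideal.span (Set.range fun i : Fin n => X i ^ a i) :
        Ideal (MvPolynomial (Fin n) k)) ^ m := by
  have h1 : (∏ i ∈ T, (X i ^ a i) ^ s i : MvPolynomial (Fin n) k) ∈
      (Ideal.span (Set.range fun i : Fin n => X i ^ a i) :
        Ideal (MvPolynomial (Fin n) k)) ^ m := by
    rw [← hs, ← Finset.prod_pow_eq_pow_sum]
    exact Ideal.prod_mem_prod fun i _ =>
      Ideal.pow_mem_pow (Ideal.subset_span (Set.mem_range_self i)) _
  refine Ideal.mem_of_dvd _ ?_ h1
  rw [← Finset.prod_pow]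
  refine dvd_trans ?_ (Finset.prod_dvd_prod_of_subset _ _ _ (Finset.subset_univ T))
  refine Finset.prod_dvd_prod_of_dvd _ _ fun i hi => ?_
  rw [← pow_mul, ← pow_mul]
  refine pow_dvd_pow _ ?_
  have := h i hi
  rw [mul_comm (a i), mul_comm (b i)]
  exact this

/-- If `J = (x_1^{a_1},…,x_n^{a_n})` is a reduction of
`I = (x_1^{a_1},…,x_n^{a_n}, x^b)`, then the reduction number `red_J(I)` equals the
least `r ≥ 1` for which there exist `t ≥ 2` distinct indices `i_1,…,i_t` and positive
integers `s_{i_1},…,s_{i_t}` summing to `r+1` with `(r+1)·b_{i_ℓ} ≥ s_{i_ℓ}·a_{i_ℓ}`. -/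
theorem stmt3 {k : Type*} [Field k] (n : ℕ) (hn : 2 ≤ n)
    (a b : Fin n → ℕ) (ha : ∀ i, 1 ≤ a i) (hb : ∀ i, b i < a i)
    (htwo : ∃ i j : Fin n, i ≠ j ∧ b i ≠ 0 ∧ b j ≠ 0) :
    let R := MvPolynomial (Fin n) k
    let I : Ideal R :=
      Ideal.span ((Set.range fun i : Fin n => X i ^ a i) ∪ {∏ i, X i ^ b i})
    let J : Ideal R := Ideal.span (Set.range fun i : Fin n => X i ^ a i)
    (∃ r : ℕ, I ^ (r + 1) = J * I ^ r) →
    sInf {r : ℕ | I ^ (r + 1) = J * I ^ r} =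
      sInf {r : ℕ | 1 ≤ r ∧ ∃ (T : Finset (Fin n)) (s : Fin n → ℕ),
        2 ≤ T.card ∧ (∀ i ∈ T, 1 ≤ s i) ∧ (∑ i ∈ T, s i) = r + 1 ∧
        ∀ i ∈ T, s i * a i ≤ (r + 1) * b i} := by
  intro R I J _
  have hIJ : I = J ⊔ Ideal.span {∏ i, X i ^ b i} := Ideal.span_union _ _
  have hJI : J ≤ I := hIJ ▸ le_sup_left
  have hBA : ∀ r ∈ {r : ℕ | 1 ≤ r ∧ ∃ (T : Finset (Fin n)) (s : Fin n → ℕ),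
        2 ≤ T.card ∧ (∀ i ∈ T, 1 ≤ s i) ∧ (∑ i ∈ T, s i) = r + 1 ∧
        ∀ i ∈ T, s i * a i ≤ (r + 1) * b i}, r ∈ {r : ℕ | I ^ (r + 1) = J * I ^ r} := by
    rintro r ⟨_, T, s, _, _, hsum, hle⟩
    have h1 := aux_suf (k := k) a b T s (r + 1) hsum hle
    refine le_antisymm ((aux_pow I J _ hIJ r).trans (sup_le le_rfl ?_)) ?_
    · rw [Ideal.span_singleton_pow, Ideal.span_singleton_le_iff_mem]
      have h2 : J ^ (r + 1) ≤ J * I ^ r := by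
        rw [pow_succ']
        exact Ideal.mul_mono_right (Ideal.pow_right_mono hJI r)
      exact h2 h1
    · rw [pow_succ']
      exact Ideal.mul_mono_left hJI
  have hAB : ∀ r ∈ {r : ℕ | I ^ (r + 1) = J * I ^ r}, ∃ q ≤ r,
      q ∈ {r : ℕ | 1 ≤ r ∧ ∃ (T : Finset (Fin n)) (s : Fin n → ℕ),
        2 ≤ T.card ∧ (∀ i ∈ T, 1 ≤ s i) ∧ (∑ i ∈ T, s i) = r + 1 ∧
        ∀ i ∈ T, s i * a i ≤ (r + 1) * b i} := by
    intro r hr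
    have hm : (∏ i, X i ^ b i : MvPolynomial (Fin n) k) ^ (r + 1) ∈ J * I ^ r := by
      have hr' : I ^ (r + 1) = J * I ^ r := hr
      rw [← hr']
      have hmI : (∏ i, X i ^ b i : MvPolynomial (Fin n) k) ∈ I :=
        Ideal.subset_span (Set.mem_union_right _ (Set.mem_singleton _))
      exact Ideal.pow_mem_pow hmI _
    obtain ⟨c, h1, h2, h3⟩ := aux_nec a b r hm
    let T : Finset (Fin n) := Finset.univ.filter fun i => c i ≠ 0
    have hT : ∑ i ∈ T, c i = ∑ i, c i := Finset.sum_filter_ne_zero _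
    have hpos : ∀ i ∈ T, 1 ≤ c i := fun i hi => Nat.one_le_iff_ne_zero.2 (Finset.mem_filter.1 hi).2
    have hcard : 2 ≤ T.card := by
      by_contra hlt
      have hcases : T.card = 0 ∨ T.card = 1 := by omega
      rcases hcases with h0 | h0
      · rw [Finset.card_eq_zero] at h0
        rw [h0, Finset.sum_empty] at hT
        omega
      · obtain ⟨i, hi⟩ := Finset.card_eq_one.1 h0
        rw [hi, Finset.sum_singleton] at hT
        have h4 := h3 i
        rw [← hT] at h4 h1
        exact absurd (Nat.le_of_mul_le_mul_left h4 h1) (not_le.2 (hb i))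
    have hge : 2 ≤ ∑ i, c i := by
      rw [← hT]
      calc 2 ≤ T.card := hcard
        _ = ∑ i ∈ T, 1 := by simp
        _ ≤ _ := Finset.sum_le_sum hpos
    have he : ∑ i, c i - 1 + 1 = ∑ i, c i := by omega
    refine ⟨∑ i, c i - 1, by omega, by omega, T, c, hcard, hpos, by omega, fun i _ => ?_⟩
    rw [he]
    exact h3 i
  obtain ⟨r, hr⟩ := ‹∃ r : ℕ, I ^ (r + 1) = J * I ^ r›
  apply le_antisymm
  · obtain ⟨q, _, hq⟩ := hAB r hr
    exact Nat.sInf_le (hBA _ (Nat.sInf_mem ⟨q, hq⟩))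
  · obtain ⟨q, hq1, hq2⟩ := hAB _ (Nat.sInf_mem ⟨r, hr⟩)
    exact (Nat.sInf_le hq2).trans hq1
end

section
/- For every k with 1 ≤ k ≤ s+2 and every i with 1 ≤ i ≤ c_k: if k is odd then d divides O_{k,i} := d_{k-2} − i d_{k-1} + b(i e_{k-1} + e_{k-2}) and the quotient p_{k,i} := O_{k,i}/d satisfies 0 ≤ p_{k,i} ≤ i e_{k-1} + e_{k-2}; if k is even then d divides E_{k,i} := d_{k-2} − i d_{k-1} + (d−b)(i e_{k-1} + e_{k-2}) and the quotient q_{k,i} := E_{k,i}/d satisfies 0 ≤ q_{k,i} ≤ i e_{k-1} + e_{k-2}. -/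
/-- With the Euclidean data for coprime `d > b > 0` (shifted
sequences `dd m = d_{m-1}`, `ee m = e_{m-1}`): for `1 ≤ k ≤ s+2` and `1 ≤ i ≤ c_k`,
if `k` is odd then `d` divides `O_{k,i} = d_{k-2} - i d_{k-1} + b (i e_{k-1} + e_{k-2})`
and `p_{k,i} = O_{k,i}/d` satisfies `0 ≤ p_{k,i} ≤ i e_{k-1} + e_{k-2}`; if `k` is even
then `d` divides `E_{k,i} = d_{k-2} - i d_{k-1} + (d-b)(i e_{k-1} + e_{k-2})` and
`q_{k,i} = E_{k,i}/d` satisfies `0 ≤ q_{k,i} ≤ i e_{k-1} + e_{k-2}`. -/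
theorem stmt6 (d b : ℕ) (hb : 0 < b) (hbd : b < d) (hgcd : Nat.gcd d b = 1)
    (s : ℕ) (dd cc ee : ℕ → ℕ)
    (hdd0 : dd 0 = d) (hdd1 : dd 1 = b)
    (hrec : ∀ j, 1 ≤ j → j ≤ s + 2 →
      dd (j - 1) = cc j * dd j + dd (j + 1) ∧ dd (j + 1) < dd j)
    (hdds1 : dd (s + 2) = 1) (hdds2 : dd (s + 3) = 0)
    (hee0 : ee 0 = 0) (hee1 : ee 1 = 1)
    (heerec : ∀ j, 1 ≤ j → j ≤ s + 2 → ee (j + 1) = cc j * ee j + ee (j - 1)) :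
    ∀ k, 1 ≤ k → k ≤ s + 2 → ∀ i, 1 ≤ i → i ≤ cc k →
      (Odd k →
        d ∣ dd (k - 1) - i * dd k + b * (i * ee k + ee (k - 1)) ∧
        (dd (k - 1) - i * dd k + b * (i * ee k + ee (k - 1))) / d ≤
          i * ee k + ee (k - 1)) ∧
      (Even k →
        d ∣ dd (k - 1) - i * dd k + (d - b) * (i * ee k + ee (k - 1)) ∧
        (dd (k - 1) - i * dd k + (d - b) * (i * ee k + ee (k - 1))) / d ≤
          i * ee k + ee (k - 1)) := by
  have inv : ∀ m, m + 1 ≤ s + 3 →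
      ((d : ℤ) ∣ (dd m : ℤ) + (-1) ^ m * (b * ee m)) ∧
      ((d : ℤ) ∣ (dd (m + 1) : ℤ) + (-1) ^ (m + 1) * (b * ee (m + 1))) ∧ dd m ≤ d := by
    intro m
    induction m with
    | zero =>
      intro _
      simp [hdd0, hdd1, hee0, hee1]
    | succ m ih =>
      intro hm
      obtain ⟨h0, h1, h2⟩ := ih (by omega)
      obtain ⟨r1, r2⟩ := hrec (m + 1) (by omega) (by omega)
      have e1 := heerec (m + 1) (by omega) (by omega)
      simp only [Nat.add_sub_cancel] at r1 e1
      refine ⟨h1, ?_, ?_⟩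
      · have r1' : (dd (m + 1 + 1) : ℤ) = dd m - cc (m + 1) * dd (m + 1) := by
          rw [r1]; push_cast; ring
        have e1' : (ee (m + 1 + 1) : ℤ) = cc (m + 1) * ee (m + 1) + ee m := by
          rw [e1]; push_cast; ring
        have := dvd_sub h0 (h1.mul_left (cc (m + 1) : ℤ))
        rw [r1', e1']
        refine (Eq.subst (motive := fun z : ℤ => (d : ℤ) ∣ z) ?_ this)
        ring
      · rcases m with _ | m
        · simp only [Nat.zero_add, hdd1]; omega
        · have := (hrec (m + 1) (by omega) (by omega)).2
          have := ih (by omega)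
          omega
  intro k hk hks i hi hic
  obtain ⟨m, rfl⟩ : ∃ m, k = m + 1 := ⟨k - 1, by omega⟩
  obtain ⟨h0, h1, h2⟩ := inv m (by omega)
  obtain ⟨r1, r2⟩ := hrec (m + 1) (by omega) (by omega)
  simp only [Nat.add_sub_cancel] at r1 ⊢
  have hle : i * dd (m + 1) ≤ dd m := by
    have := Nat.mul_le_mul_right (dd (m + 1)) hic
    omega
  have hpos : 0 < i * dd (m + 1) := Nat.mul_pos (by omega) (by omega)
  have hlt : dd m - i * dd (m + 1) < d := by omega
  have key := dvd_sub h0 (h1.mul_left (i : ℤ))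
  have bound : ∀ x E : ℕ, x ≤ d →
      (dd m - i * dd (m + 1) + x * E) / d ≤ E := by
    intro x E hx
    apply Nat.le_of_lt_succ
    rw [Nat.div_lt_iff_lt_mul (by omega)]
    have := Nat.mul_le_mul_right E hx
    have h3 : E.succ * d = d * E + d := by rw [Nat.succ_mul, Nat.mul_comm]
    omega
  refine ⟨fun ho => ⟨?_, bound _ _ hbd.le⟩, fun he => ⟨?_, bound _ _ (Nat.sub_le _ _)⟩⟩
  · have hm : Even m := by
      rcases Nat.even_or_odd m with h | h
      · exact h
      · exact absurd ho (by simpa using h.add_one)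
    rw [pow_succ, hm.neg_one_pow] at key
    zify [hle]
    refine (Eq.subst (motive := fun z : ℤ => (d : ℤ) ∣ z) ?_ key)
    ring
  · have hm : Odd m := by
      rcases Nat.even_or_odd m with h | h
      · exact absurd he (by simpa using h.add_one)
      · exact h
    rw [pow_succ, hm.neg_one_pow] at key
    zify [hle, hbd.le]
    have := dvd_add key (dvd_mul_right (d : ℤ) (i * ee (m + 1) + ee m))
    refine (Eq.subst (motive := fun z : ℤ => (d : ℤ) ∣ z) ?_ this)
    ring
end

section
/- For every k with 1 ≤ k ≤ s+2 and every i with 1 ≤ i ≤ c_k, the binomial F_{k,i} (for k odd) and the binomial G_{k,i} (for k even) belong to the Rees ideal 𝓘 of I. -/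
open MvPolynomial

theorem aux_inv (d b : ℕ) (hbd : b < d)
    (s : ℕ) (dd cc ee : ℕ → ℕ)
    (hdd0 : dd 0 = d) (hdd1 : dd 1 = b)
    (hrec : ∀ j, 1 ≤ j → j ≤ s + 2 →
      dd (j - 1) = cc j * dd j + dd (j + 1) ∧ dd (j + 1) < dd j)
    (hee0 : ee 0 = 0) (hee1 : ee 1 = 1)
    (heerec : ∀ j, 1 ≤ j → j ≤ s + 2 → ee (j + 1) = cc j * ee j + ee (j - 1)) :
    ∀ m, m ≤ s + 2 → dd m ≤ d ∧ dd (m + 1) < dd m ∧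
      (∃ z : ℤ, (dd m : ℤ) + (-1) ^ m * b * ee m = d * z) ∧
      (∃ z : ℤ, (dd (m + 1) : ℤ) - (-1) ^ m * b * ee (m + 1) = d * z) ∧
      (1 ≤ m → 1 ≤ cc m) ∧ 1 ≤ ee (m + 1) := by
  intro m
  induction m with
  | zero =>
    intro _
    refine ⟨by omega, by simp; omega, ⟨1, by simp [hdd0, hee0]⟩, ⟨0, by simp [hdd1, hee1]⟩,
      by omega, by simp [hee1]⟩
  | succ m ih =>
    intro hm
    obtain ⟨h1, h2, ⟨z, hz⟩, ⟨w, hw⟩, _, h5⟩ := ih (by omega)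
    obtain ⟨r1, r2⟩ := hrec (m + 1) (by omega) hm
    have r3 := heerec (m + 1) (by omega) hm
    simp only [Nat.add_sub_cancel] at r1 r3
    have hc : 1 ≤ cc (m + 1) := by
      by_contra h
      have : cc (m + 1) = 0 := by omega
      rw [this] at r1
      omega
    refine ⟨by omega, r2, ⟨w, ?_⟩, ⟨z - cc (m + 1) * w, ?_⟩, fun _ => hc, ?_⟩
    · rw [← hw, pow_succ]; ring
    · have r1' : (dd m : ℤ) = cc (m + 1) * dd (m + 1) + dd (m + 1 + 1) := by exact_mod_cast r1
      have r3' : (ee (m + 1 + 1) : ℤ) = cc (m + 1) * ee (m + 1) + ee m := by exact_mod_cast r3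
      rw [mul_sub, ← hz, mul_left_comm, ← hw, r3', r1', pow_succ]; ring
    · rw [r3]; nlinarith

/-- the quotient is exact and at most `E` -/
theorem aux_div (d c A E : ℕ) (hc : c < d) (hA : A ≤ d) (hE : 1 ≤ E)
    (h : ∃ z : ℤ, (A : ℤ) + c * E = d * z) :
    d * ((A + c * E) / d) = A + c * E ∧ (A + c * E) / d ≤ E := by
  have hdvd : d ∣ A + c * E := by
    obtain ⟨z, hz⟩ := h
    exact Int.natCast_dvd_natCast.mp ⟨z, by push_cast; exact hz⟩
  refine ⟨Nat.mul_div_cancel' hdvd, ?_⟩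
  apply Nat.le_of_lt_succ
  rw [Nat.div_lt_iff_lt_mul (by omega)]
  nlinarith

/-- Let `I = (x^d, y^d, x^b y^{d-b}) ⊆ k[x,y]` with `gcd(d,b) = 1`,
and let `𝓘` be the Rees ideal of `I` (the kernel of `R[t,u,v] → R[T]`,
`t ↦ x^d T, u ↦ y^d T, v ↦ x^b y^{d-b} T`).  With the Euclidean data (shifted
sequences `dd m = d_{m-1}`, `ee m = e_{m-1}`), for every `1 ≤ k ≤ s+2` and
`1 ≤ i ≤ c_k`, the binomial `F_{k,i}` (for `k` odd) and `G_{k,i}` (for `k` even)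
belongs to `𝓘`. -/
theorem stmt7 {k : Type*} [Field k] (d b : ℕ) (hd : 2 ≤ d) (hb : 0 < b) (hbd : b < d)
    (hgcd : Nat.gcd d b = 1)
    (s : ℕ) (dd cc ee : ℕ → ℕ)
    (hdd0 : dd 0 = d) (hdd1 : dd 1 = b)
    (hrec : ∀ j, 1 ≤ j → j ≤ s + 2 →
      dd (j - 1) = cc j * dd j + dd (j + 1) ∧ dd (j + 1) < dd j)
    (hdds1 : dd (s + 2) = 1) (hdds2 : dd (s + 3) = 0)
    (hee0 : ee 0 = 0) (hee1 : ee 1 = 1)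
    (heerec : ∀ j, 1 ≤ j → j ≤ s + 2 → ee (j + 1) = cc j * ee j + ee (j - 1)) :
    let R := MvPolynomial (Fin 2) k
    let x : R := X 0
    let y : R := X 1
    -- the Rees map  t ↦ x^d T, u ↦ y^d T, v ↦ x^b y^{d-b} T
    let ψ : MvPolynomial (Fin 3) R →ₐ[R] Polynomial R :=
      aeval ![Polynomial.C (x ^ d) * Polynomial.X, Polynomial.C (y ^ d) * Polynomial.X,
        Polynomial.C (x ^ b * y ^ (d - b)) * Polynomial.X]
    -- `p k i` (for `k` odd) and `q k i` (for `k` even)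
    let p : ℕ → ℕ → ℕ := fun k i =>
      (dd (k - 1) - i * dd k + b * (i * ee k + ee (k - 1))) / d
    let q : ℕ → ℕ → ℕ := fun k i =>
      (dd (k - 1) - i * dd k + (d - b) * (i * ee k + ee (k - 1))) / d
    let F : ℕ → ℕ → MvPolynomial (Fin 3) R := fun k i =>
      C (x ^ (dd (k - 1) - i * dd k)) * X 2 ^ (i * ee k + ee (k - 1)) -
        C (y ^ (dd (k - 1) - i * dd k)) * X 0 ^ p k i *
          X 1 ^ (i * ee k + ee (k - 1) - p k i)
    let G : ℕ → ℕ → MvPolynomial (Fin 3) R := fun k i =>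
      C (y ^ (dd (k - 1) - i * dd k)) * X 2 ^ (i * ee k + ee (k - 1)) -
        C (x ^ (dd (k - 1) - i * dd k)) * X 0 ^ (i * ee k + ee (k - 1) - q k i) *
          X 1 ^ q k i
    ∀ j, 1 ≤ j → j ≤ s + 2 → ∀ i, 1 ≤ i → i ≤ cc j →
      (Odd j → F j i ∈ RingHom.ker ψ.toRingHom) ∧
      (Even j → G j i ∈ RingHom.ker ψ.toRingHom) := by
  intro R x y ψ p q F G j hj1 hj2 i hi1 hi2
  obtain ⟨h1, h2, ⟨z, hz⟩, ⟨w, hw⟩, -, -⟩ :=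
    aux_inv d b hbd s dd cc ee hdd0 hdd1 hrec hee0 hee1 heerec (j - 1) (by omega)
  have hE0 := (aux_inv d b hbd s dd cc ee hdd0 hdd1 hrec hee0 hee1 heerec (j - 1)
    (by omega)).2.2.2.2.2
  have hr := (hrec j hj1 hj2).1
  rw [Nat.sub_add_cancel hj1] at hw hE0
  have hle : i * dd j ≤ dd (j - 1) := by
    have := Nat.mul_le_mul_right (dd j) hi2
    omega
  obtain ⟨A, hA⟩ : ∃ A, A = dd (j - 1) - i * dd j := ⟨_, rfl⟩
  obtain ⟨E, hE⟩ : ∃ E, E = i * ee j + ee (j - 1) := ⟨_, rfl⟩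
  have hAz : (A : ℤ) = dd (j - 1) - i * dd j := by rw [hA]; push_cast [hle]; ring
  have hEz : (E : ℤ) = i * ee j + ee (j - 1) := by rw [hE]; push_cast; ring
  have hAd : A ≤ d := by omega
  have hE1 : 1 ≤ E := by rw [hE]; have := Nat.mul_le_mul hi1 hE0; omega
  constructor
  · intro hodd
    have hs : (-1 : ℤ) ^ (j - 1) = 1 := (Nat.Odd.sub_odd hodd odd_one).neg_one_pow
    rw [hs] at hz hw
    obtain ⟨e1, e2⟩ := aux_div d b A E hbd hAd hE1
      ⟨z - i * w, by rw [mul_sub, ← hz, mul_left_comm, ← hw, hAz, hEz]; ring⟩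
    have hp : p j i = (A + b * E) / d := by simp only [p, hA, hE]
    simp only [F, RingHom.mem_ker, ← hA, ← hE, hp]
    generalize (A + b * E) / d = P at e1 e2
    obtain ⟨Q, rfl⟩ := Nat.exists_eq_add_of_le e2
    obtain ⟨c, rfl⟩ := Nat.exists_eq_add_of_lt hbd
    have e3 : (b + c + 1 - b) * (P + Q) = A + (b + c + 1) * Q := by
      have : b + c + 1 - b = c + 1 := by omega
      rw [this]; linarith only [e1]
    have e4 : P + Q - P = Q := by omega
    rw [e4]
    have hC : ∀ r : R, algebraMap R (Polynomial R) r = Polynomial.C r := fun _ => rfl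
    change ψ _ = 0
    simp only [ψ, map_sub, map_mul, map_pow, aeval_X, algHom_C, hC,
      Matrix.cons_val, mul_pow, ← pow_mul]
    rw [e1, e3]
    ring
  · intro heven
    have hs : (-1 : ℤ) ^ (j - 1) = -1 := (Nat.Even.sub_odd hj1 heven odd_one).neg_one_pow
    rw [hs] at hz hw
    obtain ⟨e1, e2⟩ := aux_div d (d - b) A E (by omega) hAd hE1
      ⟨z - i * w + E, by
        rw [mul_add, mul_sub, ← hz, mul_left_comm, ← hw, hAz, hEz]
        push_cast [hbd.le]; ring⟩
    have hq : q j i = (A + (d - b) * E) / d := by simp only [q, hA, hE]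
    simp only [G, RingHom.mem_ker, ← hA, ← hE, hq]
    generalize (A + (d - b) * E) / d = P at e1 e2
    obtain ⟨Q, rfl⟩ := Nat.exists_eq_add_of_le e2
    obtain ⟨c, rfl⟩ := Nat.exists_eq_add_of_lt hbd
    have e3 : b * (P + Q) = A + (b + c + 1) * Q := by
      have : b + c + 1 - b = c + 1 := by omega
      rw [this] at e1; linarith only [e1]
    have e4 : P + Q - P = Q := by omega
    rw [e4]
    have hC : ∀ r : R, algebraMap R (Polynomial R) r = Polynomial.C r := fun _ => rfl
    change ψ _ = 0
    simp only [ψ, map_sub, map_mul, map_pow, aeval_X, algHom_C, hC,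
      Matrix.cons_val, mul_pow, ← pow_mul]
    rw [e1, e3]
    ring
end

section
/- Let d > b > 0 be coprime integers with the Euclidean data d_k, c_k, e_k. If α, β, γ are integers with α ≥ 1, β ≥ 1, γ ≥ 1 and α + bβ = dγ, then there exist k with 1 ≤ k ≤ s+2 and i with 1 ≤ i ≤ c_k such that α ≥ d_{k-2} − i d_{k-1} ≥ 1 and β ≥ i e_{k-1} + e_{k-2} ≥ 1. -/
theorem stmt8_aux (s : ℕ) (dd cc ee : ℕ → ℕ)
    (hrec : ∀ j, j ≤ s + 1 →
      dd j = cc (j + 1) * dd (j + 1) + dd (j + 2) ∧ dd (j + 2) < dd (j + 1))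
    (hdds1 : dd (s + 2) = 1) (hdds2 : dd (s + 3) = 0)
    (heerec : ∀ j, j ≤ s + 1 → ee (j + 2) = cc (j + 1) * ee (j + 1) + ee j)
    (α β : ℕ) (hα : 1 ≤ α) (hβ : 1 ≤ β) :
    ∀ N j : ℕ, s + 2 ≤ j + N → j ≤ s + 1 → ∀ m n : ℤ,
      (α : ℤ) = m * dd j - n * dd (j + 1) → (β : ℤ) = m * ee j + n * ee (j + 1) →
      α < dd j →
      ∃ k, k ≤ s + 1 ∧ ∃ i, 1 ≤ i ∧ i ≤ cc (k + 1) ∧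
        i * dd (k + 1) < dd k ∧ dd k - i * dd (k + 1) ≤ α ∧
        i * ee (k + 1) + ee k ≤ β := by
  intro N
  induction N with
  | zero => intro j h1 h2; omega
  | succ N ih =>
    intro j hjN hj m n h1 h2 hlt
    obtain ⟨hx, hu⟩ := hrec j hj
    have hy := heerec j hj
    have hupos : 0 < dd (j + 1) := by omega
    have hn : 1 ≤ n := by
      by_contra hcon
      have hn0 : n ≤ 0 := by omega
      have hltz : (α : ℤ) < dd j := by exact_mod_cast hlt
      have hu0 : (0 : ℤ) ≤ dd (j + 1) := by positivity
      have hnu : n * (dd (j + 1) : ℤ) ≤ 0 := mul_nonpos_of_nonpos_of_nonneg hn0 hu0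
      have hm : m ≤ 0 := by
        by_contra hm
        have : 1 ≤ m := by omega
        nlinarith
      have ha : m * (ee j : ℤ) ≤ 0 := mul_nonpos_of_nonpos_of_nonneg hm (by positivity)
      have hb : n * (ee (j + 1) : ℤ) ≤ 0 := mul_nonpos_of_nonpos_of_nonneg hn0 (by positivity)
      omega
    have hm : 1 ≤ m := by
      by_contra hm
      have hm0 : m ≤ 0 := by omega
      have ha : m * (dd j : ℤ) ≤ 0 := mul_nonpos_of_nonpos_of_nonneg hm0 (by positivity)
      have hb : 0 ≤ n * (dd (j + 1) : ℤ) := by positivity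
      omega
    by_cases hc : dd j ≤ α + cc (j + 1) * dd (j + 1)
    · -- the dominated point lies on this level
      obtain ⟨q, hq1, hq2⟩ : ∃ q, q * dd (j + 1) + α < dd j ∧
          dd j ≤ (q + 1) * dd (j + 1) + α := by
        refine ⟨(dd j - α - 1) / dd (j + 1), ?_, ?_⟩
        · have := Nat.div_mul_le_self (dd j - α - 1) (dd (j + 1))
          omega
        · have := Nat.lt_div_mul_add (a := dd j - α - 1) hupos
          rw [add_mul, one_mul]
          omega
      have hqc : q < cc (j + 1) := by
        have : q * dd (j + 1) < cc (j + 1) * dd (j + 1) := by omega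
        exact lt_of_mul_lt_mul_right this (Nat.zero_le _)
      have hqn : (q : ℤ) + 1 ≤ n := by
        have hq1z : (q : ℤ) * dd (j + 1) + α < dd j := by exact_mod_cast hq1
        have h3 : (q : ℤ) * dd (j + 1) < n * dd (j + 1) := by
          have : (0 : ℤ) ≤ (m - 1) * dd j := mul_nonneg (by omega) (by positivity)
          nlinarith
        have := lt_of_mul_lt_mul_right h3 (by positivity)
        omega
      refine ⟨j, hj, q + 1, by omega, hqc, ?_, by omega, ?_⟩
      · rcases Nat.eq_or_lt_of_le hj with h | h
        · have : dd (j + 1) = 1 := by rw [h]; exact hdds1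
          rw [this] at hq1 ⊢
          omega
        · have h3 := (hrec (j + 1) (by omega)).2
          have h4 : dd (j + 1 + 1) = dd (j + 2) := rfl
          have h5 : (q + 1) * dd (j + 1) ≤ cc (j + 1) * dd (j + 1) :=
            Nat.mul_le_mul_right _ hqc
          omega
      · have h3 : ((q : ℤ) + 1) * ee (j + 1) ≤ n * ee (j + 1) :=
          mul_le_mul_of_nonneg_right hqn (by positivity)
        have h4 : (1 : ℤ) * ee j ≤ m * ee j := mul_le_mul_of_nonneg_right hm (by positivity)
        zify
        linarith
    · have hx2 : 2 ≤ dd (j + 2) := by omega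
      have hjs : j + 2 ≤ s + 1 := by
        by_contra hcon
        have : j = s ∨ j = s + 1 := by omega
        rcases this with h | h
        · rw [h, hdds1] at hx2; omega
        · rw [h] at hx2
          have : dd (s + 1 + 2) = 0 := hdds2
          omega
      obtain ⟨hx', hu'⟩ := hrec (j + 1) (by omega)
      have hy' := heerec (j + 1) (by omega)
      have e1 : j + 1 + 1 = j + 2 := rfl
      have e2 : j + 1 + 2 = j + 3 := rfl
      rw [e1, e2] at hx' hy'
      refine ih (j + 2) (by omega) hjs
        (m - (n - m * cc (j + 1)) * cc (j + 2)) (n - m * cc (j + 1)) ?_ ?_ (by omega)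
      · have e3 : j + 2 + 1 = j + 3 := rfl
        rw [e3, h1, hx, hx']
        push_cast
        ring
      · have e3 : j + 2 + 1 = j + 3 := rfl
        rw [e3, h2, hy', hy]
        push_cast
        ring

/-- With the Euclidean data for coprime `d > b > 0` (shifted
sequences `dd m = d_{m-1}`, `ee m = e_{m-1}`): if `α, β, γ ≥ 1` satisfy
`α + bβ = dγ`, then there exist `1 ≤ k ≤ s+2` and `1 ≤ i ≤ c_k` such that
`α ≥ d_{k-2} - i d_{k-1} ≥ 1` and `β ≥ i e_{k-1} + e_{k-2} ≥ 1`. -/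
theorem stmt8 (d b : ℕ) (hb : 0 < b) (hbd : b < d) (hgcd : Nat.gcd d b = 1)
    (s : ℕ) (dd cc ee : ℕ → ℕ)
    (hdd0 : dd 0 = d) (hdd1 : dd 1 = b)
    (hrec : ∀ j, 1 ≤ j → j ≤ s + 2 →
      dd (j - 1) = cc j * dd j + dd (j + 1) ∧ dd (j + 1) < dd j)
    (hdds1 : dd (s + 2) = 1) (hdds2 : dd (s + 3) = 0)
    (hee0 : ee 0 = 0) (hee1 : ee 1 = 1)
    (heerec : ∀ j, 1 ≤ j → j ≤ s + 2 → ee (j + 1) = cc j * ee j + ee (j - 1)) :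
    ∀ α β γ : ℕ, 1 ≤ α → 1 ≤ β → 1 ≤ γ → α + b * β = d * γ →
      ∃ k, 1 ≤ k ∧ k ≤ s + 2 ∧ ∃ i, 1 ≤ i ∧ i ≤ cc k ∧
        i * dd k < dd (k - 1) ∧ dd (k - 1) - i * dd k ≤ α ∧
        1 ≤ i * ee k + ee (k - 1) ∧ i * ee k + ee (k - 1) ≤ β := by
  intro α β γ hα hβ hγ h
  have hrec' : ∀ j, j ≤ s + 1 →
      dd j = cc (j + 1) * dd (j + 1) + dd (j + 2) ∧ dd (j + 2) < dd (j + 1) := by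
    intro j hj
    exact hrec (j + 1) (by omega) (by omega)
  have heerec' : ∀ j, j ≤ s + 1 → ee (j + 2) = cc (j + 1) * ee (j + 1) + ee j := by
    intro j hj
    exact heerec (j + 1) (by omega) (by omega)
  have hc1 : 1 ≤ cc 1 := by
    have h1 := hrec' 0 (by omega)
    simp only [zero_add] at h1
    rcases Nat.eq_zero_or_pos (cc 1) with h0 | h0
    · rw [h0] at h1; omega
    · exact h0
  rcases le_or_gt d α with hd | hd
  · refine ⟨1, le_refl _, by omega, 1, le_refl _, hc1, ?_, ?_, ?_, ?_⟩ <;>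
      simp only [Nat.sub_self, hdd0, hdd1, hee0, hee1] <;> omega
  · obtain ⟨k, hk, i, hi, hic, h1, h2, h3⟩ :=
      stmt8_aux s dd cc ee hrec' hdds1 hdds2 heerec' α β hα hβ (s + 2) 0 (by omega) (by omega)
        γ β (by
          simp only [zero_add, hdd0, hdd1]
          have : (α : ℤ) + b * β = d * γ := by exact_mod_cast h
          linarith) (by simp [hee0, hee1]) (by omega)
    have hpos : ∀ j, j ≤ s + 1 → 1 ≤ ee (j + 1) := by
      have hcpos : ∀ j, j ≤ s + 1 → 1 ≤ cc (j + 1) := by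
        intro j hj
        rcases Nat.eq_zero_or_pos (cc (j + 1)) with h0 | h0
        · have h1 := hrec' j hj
          rw [h0] at h1
          rcases j with _ | j
          · simp only [zero_add] at *; omega
          · have h4 := (hrec' j (by omega)).2
            have h5 : dd (j + 1 + 1) = dd (j + 2) := rfl
            omega
        · exact h0
      intro j
      induction j with
      | zero => intro _; simp [hee1]
      | succ j ih =>
        intro hj
        have h4 := heerec' j (by omega)
        have h5 : 1 ≤ cc (j + 1) * ee (j + 1) :=
          Nat.mul_pos (hcpos j (by omega)) (ih (by omega))
        have h6 : ee (j + 1 + 1) = ee (j + 2) := rfl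
        omega
    have h5 : 1 ≤ i * ee (k + 1) := Nat.mul_pos hi (hpos k hk)
    refine ⟨k + 1, by omega, by omega, i, hi, hic, h1, h2, ?_, h3⟩
    omega
end

section
/- The Rees ideal 𝓘 of I = (x^d, y^d, x^b y^{d-b}) is generated by the set Σ := {G_{0,0}} ∪ {F_{k,i} : k odd, 1 ≤ k ≤ s+2, 1 ≤ i ≤ c_k} ∪ {G_{k,i} : k even, 2 ≤ k ≤ s+2, 1 ≤ i ≤ c_k}. In particular, 𝓘 is generated by 1 + c_1 + c_2 + ⋯ + c_{s+2} binomials. -/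
open MvPolynomial


set_option maxHeartbeats 1000000 in
/-- Equality of monomials having the same Rees image, in any ring where the generators vanish. -/
theorem monom_eq {Q : Type*} [CommRing Q] (x y t u v : Q) (d b : ℕ) (hbd : b < d) (hb : 0 < b)
    (hgcd : Nat.gcd d b = 1)
    (HF : ∀ A g, 1 ≤ g → 1 ≤ A → d ∣ A + b * g → ∃ A' g' p, A' ≤ A ∧ g' ≤ g ∧ 1 ≤ g' ∧ p ≤ g' ∧
      p * d = A' + b * g' ∧ x ^ A' * v ^ g' = y ^ A' * t ^ p * u ^ (g' - p))
    (HG : ∀ A g, 1 ≤ g → 1 ≤ A → d ∣ A + (d - b) * g → ∃ A' g' p, A' ≤ A ∧ g' ≤ g ∧ 1 ≤ g' ∧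
      p ≤ g' ∧ p * d = A' + (d - b) * g' ∧ y ^ A' * v ^ g' = x ^ A' * t ^ (g' - p) * u ^ p)
    (HZ : v ^ d = t ^ b * u ^ (d - b))
    (H0 : x ^ d * u = y ^ d * t) :
    ∀ n a1 b1 p1 q1 g1 a2 b2 p2 q2 g2 : ℕ, g1 = g2 + n →
      a1 + d * p1 + b * g1 = a2 + d * p2 + b * g2 →
      b1 + d * q1 + (d - b) * g1 = b2 + d * q2 + (d - b) * g2 →
      p1 + q1 + g1 = p2 + q2 + g2 →
      x ^ a1 * y ^ b1 * t ^ p1 * u ^ q1 * v ^ g1 = x ^ a2 * y ^ b2 * t ^ p2 * u ^ q2 * v ^ g2 := by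
  obtain ⟨e, rfl⟩ : ∃ e, d = b + e := ⟨d - b, by omega⟩
  have he : b + e - b = e := by omega
  simp only [he] at HG HZ ⊢
  intro n
  induction n using Nat.strong_induction_on with
  | _ n ih =>
  intro a1 b1 p1 q1 g1 a2 b2 p2 q2 g2 hg E1 E2 E3
  rcases Nat.eq_zero_or_pos n with hn | hn
  · subst hn
    have hg' : g1 = g2 := by omega
    subst hg'
    have key : ∀ a1 b1 p1 q1 a2 b2 p2 q2 : ℕ, p1 ≤ p2 → a1 + (b+e) * p1 = a2 + (b+e) * p2 →
      b1 + (b+e) * q1 = b2 + (b+e) * q2 → p1 + q1 = p2 + q2 →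
      x ^ a1 * y ^ b1 * t ^ p1 * u ^ q1 = x ^ a2 * y ^ b2 * t ^ p2 * u ^ q2 := by
      intro a1 b1 p1 q1 a2 b2 p2 q2 h h1 h2 h3
      obtain ⟨m, rfl⟩ := Nat.exists_eq_add_of_le h
      obtain rfl : q1 = q2 + m := by omega
      obtain rfl : a1 = a2 + (b+e) * m := by linarith
      obtain rfl : b2 = b1 + (b+e) * m := by linarith
      have := congrArg (· ^ m) H0
      simp only [mul_pow, ← pow_mul] at this
      calc _ = (x ^ a2 * y ^ b1 * t ^ p1 * u ^ q2) * (x ^ ((b+e)*m) * u ^ m) := by ring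
        _ = _ := by rw [this]; ring
    congr 1
    rcases le_total p1 p2 with h | h
    · exact key _ _ _ _ _ _ _ _ h (by omega) (by omega) (by omega)
    · exact (key _ _ _ _ _ _ _ _ h (by omega) (by omega) (by omega)).symm
  · have hsum : a1 + b1 = a2 + b2 := by
      have h3 : (b+e) * (p1 + q1 + g1) = (b+e) * (p2 + q2 + g2) := by rw [E3]
      linarith
    subst hg
    rcases lt_trichotomy a1 a2 with h | h | h
    · obtain ⟨A, rfl⟩ : ∃ A, b1 = b2 + A := ⟨b1 - b2, by omega⟩
      obtain ⟨A', g', p, h1, h2, h3, h4, h5, h6⟩ := HG A n hn (by omega) (by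
        have h7 : A + e * n + (b+e) * q1 = (b+e) * q2 := by linarith
        exact (Nat.dvd_add_left (Dvd.intro _ rfl)).1 (h7 ▸ Dvd.intro _ rfl))
      obtain ⟨r, rfl⟩ := Nat.exists_eq_add_of_le h4
      obtain ⟨m, rfl⟩ := Nat.exists_eq_add_of_le h2
      obtain ⟨A, rfl⟩ := Nat.exists_eq_add_of_le h1
      rw [show p + r - p = r by omega] at h6
      rw [← ih m (by omega) (a1 + A') (b2 + A) (p1 + r) (q1 + p) (g2 + m) a2 b2 p2 q2 g2 rfl
        (by linarith) (by linarith) (by omega)]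
      calc _ = (x ^ a1 * y ^ (b2 + A) * t ^ p1 * u ^ q1 * v ^ (g2 + m)) *
            (y ^ A' * v ^ (p + r)) := by ring
        _ = _ := by rw [h6]; ring
    · subst h
      have h7 : b * n + (b+e) * p1 = (b+e) * p2 := by linarith
      have h8 : (b+e) ∣ b * n :=
        (Nat.dvd_add_left (Dvd.intro _ rfl)).1 (h7 ▸ Dvd.intro _ rfl)
      have h9 : (b+e) ∣ n := Nat.Coprime.dvd_of_dvd_mul_left hgcd h8
      obtain ⟨m, rfl⟩ := Nat.exists_eq_add_of_le (Nat.le_of_dvd hn h9)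
      rw [← ih m (by omega) a1 b1 (p1 + b) (q1 + e) (g2 + m) a1 b2 p2 q2 g2 rfl
        (by linarith) (by linarith) (by omega)]
      calc _ = (x ^ a1 * y ^ b1 * t ^ p1 * u ^ q1 * v ^ (g2 + m)) * v ^ (b + e) := by ring
        _ = _ := by rw [HZ]; ring
    · obtain ⟨A, rfl⟩ : ∃ A, a1 = a2 + A := ⟨a1 - a2, by omega⟩
      obtain ⟨A', g', p, h1, h2, h3, h4, h5, h6⟩ := HF A n hn (by omega) (by
        have h7 : A + b * n + (b+e) * p1 = (b+e) * p2 := by linarith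
        exact (Nat.dvd_add_left (Dvd.intro _ rfl)).1 (h7 ▸ Dvd.intro _ rfl))
      obtain ⟨r, rfl⟩ := Nat.exists_eq_add_of_le h4
      obtain ⟨m, rfl⟩ := Nat.exists_eq_add_of_le h2
      obtain ⟨A, rfl⟩ := Nat.exists_eq_add_of_le h1
      rw [show p + r - p = r by omega] at h6
      rw [← ih m (by omega) (a2 + A) (b1 + A') (p1 + p) (q1 + r) (g2 + m) a2 b2 p2 q2 g2 rfl
        (by linarith) (by linarith) (by omega)]
      calc _ = (x ^ (a2 + A) * y ^ b1 * t ^ p1 * u ^ q1 * v ^ (g2 + m)) *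
            (x ^ A' * v ^ (p + r)) := by ring
        _ = _ := by rw [h6]; ring

/-- One step along the staircase. -/
theorem stair_step (d A g A' g' δ ε : ℤ) (hd : 0 < d) (hA : 0 ≤ A) (hg : 1 ≤ g)
    (hg' : 0 ≤ g') (hδ : 1 ≤ δ) (hε : 0 < ε) (hdet : A' * ε + g' * δ = d)
    (h1 : d ∣ A * ε + g * δ) (h2 : d ∣ g * A' - A * g') (hlt : A < A') (hle : g' ≤ g) :
    g' + ε ≤ g := by
  obtain ⟨m, hm⟩ := h1
  obtain ⟨n, hn⟩ := h2
  have e1 : d * g = d * (g' * m + ε * n) := by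
    linear_combination (-g) * hdet + g' * hm + ε * hn
  have e2 : g = g' * m + ε * n := mul_left_cancel₀ hd.ne' e1
  have hm0 : 0 < d * m := by rw [← hm]; nlinarith [mul_nonneg hA hε.le]
  have hn0 : 0 < d * n := by
    rw [← hn]
    nlinarith [mul_le_mul_of_nonneg_left hle hA, mul_le_mul_of_nonneg_left hlt.le (by omega : 0 ≤ g)]
  have hm1 : 1 ≤ m := pos_of_mul_pos_right hm0 hd.le
  have hn1 : 1 ≤ n := pos_of_mul_pos_right hn0 hd.le
  rw [e2]
  nlinarith

theorem dd_lt
    (d b : ℕ) (hbd : b < d) (s : ℕ) (dd cc : ℕ → ℕ)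
    (hdd0 : dd 0 = d) (hdd1 : dd 1 = b)
    (hrec : ∀ j, 1 ≤ j → j ≤ s + 2 →
      dd (j - 1) = cc j * dd j + dd (j + 1) ∧ dd (j + 1) < dd j)
    (j : ℕ) (hj : j ≤ s + 2) : dd (j + 1) < dd j := by
  rcases Nat.eq_zero_or_pos j with rfl | h
  · simpa [hdd0, hdd1] using hbd
  · exact (hrec j h hj).2

theorem cc_pos
    (d b : ℕ) (hbd : b < d) (s : ℕ) (dd cc : ℕ → ℕ)
    (hdd0 : dd 0 = d) (hdd1 : dd 1 = b)
    (hrec : ∀ j, 1 ≤ j → j ≤ s + 2 →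
      dd (j - 1) = cc j * dd j + dd (j + 1) ∧ dd (j + 1) < dd j)
    (j : ℕ) (h1 : 1 ≤ j) (hj : j ≤ s + 2) : 1 ≤ cc j := by
  have h2 := dd_lt d b hbd s dd cc hdd0 hdd1 hrec (j - 1) (by omega)
  rw [show j - 1 + 1 = j by omega] at h2
  have h3 := hrec j h1 hj
  by_contra h
  have : cc j = 0 := by omega
  rw [this] at h3
  omega

theorem dd_anti
    (d b : ℕ) (hbd : b < d) (s : ℕ) (dd cc : ℕ → ℕ)
    (hdd0 : dd 0 = d) (hdd1 : dd 1 = b)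
    (hrec : ∀ j, 1 ≤ j → j ≤ s + 2 →
      dd (j - 1) = cc j * dd j + dd (j + 1) ∧ dd (j + 1) < dd j)
    (j l : ℕ) (hjl : j ≤ l) (hl : l ≤ s + 3) : dd l ≤ dd j := by
  induction l, hjl using Nat.le_induction with
  | base => rfl
  | succ l h ih =>
    exact (dd_lt d b hbd s dd cc hdd0 hdd1 hrec l (by omega)).le.trans (ih (by omega))

theorem ee_pos
    (d b : ℕ) (hbd : b < d) (s : ℕ) (dd cc ee : ℕ → ℕ)
    (hdd0 : dd 0 = d) (hdd1 : dd 1 = b)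
    (hrec : ∀ j, 1 ≤ j → j ≤ s + 2 →
      dd (j - 1) = cc j * dd j + dd (j + 1) ∧ dd (j + 1) < dd j)
    (hee0 : ee 0 = 0) (hee1 : ee 1 = 1)
    (heerec : ∀ j, 1 ≤ j → j ≤ s + 2 → ee (j + 1) = cc j * ee j + ee (j - 1))
    (j : ℕ) (h1 : 1 ≤ j) (hj : j ≤ s + 3) : 1 ≤ ee j := by
  induction j, h1 using Nat.le_induction with
  | base => omega
  | succ l h ih =>
    rw [heerec l h (by omega)]
    have := cc_pos d b hbd s dd cc hdd0 hdd1 hrec l h (by omega)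
    have := ih (by omega)
    nlinarith

theorem det_eq
    (d b : ℕ) (s : ℕ) (dd cc ee : ℕ → ℕ)
    (hdd0 : dd 0 = d) (hdd1 : dd 1 = b)
    (hrec : ∀ j, 1 ≤ j → j ≤ s + 2 →
      dd (j - 1) = cc j * dd j + dd (j + 1) ∧ dd (j + 1) < dd j)
    (hee0 : ee 0 = 0) (hee1 : ee 1 = 1)
    (heerec : ∀ j, 1 ≤ j → j ≤ s + 2 → ee (j + 1) = cc j * ee j + ee (j - 1))
    (j : ℕ) (hj : j ≤ s + 2) : dd j * ee (j + 1) + ee j * dd (j + 1) = d := by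
  induction j with
  | zero => simp [hdd0, hdd1, hee0, hee1]
  | succ j ih =>
    have h1 := (hrec (j + 1) (by omega) hj).1
    have h2 := heerec (j + 1) (by omega) hj
    have h3 := ih (by omega)
    simp only [Nat.add_sub_cancel] at h1 h2
    rw [h2, ← h3, h1]
    ring

theorem cong2
    (d b : ℕ) (s : ℕ) (dd cc ee : ℕ → ℕ)
    (hdd0 : dd 0 = d) (hdd1 : dd 1 = b)
    (hrec : ∀ j, 1 ≤ j → j ≤ s + 2 →
      dd (j - 1) = cc j * dd j + dd (j + 1) ∧ dd (j + 1) < dd j)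
    (hee0 : ee 0 = 0) (hee1 : ee 1 = 1)
    (heerec : ∀ j, 1 ≤ j → j ≤ s + 2 → ee (j + 1) = cc j * ee j + ee (j - 1))
    (j : ℕ) (hj : j ≤ s + 2) :
    (d : ℤ) ∣ dd j + (-1) ^ j * b * ee j ∧
    (d : ℤ) ∣ dd (j + 1) + (-1) ^ (j + 1) * b * ee (j + 1) := by
  induction j with
  | zero => simp [hdd0, hdd1, hee0, hee1]
  | succ j ih =>
    have h1 := (hrec (j + 1) (by omega) hj).1
    have h2 := heerec (j + 1) (by omega) hj
    obtain ⟨h3, h4⟩ := ih (by omega)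
    simp only [Nat.add_sub_cancel] at h1 h2
    refine ⟨h4, ?_⟩
    have h5 := dvd_sub h3 (h4.mul_left (cc (j + 1) : ℤ))
    rw [h1] at h5
    rw [h2]
    push_cast at h5 ⊢
    ring_nf at h5 ⊢
    exact h5

/-- walking along the staircase. -/
theorem stair
    (d b : ℕ) (hbd : b < d) (s : ℕ) (dd cc ee : ℕ → ℕ)
    (hdd0 : dd 0 = d) (hdd1 : dd 1 = b)
    (hrec : ∀ j, 1 ≤ j → j ≤ s + 2 →
      dd (j - 1) = cc j * dd j + dd (j + 1) ∧ dd (j + 1) < dd j)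
    (hee0 : ee 0 = 0) (hee1 : ee 1 = 1)
    (heerec : ∀ j, 1 ≤ j → j ≤ s + 2 → ee (j + 1) = cc j * ee j + ee (j - 1))
    (A g : ℕ) (hg : 1 ≤ g) (j0 : ℕ) (hj0 : 1 ≤ j0) 
    (hdvd : (d : ℤ) ∣ A + (-1) ^ (j0 + 1) * b * g)
    (hstart : A < dd (j0 - 1) ∧ ee (j0 - 1) ≤ g) (E : Prop)
    (hE : (∃ r' i', j0 + 2 * r' ≤ s + 2 ∧ 1 ≤ i' ∧ i' ≤ cc (j0 + 2 * r') ∧ 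
      dd (j0 + 2 * r' - 1) - i' * dd (j0 + 2 * r') ≤ A ∧ 
      i' * ee (j0 + 2 * r') + ee (j0 + 2 * r' - 1) ≤ g) → E) (r : ℕ) :
    ∀ i, j0 + 2 * r ≤ s + 2 → i ≤ cc (j0 + 2 * r) → 
    (A < dd (j0 + 2 * r - 1) - i * dd (j0 + 2 * r) ∧ 
      i * ee (j0 + 2 * r) + ee (j0 + 2 * r - 1) ≤ g) ∨
    E := by
  have step : ∀ r i, j0 + 2 * r ≤ s + 2 → i + 1 ≤ cc (j0 + 2 * r) →
      (A < dd (j0 + 2 * r - 1) - i * dd (j0 + 2 * r) ∧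
        i * ee (j0 + 2 * r) + ee (j0 + 2 * r - 1) ≤ g) →
      (i + 1) * ee (j0 + 2 * r) + ee (j0 + 2 * r - 1) ≤ g := by
    intro r i hj hi ⟨hA, hg2⟩
    obtain ⟨l, hl⟩ : ∃ l, j0 + 2 * r = l + 1 := ⟨j0 + 2 * r - 1, by omega⟩
    have hpar : (-1 : ℤ) ^ (j0 + 1) = (-1) ^ l := by
      have h1 : j0 + 1 + 2 * r = l + 2 := by omega
      have h2 : (-1 : ℤ) ^ (j0 + 1 + 2 * r) = (-1) ^ (l + 2) := by rw [h1]
      simpa [pow_add, pow_mul] using h2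
    rw [hl] at hj hi hA hg2 ⊢
    simp only [Nat.add_sub_cancel] at hA hg2 ⊢
    rw [hpar] at hdvd
    have hdet := det_eq d b s dd cc ee hdd0 hdd1 hrec hee0 hee1 heerec l (by omega)
    have hr := (hrec (l + 1) (by omega) hj).1
    obtain ⟨c1, c2⟩ := cong2 d b s dd cc ee hdd0 hdd1 hrec hee0 hee1 heerec l (by omega)
    have hep := ee_pos d b hbd s dd cc ee hdd0 hdd1 hrec hee0 hee1 heerec (l + 1) (by omega)
      (by omega)
    have hdp := dd_lt d b hbd s dd cc hdd0 hdd1 hrec (l + 1) (by omega)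
    simp only [Nat.add_sub_cancel] at hr
    have hle : i * dd (l + 1) ≤ dd l := by nlinarith
    obtain ⟨A', hA'⟩ := Nat.exists_eq_add_of_le hle
    have hA2 : A < A' := by omega
    have hsq : ((-1 : ℤ) ^ l) * ((-1 : ℤ) ^ l) = 1 := by
      rw [← pow_add, ← two_mul, pow_mul]; simp
    have hAz : (dd l : ℤ) = i * dd (l + 1) + A' := by exact_mod_cast hA'
    have hdetz : (dd l : ℤ) * ee (l + 1) + ee l * dd (l + 1) = d := by exact_mod_cast hdet
    have := stair_step d A g A' (i * ee (l + 1) + ee l : ℕ) (dd (l + 1)) (ee (l + 1))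
      (by omega) (by omega) (by omega) (by omega) (by omega) (by omega)
      (by push_cast; rw [← hdetz, hAz]; ring)
      (by
        have := dvd_add (hdvd.mul_right (ee (l + 1) : ℤ)) (c2.mul_right (g : ℤ))
        rw [pow_succ] at this
        refine this.trans (dvd_of_eq ?_)
        ring)
      (by
        have hcA : (d : ℤ) ∣ A' + (-1) ^ l * b * (i * ee (l + 1) + ee l) := by
          have := dvd_sub c1 (c2.mul_left (i : ℤ))
          rw [pow_succ, hAz] at this
          refine this.trans (dvd_of_eq ?_)
          ring
        have := dvd_sub (hcA.mul_right (g : ℤ))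
          (hdvd.mul_right ((i * ee (l + 1) + ee l : ℕ) : ℤ))
        refine this.trans (dvd_of_eq ?_)
        push_cast
        ring)
      (by exact_mod_cast hA2) (by exact_mod_cast hg2)
    have h3 : (i * ee (l + 1) + ee l) + ee (l + 1) ≤ g := by exact_mod_cast this
    linarith
  have walk : ∀ r, j0 + 2 * r ≤ s + 2 →
      (∀ i, i = 0 → (A < dd (j0 + 2 * r - 1) - i * dd (j0 + 2 * r) ∧
        i * ee (j0 + 2 * r) + ee (j0 + 2 * r - 1) ≤ g) ∨ E) →
      ∀ i, i ≤ cc (j0 + 2 * r) → (A < dd (j0 + 2 * r - 1) - i * dd (j0 + 2 * r) ∧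
        i * ee (j0 + 2 * r) + ee (j0 + 2 * r - 1) ≤ g) ∨ E := by
    intro r hr h0 i
    induction i with
    | zero => intro _; exact h0 0 rfl
    | succ i ih =>
      intro hi
      rcases ih (by omega) with h | h
      · have h2 := step r i hr hi h
        by_cases h3 : A < dd (j0 + 2 * r - 1) - (i + 1) * dd (j0 + 2 * r)
        · exact Or.inl ⟨h3, h2⟩
        · exact Or.inr (hE ⟨r, i + 1, hr, by omega, hi, by omega, h2⟩)
      · exact Or.inr h
  induction r with
  | zero =>
    intro i hr hi
    refine walk 0 hr ?_ i hi
    rintro i rfl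
    left; simpa using hstart
  | succ r ihr =>
    intro i hr hi
    refine walk (r + 1) hr ?_ i hi
    rintro i rfl
    rcases ihr (cc (j0 + 2 * r)) (by omega) le_rfl with h | h
    · left
      have h1 := (hrec (j0 + 2 * r) (by omega) (by omega)).1
      have h2 := heerec (j0 + 2 * r) (by omega) (by omega)
      rw [show j0 + 2 * (r + 1) - 1 = j0 + 2 * r + 1 by omega]
      omega
    · exact Or.inr h

/-- existence of a generator below a lattice point. -/
theorem stair_exists
    (d b : ℕ) (hbd : b < d) (s : ℕ) (dd cc ee : ℕ → ℕ)
    (hdd0 : dd 0 = d) (hdd1 : dd 1 = b)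
    (hrec : ∀ j, 1 ≤ j → j ≤ s + 2 →
      dd (j - 1) = cc j * dd j + dd (j + 1) ∧ dd (j + 1) < dd j)
    (hee0 : ee 0 = 0) (hee1 : ee 1 = 1)
    (heerec : ∀ j, 1 ≤ j → j ≤ s + 2 → ee (j + 1) = cc j * ee j + ee (j - 1))
    (A g : ℕ) (hg : 1 ≤ g) (hA : 1 ≤ A) (j0 : ℕ) (hj0 : 1 ≤ j0)
    (hj02 : j0 ≤ 2) (hdds1 : dd (s + 2) = 1) (hdds2 : dd (s + 3) = 0)
    (hdvd : (d : ℤ) ∣ A + (-1) ^ (j0 + 1) * b * g)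
    (hstart : A < dd (j0 - 1) ∧ ee (j0 - 1) ≤ g) :
    ∃ r' i', j0 + 2 * r' ≤ s + 2 ∧ 1 ≤ i' ∧ i' ≤ cc (j0 + 2 * r') ∧
      dd (j0 + 2 * r' - 1) - i' * dd (j0 + 2 * r') ≤ A ∧
      i' * ee (j0 + 2 * r') + ee (j0 + 2 * r' - 1) ≤ g := by
  have hr : j0 + 2 * ((s + 2 - j0) / 2) ≤ s + 2 := by omega
  have hr2 : j0 + 2 * ((s + 2 - j0) / 2) = s + 2 ∨ j0 + 2 * ((s + 2 - j0) / 2) = s + 1 := by omega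
  rcases stair d b hbd s dd cc ee hdd0 hdd1 hrec hee0 hee1 heerec A g hg j0 hj0 hdvd hstart _ id
    ((s + 2 - j0) / 2) _ hr le_rfl with h | h
  · exfalso
    have h1 := (hrec _ (by omega) hr).1
    rcases hr2 with h2 | h2
    · rw [h2] at h h1
      rw [h1, hdds2] at h
      omega
    · rw [h2] at h h1
      rw [h1, show s + 1 + 1 = s + 2 by rfl, hdds1] at h
      omega
  · exact h

/-- numerical properties of the generators. -/
theorem pt_props
    (d b : ℕ) (hbd : b < d) (s : ℕ) (dd cc ee : ℕ → ℕ)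
    (hdd0 : dd 0 = d) (hdd1 : dd 1 = b)
    (hrec : ∀ j, 1 ≤ j → j ≤ s + 2 →
      dd (j - 1) = cc j * dd j + dd (j + 1) ∧ dd (j + 1) < dd j)
    (hee0 : ee 0 = 0) (hee1 : ee 1 = 1)
    (heerec : ∀ j, 1 ≤ j → j ≤ s + 2 → ee (j + 1) = cc j * ee j + ee (j - 1))
    (j i : ℕ) (hj : 1 ≤ j) (hj2 : j ≤ s + 2) (hi : 1 ≤ i) (hi2 : i ≤ cc j) :
    1 ≤ i * ee j + ee (j - 1) ∧
    (Odd j → d ∣ (dd (j - 1) - i * dd j) + b * (i * ee j + ee (j - 1)) ∧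
      (dd (j - 1) - i * dd j) + b * (i * ee j + ee (j - 1)) ≤ d * (i * ee j + ee (j - 1))) ∧
    (Even j → d ∣ (dd (j - 1) - i * dd j) + (d - b) * (i * ee j + ee (j - 1)) ∧
      (dd (j - 1) - i * dd j) + (d - b) * (i * ee j + ee (j - 1))
        ≤ d * (i * ee j + ee (j - 1))) := by
  obtain ⟨l, rfl⟩ : ∃ l, j = l + 1 := ⟨j - 1, by omega⟩
  simp only [Nat.add_sub_cancel]
  have hep := ee_pos d b hbd s dd cc ee hdd0 hdd1 hrec hee0 hee1 heerec (l + 1) (by omega)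
    (by omega)
  have hr := (hrec (l + 1) (by omega) hj2).1
  simp only [Nat.add_sub_cancel] at hr
  have hle : i * dd (l + 1) ≤ dd l := by nlinarith
  have hle1 : dd (l + 1) ≤ i * dd (l + 1) := Nat.le_mul_of_pos_left _ hi
  obtain ⟨A', hA'⟩ := Nat.exists_eq_add_of_le hle
  have hA2 : dd l - i * dd (l + 1) = A' := by omega
  rw [hA2]
  obtain ⟨c1, c2⟩ := cong2 d b s dd cc ee hdd0 hdd1 hrec hee0 hee1 heerec l (by omega)
  have hAz : (dd l : ℤ) = i * dd (l + 1) + A' := by exact_mod_cast hA'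
  have hcA : (d : ℤ) ∣ A' + (-1) ^ l * b * (i * ee (l + 1) + ee l) := by
    have := dvd_sub c1 (c2.mul_left (i : ℤ))
    rw [pow_succ, hAz] at this
    refine this.trans (dvd_of_eq ?_)
    ring
  have hg1 : 1 ≤ i * ee (l + 1) + ee l := by nlinarith
  obtain ⟨g, hg⟩ : ∃ g, g = i * ee (l + 1) + ee l := ⟨_, rfl⟩
  have hgz : (g : ℤ) = i * ee (l + 1) + ee l := by exact_mod_cast hg
  rw [← hgz] at hcA
  rw [← hg] at hg1 ⊢
  obtain ⟨e, rfl⟩ : ∃ e, d = b + e := ⟨d - b, by omega⟩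
  have he : b + e - b = e := by omega
  rw [he]
  refine ⟨hg1, fun ho => ?_, fun hev => ?_⟩
  · have hl : Even l := by
      rcases Nat.even_or_odd l with h | h
      · exact h
      · exact absurd ho (by rcases h with ⟨m, rfl⟩; rw [Nat.not_odd_iff_even]; exact ⟨m + 1, by ring⟩)
    rw [hl.neg_one_pow] at hcA
    refine ⟨by zify; simpa using hcA, ?_⟩
    have : A' ≤ e := by
      rcases Nat.eq_zero_or_pos l with h | h
      · subst h
        simp only [zero_add] at *
        omega
      · have h2 : 2 ≤ l := by
          rcases hl with ⟨m, hm⟩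
          omega
        have h3 := dd_anti (b + e) b hbd s dd cc hdd0 hdd1 hrec 2 l h2 (by omega)
        have h4 := (hrec 1 le_rfl (by omega)).1
        have h5 := cc_pos (b + e) b hbd s dd cc hdd0 hdd1 hrec 1 le_rfl (by omega)
        simp only [Nat.sub_self, hdd0, hdd1] at h4
        have : b ≤ cc 1 * b := Nat.le_mul_of_pos_left _ h5
        norm_num at h4
        omega
    nlinarith
  · have hl : Odd l := by
      rcases Nat.even_or_odd l with h | h
      · exact absurd hev (by rw [Nat.not_even_iff_odd]; exact h.add_one)
      · exact h
    rw [hl.neg_one_pow] at hcA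
    refine ⟨?_, ?_⟩
    · zify
      have := dvd_add hcA (dvd_mul_right ((b + e : ℕ) : ℤ) (g : ℤ))
      push_cast at this
      refine this.trans (dvd_of_eq ?_)
      ring
    · have h3 := dd_anti (b + e) b hbd s dd cc hdd0 hdd1 hrec 1 l hl.pos (by omega)
      have : A' ≤ b := by omega
      nlinarith

/-- Kernel criterion. -/
theorem ker_le {k : Type*} [Field k] (d b : ℕ)
    (J : Ideal (MvPolynomial (Fin 3) (MvPolynomial (Fin 2) k)))
    (ψ : MvPolynomial (Fin 3) (MvPolynomial (Fin 2) k) →ₐ[MvPolynomial (Fin 2) k]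
      Polynomial (MvPolynomial (Fin 2) k))
    (h0 : ψ (X 0) = Polynomial.C (X 0 ^ d) * Polynomial.X)
    (h1 : ψ (X 1) = Polynomial.C (X 1 ^ d) * Polynomial.X)
    (h2 : ψ (X 2) = Polynomial.C (X 0 ^ b * X 1 ^ (d - b)) * Polynomial.X)
    (M : ℕ → ℕ → ℕ → ℕ → ℕ → MvPolynomial (Fin 3) (MvPolynomial (Fin 2) k) ⧸ J)
    (hM : ∀ a1 b1 p q g, M a1 b1 p q g =
      Ideal.Quotient.mk J (C (X 0)) ^ a1 * Ideal.Quotient.mk J (C (X 1)) ^ b1 *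
      Ideal.Quotient.mk J (X 0) ^ p * Ideal.Quotient.mk J (X 1) ^ q *
      Ideal.Quotient.mk J (X 2) ^ g)
    (H : ∀ a1 b1 p1 q1 g1 a2 b2 p2 q2 g2 : ℕ,
      a1 + d * p1 + b * g1 = a2 + d * p2 + b * g2 →
      b1 + d * q1 + (d - b) * g1 = b2 + d * q2 + (d - b) * g2 →
      p1 + q1 + g1 = p2 + q2 + g2 → M a1 b1 p1 q1 g1 = M a2 b2 p2 q2 g2) :
    RingHom.ker ψ.toRingHom ≤ J := by
  classical
  have hN : ∃ N : ℕ → ℕ → ℕ → MvPolynomial (Fin 3) (MvPolynomial (Fin 2) k) ⧸ J,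
      ∀ a1 b1 p q g, N (a1 + d * p + b * g) (b1 + d * q + (d - b) * g) (p + q + g) =
        M a1 b1 p q g := by
    have : ∀ A B n, ∃ z, ∀ a1 b1 p q g, A = a1 + d * p + b * g →
        B = b1 + d * q + (d - b) * g → n = p + q + g → z = M a1 b1 p q g := by
      intro A B n
      by_cases h : ∃ a1 b1 p q g, A = a1 + d * p + b * g ∧
        B = b1 + d * q + (d - b) * g ∧ n = p + q + g
      · obtain ⟨a1, b1, p, q, g, rfl, rfl, rfl⟩ := h
        exact ⟨M a1 b1 p q g, fun _ _ _ _ _ e1 e2 e3 => H _ _ _ _ _ _ _ _ _ _ e1 e2 e3⟩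
      · exact ⟨0, fun a1 b1 p q g e1 e2 e3 => absurd ⟨a1, b1, p, q, g, e1, e2, e3⟩ h⟩
    choose N hN using this
    exact ⟨N, fun a1 b1 p q g => hN _ _ _ _ _ _ _ _ rfl rfl rfl⟩
  obtain ⟨N, hN⟩ := hN
  let L : Polynomial (MvPolynomial (Fin 2) k) →ₗ[k]
      MvPolynomial (Fin 3) (MvPolynomial (Fin 2) k) ⧸ J :=
    Polynomial.lsum (fun n => (basisMonomials (Fin 2) k).constr k (fun m => N (m 0) (m 1) n))
  have hL : ∀ (n : ℕ) (m : Fin 2 →₀ ℕ) (c : k),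
      L (Polynomial.monomial n (monomial m c)) = c • N (m 0) (m 1) n := by
    intro n m c
    have h3 : (monomial m c : MvPolynomial (Fin 2) k) = c • basisMonomials (Fin 2) k m := by
      simp [smul_monomial]
    simp only [L, Polynomial.lsum_apply]
    rw [Polynomial.sum_monomial_index _ _ (by simp), h3, map_smul, Module.Basis.constr_basis]
  have hmain : ∀ f, L (ψ f) = Ideal.Quotient.mk J f := by
    intro f
    induction f using MvPolynomial.induction_on' with
    | add p q hp hq => rw [map_add, map_add, map_add, hp, hq]
    | monomial w a =>
      induction a using MvPolynomial.induction_on' with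
      | add p q hp hq => rw [map_add, map_add, map_add, map_add, hp, hq]
      | monomial m c =>
        have e1 : (monomial w (monomial m c) : MvPolynomial (Fin 3) (MvPolynomial (Fin 2) k)) =
            C (C c) * (C (X 0) ^ m 0 * C (X 1) ^ m 1 * X 0 ^ w 0 * X 1 ^ w 1 * X 2 ^ w 2) := by
          rw [monomial_eq, monomial_eq (s := m), Finsupp.prod_fintype _ _ (by simp),
            Finsupp.prod_fintype _ _ (by simp)]
          simp only [Fin.prod_univ_succ, Fin.prod_univ_zero, map_mul, map_pow]
          simp
          ring
        have e2 : ψ (monomial w (monomial m c)) =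
            Polynomial.monomial (w 0 + w 1 + w 2)
              (monomial (Finsupp.single 0 (m 0 + d * w 0 + b * w 2) +
                Finsupp.single 1 (m 1 + d * w 1 + (d - b) * w 2)) c) := by
          rw [← Polynomial.C_mul_X_pow_eq_monomial]
          have e3 : (monomial (Finsupp.single 0 (m 0 + d * w 0 + b * w 2) +
                Finsupp.single 1 (m 1 + d * w 1 + (d - b) * w 2)) c :
                MvPolynomial (Fin 2) k) =
              C c * X 0 ^ (m 0 + d * w 0 + b * w 2) *
                X 1 ^ (m 1 + d * w 1 + (d - b) * w 2) := by
            rw [X_pow_eq_monomial, X_pow_eq_monomial, C_mul_monomial, monomial_mul]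
            simp
          have hC : ∀ r, ψ (C r) = Polynomial.C r := fun r => ψ.commutes r
          rw [e3, e1]
          simp only [map_mul, map_pow, h0, h1, h2, hC]
          ring
        rw [e2, hL]
        simp only [Finsupp.add_apply, Finsupp.single_apply]
        simp only [Fin.isValue, if_true, zero_ne_one, one_ne_zero, if_false, add_zero, zero_add]
        have hsm : ∀ f : MvPolynomial (Fin 3) (MvPolynomial (Fin 2) k),
            c • Ideal.Quotient.mk J f = Ideal.Quotient.mk J (C (C c) * f) := fun f => by
          rw [show C (C c) * f = c • f from (Algebra.smul_def c f).symm]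
          rfl
        rw [hN, hM, e1, ← hsm]
        simp only [map_mul, map_pow]
  intro f hf
  rw [← Ideal.Quotient.eq_zero_iff_mem, ← hmain f]
  have : ψ f = 0 := hf
  rw [this, map_zero]

/-- Let `I = (x^d, y^d, x^b y^{d-b}) ⊆ k[x,y]` with `gcd(d,b) = 1`.
The Rees ideal `𝓘` of `I` is generated by the set
`Σ = {G_{0,0}} ∪ {F_{k,i} : k odd, 1 ≤ k ≤ s+2, 1 ≤ i ≤ c_k}
             ∪ {G_{k,i} : k even, 2 ≤ k ≤ s+2, 1 ≤ i ≤ c_k}`. -/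
theorem stmt9 {k : Type*} [Field k] (d b : ℕ) (hd : 2 ≤ d) (hb : 0 < b) (hbd : b < d)
    (hgcd : Nat.gcd d b = 1)
    (s : ℕ) (dd cc ee : ℕ → ℕ)
    (hdd0 : dd 0 = d) (hdd1 : dd 1 = b)
    (hrec : ∀ j, 1 ≤ j → j ≤ s + 2 →
      dd (j - 1) = cc j * dd j + dd (j + 1) ∧ dd (j + 1) < dd j)
    (hdds1 : dd (s + 2) = 1) (hdds2 : dd (s + 3) = 0)
    (hee0 : ee 0 = 0) (hee1 : ee 1 = 1)
    (heerec : ∀ j, 1 ≤ j → j ≤ s + 2 → ee (j + 1) = cc j * ee j + ee (j - 1)) :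
    let R := MvPolynomial (Fin 2) k
    let x : R := X 0
    let y : R := X 1
    -- the Rees map  t ↦ x^d T, u ↦ y^d T, v ↦ x^b y^{d-b} T
    let ψ : MvPolynomial (Fin 3) R →ₐ[R] Polynomial R :=
      aeval ![Polynomial.C (x ^ d) * Polynomial.X, Polynomial.C (y ^ d) * Polynomial.X,
        Polynomial.C (x ^ b * y ^ (d - b)) * Polynomial.X]
    let p : ℕ → ℕ → ℕ := fun k i =>
      (dd (k - 1) - i * dd k + b * (i * ee k + ee (k - 1))) / d
    let q : ℕ → ℕ → ℕ := fun k i =>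
      (dd (k - 1) - i * dd k + (d - b) * (i * ee k + ee (k - 1))) / d
    let F : ℕ → ℕ → MvPolynomial (Fin 3) R := fun k i =>
      C (x ^ (dd (k - 1) - i * dd k)) * X 2 ^ (i * ee k + ee (k - 1)) -
        C (y ^ (dd (k - 1) - i * dd k)) * X 0 ^ p k i *
          X 1 ^ (i * ee k + ee (k - 1) - p k i)
    let G : ℕ → ℕ → MvPolynomial (Fin 3) R := fun k i =>
      C (y ^ (dd (k - 1) - i * dd k)) * X 2 ^ (i * ee k + ee (k - 1)) -
        C (x ^ (dd (k - 1) - i * dd k)) * X 0 ^ (i * ee k + ee (k - 1) - q k i) *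
          X 1 ^ q k i
    -- `G_{0,0} = y^b v - x^b u`
    let G00 : MvPolynomial (Fin 3) R := C (y ^ b) * X 2 - C (x ^ b) * X 1
    RingHom.ker ψ.toRingHom = Ideal.span
      ({G00} ∪
        {f | ∃ j i, Odd j ∧ 1 ≤ j ∧ j ≤ s + 2 ∧ 1 ≤ i ∧ i ≤ cc j ∧ f = F j i} ∪
        {g | ∃ j i, Even j ∧ 2 ≤ j ∧ j ≤ s + 2 ∧ 1 ≤ i ∧ i ≤ cc j ∧ g = G j i}) := by
  intro R x y ψ p q F G G00
  set J : Ideal (MvPolynomial (Fin 3) R) := Ideal.span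
      ({G00} ∪
        {f | ∃ j i, Odd j ∧ 1 ≤ j ∧ j ≤ s + 2 ∧ 1 ≤ i ∧ i ≤ cc j ∧ f = F j i} ∪
        {g | ∃ j i, Even j ∧ 2 ≤ j ∧ j ≤ s + 2 ∧ 1 ≤ i ∧ i ≤ cc j ∧ g = G j i}) with hJ
  have hpt := pt_props d b hbd s dd cc ee hdd0 hdd1 hrec hee0 hee1 heerec
  have hψ0 : ψ (X 0) = Polynomial.C (x ^ d) * Polynomial.X := by simp [ψ]
  have hψ1 : ψ (X 1) = Polynomial.C (y ^ d) * Polynomial.X := by simp [ψ]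
  have hψ2 : ψ (X 2) = Polynomial.C (x ^ b * y ^ (d - b)) * Polynomial.X := by simp [ψ]
  have hψC : ∀ r, ψ (C r) = Polynomial.C r := fun r => ψ.commutes r
  have hG00 : G00 ∈ J := Ideal.subset_span (Or.inl (Or.inl rfl))
  have hF : ∀ j i, Odd j → 1 ≤ j → j ≤ s + 2 → 1 ≤ i → i ≤ cc j → F j i ∈ J :=
    fun j i h1 h2 h3 h4 h5 => Ideal.subset_span (Or.inl (Or.inr ⟨j, i, h1, h2, h3, h4, h5, rfl⟩))
  have hG : ∀ j i, Even j → 2 ≤ j → j ≤ s + 2 → 1 ≤ i → i ≤ cc j → G j i ∈ J :=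
    fun j i h1 h2 h3 h4 h5 => Ideal.subset_span (Or.inr ⟨j, i, h1, h2, h3, h4, h5, rfl⟩)
  have hp : ∀ j i, Odd j → 1 ≤ j → j ≤ s + 2 → 1 ≤ i → i ≤ cc j → p j i ≤ i * ee j + ee (j - 1) ∧
      p j i * d = (dd (j - 1) - i * dd j) + b * (i * ee j + ee (j - 1)) := by
    intro j i h1 h2 h3 h4 h5
    obtain ⟨h6, h7⟩ := (hpt j i h2 h3 h4 h5).2.1 h1
    exact ⟨Nat.div_le_of_le_mul h7, Nat.div_mul_cancel h6⟩
  have hq : ∀ j i, Even j → 2 ≤ j → j ≤ s + 2 → 1 ≤ i → i ≤ cc j → q j i ≤ i * ee j + ee (j - 1) ∧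
      q j i * d = (dd (j - 1) - i * dd j) + (d - b) * (i * ee j + ee (j - 1)) := by
    intro j i h1 h2 h3 h4 h5
    obtain ⟨h6, h7⟩ := (hpt j i (by omega) h3 h4 h5).2.2 h1
    exact ⟨Nat.div_le_of_le_mul h7, Nat.div_mul_cancel h6⟩
  apply le_antisymm
  · let mk := Ideal.Quotient.mk J
    have eG00 : mk (C y) ^ b * mk (X 2) = mk (C x) ^ b * mk (X 1) := by
      have := Ideal.Quotient.eq_zero_iff_mem.2 hG00
      simpa only [G00, map_sub, map_mul, map_pow, sub_eq_zero] using this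
    have eF : ∀ j i, Odd j → 1 ≤ j → j ≤ s + 2 → 1 ≤ i → i ≤ cc j →
        mk (C x) ^ (dd (j - 1) - i * dd j) * mk (X 2) ^ (i * ee j + ee (j - 1)) =
        mk (C y) ^ (dd (j - 1) - i * dd j) * mk (X 0) ^ (p j i) *
          mk (X 1) ^ (i * ee j + ee (j - 1) - p j i) := by
      intro j i h1 h2 h3 h4 h5
      have := Ideal.Quotient.eq_zero_iff_mem.2 (hF j i h1 h2 h3 h4 h5)
      simpa only [F, map_sub, map_mul, map_pow, sub_eq_zero] using this
    have eG : ∀ j i, Even j → 2 ≤ j → j ≤ s + 2 → 1 ≤ i → i ≤ cc j →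
        mk (C y) ^ (dd (j - 1) - i * dd j) * mk (X 2) ^ (i * ee j + ee (j - 1)) =
        mk (C x) ^ (dd (j - 1) - i * dd j) * mk (X 0) ^ (i * ee j + ee (j - 1) - q j i) *
          mk (X 1) ^ (q j i) := by
      intro j i h1 h2 h3 h4 h5
      have := Ideal.Quotient.eq_zero_iff_mem.2 (hG j i h1 h2 h3 h4 h5)
      simpa only [G, map_sub, map_mul, map_pow, sub_eq_zero] using this
    have hcc1 : 1 ≤ cc 1 := cc_pos d b hbd s dd cc hdd0 hdd1 hrec 1 le_rfl (by omega)
    have p11 : p 1 1 = 1 := by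
      simp only [p, Nat.sub_self, hdd0, hdd1, hee0, hee1]
      rw [show d - 1 * b + b * (1 * 1 + 0) = d by omega]
      exact Nat.div_self (by omega)
    have eF11 : mk (C x) ^ (d - b) * mk (X 2) = mk (C y) ^ (d - b) * mk (X 0) := by
      have := eF 1 1 odd_one le_rfl (by omega) le_rfl hcc1
      rw [p11] at this
      simpa [hdd0, hdd1, hee0, hee1] using this
    have e0 : mk (C x) ^ d * mk (X 1) = mk (C y) ^ d * mk (X 0) := by
      obtain ⟨e, he⟩ : ∃ e, d = b + e := ⟨d - b, by omega⟩
      rw [show d - b = e by omega] at eF11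
      rw [he, pow_add, pow_add]
      linear_combination (-mk (C x) ^ e) * eG00 + mk (C y) ^ b * eF11
    have hlast : dd (s + 1) = cc (s + 2) := by
      have := (hrec (s + 2) (by omega) le_rfl).1
      rw [hdds1, hdds2] at this
      simpa using this
    have helast : cc (s + 2) * ee (s + 2) + ee (s + 1) = d := by
      have h1 := det_eq d b s dd cc ee hdd0 hdd1 hrec hee0 hee1 heerec (s + 2) le_rfl
      have h2 := heerec (s + 2) (by omega) le_rfl
      rw [hdds1, show s + 2 + 1 = s + 3 by rfl, hdds2] at h1
      rw [show s + 2 - 1 = s + 1 by rfl, show s + 2 + 1 = s + 3 by rfl] at h2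
      omega
    have hcclast : 1 ≤ cc (s + 2) :=
      cc_pos d b hbd s dd cc hdd0 hdd1 hrec (s + 2) (by omega) le_rfl
    have eZ : mk (X 2) ^ d = mk (X 0) ^ b * mk (X 1) ^ (d - b) := by
      have e1 : s + 2 - 1 = s + 1 := rfl
      rcases Nat.even_or_odd (s + 2) with h | h
      · have h1 := eG (s + 2) (cc (s + 2)) h (by omega) le_rfl hcclast le_rfl
        have h2 := (hq (s + 2) (cc (s + 2)) h (by omega) le_rfl hcclast le_rfl).2
        rw [e1, helast, hdds1, hlast] at h1 h2
        have h3 : q (s + 2) (cc (s + 2)) = d - b := by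
          have : cc (s + 2) - cc (s + 2) * 1 = 0 := by omega
          rw [this, zero_add] at h2
          exact Nat.eq_of_mul_eq_mul_right (by omega) h2
        rw [h3, show d - (d - b) = b by omega] at h1
        simpa using h1
      · have h1 := eF (s + 2) (cc (s + 2)) h (by omega) le_rfl hcclast le_rfl
        have h2 := (hp (s + 2) (cc (s + 2)) h (by omega) le_rfl hcclast le_rfl).2
        rw [e1, helast, hdds1, hlast] at h1 h2
        have h3 : p (s + 2) (cc (s + 2)) = b := by
          have : cc (s + 2) - cc (s + 2) * 1 = 0 := by omega
          rw [this, zero_add] at h2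
          exact Nat.eq_of_mul_eq_mul_right (by omega) h2
        rw [h3] at h1
        simpa using h1
    have key := monom_eq (mk (C x)) (mk (C y)) (mk (X 0)) (mk (X 1)) (mk (X 2)) d b hbd hb hgcd
      (by
        intro A g hg hA hdvd
        by_cases hs : A < d
        · obtain ⟨r, i, h1, h2, h3, h4, h5⟩ := stair_exists d b hbd s dd cc ee hdd0 hdd1 hrec hee0
            hee1 heerec A g hg hA 1 le_rfl (by omega) hdds1 hdds2
            (by zify at hdvd; simpa using hdvd)
            (by simpa [hdd0, hee0] using hs)
          have ho : Odd (1 + 2 * r) := ⟨r, by ring⟩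
          obtain ⟨h6, h7⟩ := hp _ i ho (by omega) h1 h2 h3
          exact ⟨_, _, _, h4, h5, (hpt _ i (by omega) h1 h2 h3).1, h6, h7,
            eF _ i ho (by omega) h1 h2 h3⟩
        · exact ⟨d - b, 1, 1, by omega, hg, le_rfl, le_rfl, by omega, by simpa using eF11⟩)
      (by
        intro A g hg hA hdvd
        by_cases hs : A < b
        · obtain ⟨r, i, h1, h2, h3, h4, h5⟩ := stair_exists d b hbd s dd cc ee hdd0 hdd1 hrec hee0
            hee1 heerec A g hg hA 2 (by omega) le_rfl hdds1 hdds2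
            (by
              zify [hbd.le] at hdvd
              have := dvd_sub hdvd (dvd_mul_right (d : ℤ) (g : ℤ))
              exact this.trans (dvd_of_eq (by ring)))
            (by simpa [hdd1, hee1] using ⟨hs, hg⟩)
          have ho : Even (2 + 2 * r) := ⟨1 + r, by ring⟩
          obtain ⟨h6, h7⟩ := hq _ i ho (by omega) h1 h2 h3
          exact ⟨_, _, _, h4, h5, (hpt _ i (by omega) h1 h2 h3).1, h6, h7,
            eG _ i ho (by omega) h1 h2 h3⟩
        · exact ⟨b, 1, 1, by omega, hg, le_rfl, le_rfl, by omega, by simpa using eG00⟩)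
      eZ e0
    refine ker_le d b J ψ hψ0 hψ1 hψ2 (fun a1 b1 p1 q1 g1 => mk (C x) ^ a1 * mk (C y) ^ b1 *
      mk (X 0) ^ p1 * mk (X 1) ^ q1 * mk (X 2) ^ g1) (fun _ _ _ _ _ => rfl) ?_
    intro a1 b1 p1 q1 g1 a2 b2 p2 q2 g2 E1 E2 E3
    rcases le_total g1 g2 with h | h
    · obtain ⟨n, hn⟩ := Nat.exists_eq_add_of_le h
      exact (key n _ _ _ _ _ _ _ _ _ _ hn E1.symm E2.symm E3.symm).symm
    · obtain ⟨n, hn⟩ := Nat.exists_eq_add_of_le h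
      exact key n _ _ _ _ _ _ _ _ _ _ hn E1 E2 E3
  · rw [hJ, Ideal.span_le]
    rintro f ((hf | ⟨j, i, h1, h2, h3, h4, h5, rfl⟩) | ⟨j, i, h1, h2, h3, h4, h5, rfl⟩)
    · rw [Set.mem_singleton_iff] at hf
      subst hf
      change ψ G00 = 0
      obtain ⟨e, he⟩ : ∃ e, d = b + e := ⟨d - b, by omega⟩
      have he' : d - b = e := by omega
      simp only [G00, map_sub, map_mul, hψ1, hψ2, hψC, map_pow, he']
      rw [he]
      ring
    · change ψ (F j i) = 0
      obtain ⟨h6, h7⟩ := hp j i h1 h2 h3 h4 h5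
      simp only [F]
      generalize dd (j - 1) - i * dd j = A at h7 ⊢
      generalize i * ee j + ee (j - 1) = g at h6 h7 ⊢
      generalize p j i = P at h6 h7 ⊢
      obtain ⟨r, rfl⟩ := Nat.exists_eq_add_of_le h6
      obtain ⟨e, he⟩ : ∃ e, d = b + e := ⟨d - b, by omega⟩
      have he' : d - b = e := by omega
      rw [show P + r - P = r by omega]
      simp only [map_sub, map_mul, hψ0, hψ1, hψ2, hψC, map_pow, mul_pow, ← pow_mul, he']
      have k1 : d * P = A + b * (P + r) := by linarith
      have k2 : e * (P + r) = A + d * r := by subst he; linarith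
      rw [k1, k2]
      ring
    · change ψ (G j i) = 0
      obtain ⟨h6, h7⟩ := hq j i h1 h2 h3 h4 h5
      simp only [G]
      generalize dd (j - 1) - i * dd j = A at h7 ⊢
      generalize i * ee j + ee (j - 1) = g at h6 h7 ⊢
      generalize q j i = P at h6 h7 ⊢
      obtain ⟨r, rfl⟩ := Nat.exists_eq_add_of_le h6
      obtain ⟨e, he⟩ : ∃ e, d = b + e := ⟨d - b, by omega⟩
      have he' : d - b = e := by omega
      rw [show P + r - P = r by omega]
      rw [he'] at h7
      simp only [map_sub, map_mul, hψ0, hψ1, hψ2, hψC, map_pow, mul_pow, ← pow_mul, he']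
      have k1 : d * P = A + e * (P + r) := by linarith
      have k2 : b * (P + r) = A + d * r := by subst he; linarith
      rw [k1, k2]
      ring
end

section
/- Let d ≥ 2 and 0 < b < d with gcd(d,b) = 1, and in R = k[x,y] set I = (x^d, y^d, x^b y^{d-b}) and J = (x^d, y^d). Then the reduction number of I with respect to J is d − 1; that is, I^d = J I^{d-1}, and I^{r+1} ≠ J I^r for every r with 1 ≤ r < d − 1. -/
open MvPolynomial

theorem aux_pow_s10 {R : Type*} [CommRing R] (J : Ideal R) (m : R) (n : ℕ) :
    (J ⊔ Ideal.span {m}) ^ (n + 1) = J * (J ⊔ Ideal.span {m}) ^ n ⊔ Ideal.span {m ^ (n + 1)} := by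
  induction n with
  | zero => simp
  | succ n ih =>
    apply le_antisymm
    · have hm : m ^ (n + 1) ∈ (J ⊔ Ideal.span {m}) ^ (n + 1) :=
        Ideal.pow_mem_pow (Ideal.mem_sup_right (Ideal.mem_span_singleton_self m)) _
      rw [pow_succ]
      nth_rewrite 1 [ih]
      rw [Ideal.sup_mul, mul_assoc, ← pow_succ, Ideal.mul_sup, Ideal.span_singleton_mul_span_singleton,
        ← pow_succ]
      refine sup_le le_sup_left (sup_le ?_ le_sup_right)
      refine le_trans ?_ le_sup_left
      rw [mul_comm]
      exact Ideal.mul_mono_right ((Ideal.span_singleton_le_iff_mem _).2 hm)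
    · refine sup_le ?_ ?_
      · rw [pow_succ' _ (n + 1)]
        exact Ideal.mul_mono_left le_sup_left
      · rw [Ideal.span_singleton_le_iff_mem]
        exact Ideal.pow_mem_pow (Ideal.mem_sup_right (Ideal.mem_span_singleton_self m)) _

theorem aux_le {R : Type*} [CommRing R] (u v m : R) (n : ℕ) :
    Ideal.span {u, v, m} ^ n ≤
      Ideal.span {f | ∃ a e c : ℕ, a + e + c = n ∧ f = u ^ a * v ^ e * m ^ c} := by
  induction n with
  | zero =>
    have : (1 : R) ∈ {f | ∃ a e c : ℕ, a + e + c = 0 ∧ f = u ^ a * v ^ e * m ^ c} :=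
      ⟨0, 0, 0, by simp, by simp⟩
    rw [(Ideal.eq_top_iff_one _).2 (Ideal.subset_span this)]
    exact le_top
  | succ n ih =>
    rw [pow_succ']
    refine (Ideal.mul_mono_right ih).trans ?_
    rw [Ideal.span_mul_span', Ideal.span_le]
    rintro _ ⟨g, hg, _, ⟨a, e, c, h, rfl⟩, rfl⟩
    apply Ideal.subset_span
    rcases hg with rfl | rfl | rfl
    · exact ⟨a + 1, e, c, by omega, by ring⟩
    · exact ⟨a, e + 1, c, by omega, by ring⟩
    · exact ⟨a, e, c + 1, by omega, by ring⟩

theorem aux_le2 {R : Type*} [CommRing R] (u v m : R) (n : ℕ) :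
    Ideal.span {u, v} * Ideal.span {u, v, m} ^ n ≤
      Ideal.span {f | ∃ a e c : ℕ, a + e + c = n + 1 ∧ c ≤ n ∧ f = u ^ a * v ^ e * m ^ c} := by
  refine (Ideal.mul_mono_right (aux_le u v m n)).trans ?_
  rw [Ideal.span_mul_span', Ideal.span_le]
  rintro _ ⟨g, hg, _, ⟨a, e, c, h, rfl⟩, rfl⟩
  apply Ideal.subset_span
  rcases hg with rfl | rfl
  · exact ⟨a + 1, e, c, by omega, by omega, by ring⟩
  · exact ⟨a, e + 1, c, by omega, by omega, by ring⟩

theorem aux_mono {k : Type*} [Field k] (p q : ℕ) :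
    (X 0 ^ p * X 1 ^ q : MvPolynomial (Fin 2) k) =
      monomial (Finsupp.single 0 p + Finsupp.single 1 q) 1 := by
  rw [X_pow_eq_monomial, X_pow_eq_monomial, monomial_mul, one_mul]

/-- For `d ≥ 2`, `0 < b < d` with `gcd(d,b) = 1`, the reduction
number of `I = (x^d, y^d, x^b y^{d-b})` with respect to `J = (x^d, y^d)` is `d-1`:
`I^d = J I^{d-1}` and `I^{r+1} ≠ J I^r` for all `1 ≤ r < d-1`. -/
theorem stmt10 {k : Type*} [Field k] (d b : ℕ) (hd : 2 ≤ d) (hb : 0 < b) (hbd : b < d)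
    (hgcd : Nat.gcd d b = 1) :
    let R := MvPolynomial (Fin 2) k
    let x : R := X 0
    let y : R := X 1
    let I : Ideal R := Ideal.span {x ^ d, y ^ d, x ^ b * y ^ (d - b)}
    let J : Ideal R := Ideal.span {x ^ d, y ^ d}
    I ^ d = J * I ^ (d - 1) ∧
      ∀ r : ℕ, 1 ≤ r → r < d - 1 → I ^ (r + 1) ≠ J * I ^ r := by
  intro R x y I J
  obtain ⟨t, rfl⟩ : ∃ t, d = b + t := ⟨d - b, by omega⟩
  have hbt : b + t - b = t := by omega
  constructor
  · have hI : I = J ⊔ Ideal.span {x ^ b * y ^ (b + t - b)} := by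
      rw [← Ideal.span_union]
      refine congrArg Ideal.span ?_
      ext z
      simp only [Set.mem_insert_iff, Set.mem_singleton_iff, Set.mem_union, or_assoc]
    have hJI : J ≤ I := hI ▸ le_sup_left
    obtain ⟨n, hn⟩ : ∃ n, b + t = n + 1 := ⟨b + t - 1, by omega⟩
    have key := aux_pow_s10 J (x ^ b * y ^ (b + t - b)) n
    rw [← hI, ← hn] at key
    have hn' : b + t - 1 = n := by omega
    rw [hn', key, sup_eq_left, Ideal.span_singleton_le_iff_mem, hbt]
    have h1 : (x ^ b * y ^ t) ^ (b + t) = (x ^ (b + t)) ^ b * (y ^ (b + t)) ^ t := by ring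
    have h2 : (x ^ (b + t)) ^ b * (y ^ (b + t)) ^ t ∈ J ^ b * J ^ t :=
      Ideal.mul_mem_mul (Ideal.pow_mem_pow (Ideal.subset_span (by simp)) _)
        (Ideal.pow_mem_pow (Ideal.subset_span (by simp)) _)
    rw [← pow_add, hn, pow_succ'] at h2
    rw [h1, hn]
    exact Ideal.mul_mono_right (Ideal.pow_right_mono hJI n) h2
  · intro r _ hr heq
    have hm : (x ^ b * y ^ t) ^ (r + 1) ∈ I ^ (r + 1) :=
      Ideal.pow_mem_pow (Ideal.subset_span (by simp [hbt])) _
    rw [heq] at hm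
    have hm2 := aux_le2 _ _ _ r hm
    rw [hbt] at hm2
    have hsub : Ideal.span {f : R | ∃ a e c : ℕ, a + e + c = r + 1 ∧ c ≤ r ∧
        f = (x ^ (b + t)) ^ a * (y ^ (b + t)) ^ e * (x ^ b * y ^ t) ^ c} ≤
        Ideal.span ((fun s => monomial s (1 : k)) '' {s : Fin 2 →₀ ℕ | ∃ a e c : ℕ,
          a + e + c = r + 1 ∧ c ≤ r ∧ s = Finsupp.single 0 ((b + t) * a + b * c) +
            Finsupp.single 1 ((b + t) * e + t * c)}) := by
      apply Ideal.span_mono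
      rintro _ ⟨a, e, c, h, hc, rfl⟩
      refine ⟨_, ⟨a, e, c, h, hc, rfl⟩, ?_⟩
      simp only [← aux_mono]
      simp only [x, y]
      ring
    have hm3 := hsub hm2
    have h4 : (x ^ b * y ^ t) ^ (r + 1) =
        monomial (Finsupp.single 0 (b * (r + 1)) + Finsupp.single 1 (t * (r + 1))) (1 : k) := by
      rw [← aux_mono]
      simp only [x, y]
      ring
    rw [h4, mem_ideal_span_monomial_image] at hm3
    obtain ⟨s, ⟨a, e, c, h, hc, rfl⟩, hle⟩ := hm3 _ (by
      rw [mem_support_iff, coeff_monomial, if_pos rfl]; exact one_ne_zero)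
    have l0 := hle 0
    have l1 := hle 1
    simp at l0 l1
    obtain ⟨w, hw⟩ : ∃ w, r + 1 = c + w := ⟨r + 1 - c, by omega⟩
    have hw' : a + e = w := by omega
    rw [hw] at l0 l1
    have e0 : (b + t) * a = b * w := by subst hw'; nlinarith
    have hdvd : (b + t) ∣ w := Nat.Coprime.dvd_of_dvd_mul_left hgcd ⟨a, e0.symm⟩
    have := Nat.le_of_dvd (by omega) hdvd
    omega
end

section
/- Let I = (x_1^a,…,x_n^a, (x_1⋯x_n)^b) in R = k[x_1,…,x_n] with n ≥ 2 and 0 < b < a, and suppose nb < a. Set Q = (x_1^a − x_n^a, …, x_{n-1}^a − x_n^a, (x_1⋯x_n)^b). Then Q ⊆ I, I^n = Q I^{n-1}, and x_n^{(n-1)a} ∉ Q I^{n-2}; consequently Q is a reduction of I with reduction number red_Q(I) = n − 1. -/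
open MvPolynomial

lemma red_pow_le {R : Type*} [CommRing R] (I Q : Ideal R) (y : R) (hy : y ∈ I)
    (h : I ≤ Q ⊔ Ideal.span {y}) (m : ℕ) :
    I ^ (m + 1) ≤ Q * I ^ m ⊔ Ideal.span {y ^ (m + 1)} := by
  induction m with
  | zero => simpa using h
  | succ m ih =>
    have h1 : I ^ (m + 1 + 1) ≤ (Q ⊔ Ideal.span {y}) * I ^ (m + 1) := by
      rw [pow_succ' I (m + 1)]
      exact Ideal.mul_mono_left h
    refine h1.trans ?_
    rw [Ideal.sup_mul]
    refine sup_le le_sup_left ?_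
    refine (Ideal.mul_mono_right ih).trans ?_
    rw [Ideal.mul_sup]
    refine sup_le ?_ ?_
    · refine le_trans ?_ le_sup_left
      have : Ideal.span {y} ≤ I := by
        rw [Ideal.span_singleton_le_iff_mem]; exact hy
      calc Ideal.span {y} * (Q * I ^ m) ≤ I * (Q * I ^ m) := Ideal.mul_mono_left this
        _ = Q * I ^ (m + 1) := by ring
    · refine le_trans ?_ le_sup_right
      rw [Ideal.span_singleton_mul_span_singleton, ← pow_succ']

lemma pow_sub_prod_mem {R ι : Type*} [CommRing R] [DecidableEq ι] (I Q : Ideal R) (y : R)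
    (hy : y ∈ I) (f : ι → R) (hf : ∀ i, f i ∈ I) (hq : ∀ i, f i - y ∈ Q) (s : Finset ι) :
    y ^ (s.card + 1) - y * ∏ i ∈ s, f i ∈ Q * I ^ s.card := by
  induction s using Finset.induction_on with
  | empty => simp
  | insert j s hj ih =>
    rw [Finset.card_insert_of_notMem hj, Finset.prod_insert hj]
    have hprod : ∏ i ∈ s, f i ∈ I ^ s.card := by
      have := Ideal.prod_mem_prod (s := s) (I := fun _ => I) (x := f) (fun i _ => hf i)
      simpa using this
    have h1 : y * (y ^ (s.card + 1) - y * ∏ i ∈ s, f i) ∈ Q * I ^ (s.card + 1) := by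
      have : Q * I ^ (s.card + 1) = I * (Q * I ^ s.card) := by ring
      rw [this]
      exact Ideal.mul_mem_mul hy ih
    have h2 : (f j - y) * (y * ∏ i ∈ s, f i) ∈ Q * I ^ (s.card + 1) := by
      rw [pow_succ' I]
      exact Ideal.mul_mem_mul (hq j) (Ideal.mul_mem_mul hy hprod)
    have := Ideal.sub_mem _ h1 h2
    convert this using 1
    ring

open Classical in
/-- The functional summing the coefficients at the monomials `x^(a α)` with `|α| = n - 1`. -/
noncomputable def redFun (k : Type*) [Field k] (n a : ℕ) : MvPolynomial (Fin n) k →ₗ[k] k :=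
  (basisMonomials (Fin n) k).constr k
    (fun s => if (∀ j, a ∣ s j) ∧ ∑ j, s j = (n - 1) * a then 1 else 0)

open Classical in
lemma redFun_monomial (k : Type*) [Field k] (n a : ℕ) (s : Fin n →₀ ℕ) :
    redFun k n a (monomial s 1) =
      if (∀ j, a ∣ s j) ∧ ∑ j, s j = (n - 1) * a then 1 else 0 := by
  have := (basisMonomials (Fin n) k).constr_basis k
    (fun s => if (∀ j, a ∣ s j) ∧ ∑ j, s j = (n - 1) * a then (1 : k) else 0) s
  rw [coe_basisMonomials] at this
  exact this

lemma redFun_mul_eq_zero (k : Type*) [Field k] (n a : ℕ) (g : MvPolynomial (Fin n) k)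
    (h : ∀ s, redFun k n a (monomial s 1 * g) = 0) (p : MvPolynomial (Fin n) k) :
    redFun k n a (p * g) = 0 := by
  induction p using MvPolynomial.induction_on' with
  | monomial u c =>
    have : monomial u c = c • (monomial u (1 : k)) := by simp [smul_monomial]
    rw [this, smul_mul_assoc, map_smul, h, smul_zero]
  | add p q hp hq => rw [add_mul, map_add, hp, hq, add_zero]

lemma redFun_mul_pow (k : Type*) [Field k] (n a : ℕ) (s : Fin n →₀ ℕ) (i j : Fin n) :
    redFun k n a (monomial s 1 * X i ^ a) = redFun k n a (monomial s 1 * X j ^ a) := by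
  classical
  have key : ∀ i : Fin n, ((∀ l, a ∣ (s + Finsupp.single i a) l) ∧
      ∑ l, (s + Finsupp.single i a) l = (n - 1) * a) ↔
      ((∀ l, a ∣ s l) ∧ ∑ l, s l + a = (n - 1) * a) := by
    intro i
    have h1 : ∀ l, a ∣ (s + Finsupp.single i a) l ↔ a ∣ s l := by
      intro l
      rw [Finsupp.add_apply, Finsupp.single_apply]
      split_ifs <;> simp
    have h2 : ∑ l, (s + Finsupp.single i a) l = ∑ l, s l + a := by
      simp [Finset.sum_add_distrib, Finsupp.single_apply]
    rw [h2]
    simp only [h1]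
  simp only [X_pow_eq_monomial, monomial_mul, mul_one, redFun_monomial, key]

lemma redFun_pow (k : Type*) [Field k] (n a : ℕ) (i : Fin n) :
    redFun k n a (X i ^ ((n - 1) * a)) = 1 := by
  classical
  rw [X_pow_eq_monomial, redFun_monomial, if_pos]
  refine ⟨fun j => ?_, ?_⟩
  · rw [Finsupp.single_apply]
    split_ifs <;> simp
  · simp [Finsupp.single_apply]

lemma redFun_mul_prod (k : Type*) [Field k] (n a b : ℕ) (hn : 2 ≤ n) (hb : 0 < b) (hba : b < a)
    (s : Fin n →₀ ℕ) :
    redFun k n a (monomial s 1 * (∏ i, X i) ^ b) = 0 := by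
  classical
  have hm : ((∏ i, X i) ^ b : MvPolynomial (Fin n) k) =
      monomial (∑ i, Finsupp.single i b) 1 := by
    rw [← Finset.prod_pow]
    simp only [X_pow_eq_monomial]
    rw [← monomial_sum_one]
  rw [hm, monomial_mul, mul_one, redFun_monomial, if_neg]
  rintro ⟨h1, h2⟩
  have h3 : ∀ j, a ≤ (s + ∑ i, Finsupp.single i b : Fin n →₀ ℕ) j := by
    intro j
    refine Nat.le_of_dvd ?_ (h1 j)
    rw [Finsupp.add_apply, Finsupp.finsetSum_apply]
    simp [Finsupp.single_apply]
    omega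
  have h4 : n * a ≤ (n - 1) * a := by
    rw [← h2]
    have := Finset.sum_le_sum (s := Finset.univ) (fun j _ => h3 j)
    simpa using this
  have := Nat.le_of_mul_le_mul_right h4 (by omega)
  omega

lemma red_main {k : Type*} [Field k] (n a b : ℕ) (hn : 2 ≤ n) (hb : 0 < b)
    (hba : b < a) (hnb : n * b < a) (I Q : Ideal (MvPolynomial (Fin n) k))
    (xn : MvPolynomial (Fin n) k) (hlt1 : n - 1 < n)
    (hIdef : I = Ideal.span ((Set.range fun i : Fin n => X i ^ a) ∪ {(∏ i, X i) ^ b}))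
    (hxn : xn = X (⟨n - 1, hlt1⟩ : Fin n))
    (hQdef : Q = Ideal.span ({p : MvPolynomial (Fin n) k |
      ∃ i : Fin n, (i : ℕ) < n - 1 ∧ p = X i ^ a - xn ^ a} ∪ {(∏ i, X i) ^ b})) :
    Q ≤ I ∧ I ^ n = Q * I ^ (n - 1) ∧ xn ^ ((n - 1) * a) ∉ Q * I ^ (n - 2) ∧
      sInf {r : ℕ | I ^ (r + 1) = Q * I ^ r} = n - 1 := by
  have hyI : ∀ i : Fin n, (X i ^ a : MvPolynomial (Fin n) k) ∈ I := fun i => by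
    rw [hIdef]; exact Ideal.subset_span (Or.inl ⟨i, rfl⟩)
  have hmI : ((∏ i, X i) ^ b : MvPolynomial (Fin n) k) ∈ I := by rw [hIdef]; exact Ideal.subset_span (Or.inr rfl)
  have hmQ : ((∏ i, X i) ^ b : MvPolynomial (Fin n) k) ∈ Q := by rw [hQdef]; exact Ideal.subset_span (Or.inr rfl)
  have hxI : xn ^ a ∈ I := by rw [hxn]; exact hyI _
  have hq : ∀ i : Fin n, (X i ^ a - xn ^ a : MvPolynomial (Fin n) k) ∈ Q := by
    intro i
    by_cases hi : (i : ℕ) < n - 1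
    · rw [hQdef]; exact Ideal.subset_span (Or.inl ⟨i, hi, rfl⟩)
    · have : i = ⟨n - 1, hlt1⟩ := by
        apply Fin.ext
        have := i.2
        simp only
        omega
      rw [this]
      simp [hxn]
  have hQI : Q ≤ I := by
    rw [hQdef]
    refine Ideal.span_le.2 ?_
    rintro p (⟨i, -, rfl⟩ | hp)
    · exact Ideal.sub_mem _ (hyI i) hxI
    · rw [Set.mem_singleton_iff.1 hp]; exact hmI
  have hI : I ≤ Q ⊔ Ideal.span {xn ^ a} := by
    conv_lhs => rw [hIdef]
    refine Ideal.span_le.2 ?_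
    rintro p (⟨i, rfl⟩ | hp)
    · have h1 := Ideal.mem_sup_left (T := Ideal.span {xn ^ a}) (hq i)
      have h2 : xn ^ a ∈ Q ⊔ Ideal.span {xn ^ a} :=
        Ideal.mem_sup_right (Ideal.mem_span_singleton_self _)
      have := Ideal.add_mem _ h1 h2
      simpa using this
    · rw [Set.mem_singleton_iff.1 hp]; exact Ideal.mem_sup_left hmQ
  have hpow : I ^ n = Q * I ^ (n - 1) := by
    apply le_antisymm
    · have h1 := red_pow_le I Q (xn ^ a) hxI hI (n - 1)
      rw [Nat.sub_add_cancel (by omega : 1 ≤ n)] at h1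
      refine h1.trans (sup_le le_rfl ?_)
      rw [Ideal.span_singleton_le_iff_mem]
      have h2 := pow_sub_prod_mem I Q (xn ^ a) hxI (fun i : Fin n => (X i ^ a : MvPolynomial (Fin n) k)) hyI hq
        (Finset.univ.erase ⟨n - 1, hlt1⟩)
      have hc : (Finset.univ.erase (⟨n - 1, hlt1⟩ : Fin n)).card = n - 1 := by
        rw [Finset.card_erase_of_mem (Finset.mem_univ _)]; simp
      rw [hc, Nat.sub_add_cancel (by omega : 1 ≤ n)] at h2
      have hp : xn ^ a * ∏ i ∈ Finset.univ.erase (⟨n - 1, hlt1⟩ : Fin n), (X i ^ a : MvPolynomial (Fin n) k)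
          = ∏ i, (X i ^ a : MvPolynomial (Fin n) k) := by
        rw [hxn]
        exact Finset.mul_prod_erase Finset.univ (fun i : Fin n => (X i ^ a : MvPolynomial (Fin n) k)) (Finset.mem_univ _)
      rw [hp] at h2
      have h3 : ∏ i, (X i ^ a : MvPolynomial (Fin n) k) ∈ Q * I ^ (n - 1) := by
        obtain ⟨c, hc⟩ : ∃ c, a = b + (b * (n - 1) + c) := by
          refine ⟨a - n * b, ?_⟩
          obtain ⟨m, rfl⟩ : ∃ m, n = m + 1 := ⟨n - 1, by omega⟩
          have : (m + 1) * b = b + b * m := by ring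
          simp only [Nat.add_sub_cancel]
          omega
        have : ∏ i, (X i ^ a : MvPolynomial (Fin n) k) =
            (∏ i, X i) ^ b * ((((∏ i, X i) ^ b) ^ (n - 1)) * (∏ i, X i) ^ c) := by
          rw [Finset.prod_pow, ← pow_mul, ← pow_add, ← pow_add, ← hc]
        rw [this]
        exact Ideal.mul_mem_mul hmQ (Ideal.mul_mem_right _ _ (Ideal.pow_mem_pow hmI _))
      have := Ideal.add_mem _ h2 h3
      simpa using this
    · calc Q * I ^ (n - 1) ≤ I * I ^ (n - 1) := Ideal.mul_mono_left hQI
        _ = I ^ n := by rw [← pow_succ', Nat.sub_add_cancel (by omega : 1 ≤ n)]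
  have hker : ∀ p ∈ Q, redFun k n a p = 0 := by
    intro p hp
    rw [hQdef] at hp
    suffices H : ∀ r : MvPolynomial (Fin n) k, redFun k n a (r * p) = 0 by
      have h1 := H 1
      rwa [one_mul] at h1
    induction hp using Submodule.span_induction with
    | mem g hg =>
      intro r
      rcases hg with ⟨i, -, rfl⟩ | hg
      · refine redFun_mul_eq_zero k n a _ (fun s => ?_) r
        rw [mul_sub, map_sub, sub_eq_zero]
        rw [hxn]
        exact redFun_mul_pow k n a s i _
      · rw [Set.mem_singleton_iff.1 hg]
        exact redFun_mul_eq_zero k n a _ (redFun_mul_prod k n a b hn hb hba) r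
    | zero => intro r; rw [mul_zero, map_zero]
    | add x y _ _ hx hy =>
      intro r
      rw [mul_add, map_add, hx, hy, add_zero]
    | smul c x _ hx =>
      intro r
      rw [smul_eq_mul, ← mul_assoc]
      exact hx _
  have hnot : xn ^ ((n - 1) * a) ∉ Q := by
    intro h
    have h1 := hker _ h
    rw [hxn] at h1
    exact one_ne_zero ((redFun_pow k n a _).symm.trans h1)
  refine ⟨hQI, hpow, fun h => hnot (Ideal.mul_le_left h), ?_⟩
  apply le_antisymm
  · apply Nat.sInf_le
    change I ^ (n - 1 + 1) = Q * I ^ (n - 1)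
    rw [Nat.sub_add_cancel (by omega : 1 ≤ n)]
    exact hpow
  · refine le_csInf ⟨n - 1, ?_⟩ ?_
    · change I ^ (n - 1 + 1) = Q * I ^ (n - 1)
      rw [Nat.sub_add_cancel (by omega : 1 ≤ n)]
      exact hpow
    · intro r hr
      by_contra hlt
      apply hnot
      have h1 : (xn ^ a) ^ (r + 1) ∈ Q := by
        have h2 := Ideal.pow_mem_pow hxI (r + 1)
        have hr2 : I ^ (r + 1) = Q * I ^ r := hr
        rw [hr2] at h2
        exact Ideal.mul_le_left h2
      have h3 : xn ^ ((n - 1) * a) = (xn ^ a) ^ (n - 1 - (r + 1)) * (xn ^ a) ^ (r + 1) := by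
        rw [← pow_add, ← pow_mul, mul_comm (n - 1)]
        congr 2
        omega
      rw [h3]
      exact Ideal.mul_mem_left _ _ h1

/-- Let `I = (x_1^a,…,x_n^a, (x_1⋯x_n)^b)` with `n ≥ 2`,
`0 < b < a` and `nb < a`.  Set `Q = (x_1^a - x_n^a, …, x_{n-1}^a - x_n^a, (x_1⋯x_n)^b)`.
Then `Q ⊆ I`, `I^n = Q I^{n-1}`, `x_n^{(n-1)a} ∉ Q I^{n-2}`; consequently `Q` is a
reduction of `I` with `red_Q(I) = n - 1`. -/
theorem stmt15 {k : Type*} [Field k] (n a b : ℕ) (hn : 2 ≤ n) (hb : 0 < b)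
    (hba : b < a) (hnb : n * b < a) :
    let R := MvPolynomial (Fin n) k
    let I : Ideal R :=
      Ideal.span ((Set.range fun i : Fin n => X i ^ a) ∪ {(∏ i, X i) ^ b})
    let xn : R := X (⟨n - 1, by omega⟩ : Fin n)
    let Q : Ideal R :=
      Ideal.span ({p : R | ∃ i : Fin n, (i : ℕ) < n - 1 ∧ p = X i ^ a - xn ^ a} ∪
        {(∏ i, X i) ^ b})
    Q ≤ I ∧ I ^ n = Q * I ^ (n - 1) ∧ xn ^ ((n - 1) * a) ∉ Q * I ^ (n - 2) ∧
      sInf {r : ℕ | I ^ (r + 1) = Q * I ^ r} = n - 1 := by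
  intro R I xn Q
  exact red_main n a b hn hb hba hnb I Q xn (Nat.sub_lt (by omega) one_pos) rfl rfl rfl
end

section
/- Assume 2b < a ≤ 3b and set E := w^3 − (xyz)^{3b-a} t u v. Then the Rees ideal 𝓘 of I = (x^a, y^a, z^a, (xyz)^b) equals the ideal of S generated by f1, f2, f3, g1, g2, g3, H1, H2, H3 and E. -/
open MvPolynomial

set_option maxHeartbeats 1000000 in
/-- If two families of monomials have the same weights, their values agree in any ring where
the given relations hold. -/
theorem stmt16_key {A : Type*} [CommRing A] (x y z t u v w : A) (a b c e : ℕ)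
    (hac : a = 2 * b + c) (hbc : b = c + e)
    (f1 : x ^ a * u = y ^ a * t) (f2 : x ^ a * v = z ^ a * t) (f3 : y ^ a * v = z ^ a * u)
    (g1 : x ^ (b + c) * w = (y * z) ^ b * t) (g2 : y ^ (b + c) * w = (x * z) ^ b * u)
    (g3 : z ^ (b + c) * w = (x * y) ^ b * v)
    (H1 : (x * y) ^ c * w ^ 2 = z ^ (2 * b) * t * u)
    (H2 : (x * z) ^ c * w ^ 2 = y ^ (2 * b) * t * v)
    (H3 : (y * z) ^ c * w ^ 2 = x ^ (2 * b) * u * v)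
    (hE : w ^ 3 = (x * y * z) ^ e * t * u * v) (N : ℕ) :
    ∀ i j k p q r s i' j' k' p' q' r' s' : ℕ,
      p + q + r + 2 * s + (p' + q' + r' + 2 * s') < N →
      p + q + r + s = p' + q' + r' + s' →
      i + a * p + b * s = i' + a * p' + b * s' →
      j + a * q + b * s = j' + a * q' + b * s' →
      k + a * r + b * s = k' + a * r' + b * s' →
      x ^ i * y ^ j * z ^ k * t ^ p * u ^ q * v ^ r * w ^ s =
        x ^ i' * y ^ j' * z ^ k' * t ^ p' * u ^ q' * v ^ r' * w ^ s' := by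
  induction N with
  | zero => intros; omega
  | succ N ih =>
    -- lower bounds on exponents coming from the right-hand side
    have lb : ∀ i p i' p' s : ℕ, ¬ (0 < p ∧ 0 < p') → i + a * p + b * s = i' + a * p' + b * 0 →
        0 < p' → p = 0 ∧ a ≤ i + b * s ∧ (2 ≤ p' → 2 * a ≤ i + b * s) := by
      intro i p i' p' s h1 h2 h3
      have hp : p = 0 := by omega
      subst hp
      refine ⟨rfl, ?_, fun h4 => ?_⟩
      · have := Nat.mul_le_mul_left a h3
        linarith
      · have := Nat.mul_le_mul_left a h4
        linarith
    have hA0 : ∀ i, a ≤ i + b * 0 → a ≤ i := by intro i h; omega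
    have hA1 : ∀ i, a ≤ i + b * 1 → b + c ≤ i := by intro i h; omega
    have hA2 : ∀ i, 2 * a ≤ i + b * 2 → b + c ≤ i := by intro i h; omega
    have hA3 : ∀ i, a ≤ i + b * 2 → c ≤ i := by intro i h; omega
    -- one-sided reductions, stated for the left monomial
    have one : ∀ i j k p q r s i' j' k' p' q' r' s' : ℕ,
      p + q + r + 2 * s + (p' + q' + r' + 2 * s') < N + 1 →
      p + q + r + s = p' + q' + r' + s' →
      i + a * p + b * s = i' + a * p' + b * s' →
      j + a * q + b * s = j' + a * q' + b * s' →
      k + a * r + b * s = k' + a * r' + b * s' → s' ≤ s →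
      x ^ i * y ^ j * z ^ k * t ^ p * u ^ q * v ^ r * w ^ s =
        x ^ i' * y ^ j' * z ^ k' * t ^ p' * u ^ q' * v ^ r' * w ^ s' := by
      intro i j k p q r s i' j' k' p' q' r' s' hN hd hi hj hk hs
      by_cases cp : 0 < p ∧ 0 < p'
      · obtain ⟨m, rfl⟩ := Nat.exists_eq_add_of_le' cp.1
        obtain ⟨m', rfl⟩ := Nat.exists_eq_add_of_le' cp.2
        have h := ih (i) (j) (k) (m) (q) (r) (s) (i') (j') (k') (m') (q') (r') (s') (by clear * - hN hd; omega) (by clear * - hd; omega)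
          (by linarith only [hi, hac, hbc]) (by linarith only [hj, hac, hbc]) (by linarith only [hk, hac, hbc])
        linear_combination t * h
      by_cases cq : 0 < q ∧ 0 < q'
      · obtain ⟨m, rfl⟩ := Nat.exists_eq_add_of_le' cq.1
        obtain ⟨m', rfl⟩ := Nat.exists_eq_add_of_le' cq.2
        have h := ih (i) (j) (k) (p) (m) (r) (s) (i') (j') (k') (p') (m') (r') (s') (by clear * - hN hd; omega) (by clear * - hd; omega)
          (by linarith only [hi, hac, hbc]) (by linarith only [hj, hac, hbc]) (by linarith only [hk, hac, hbc])
        linear_combination u * h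
      by_cases cr : 0 < r ∧ 0 < r'
      · obtain ⟨m, rfl⟩ := Nat.exists_eq_add_of_le' cr.1
        obtain ⟨m', rfl⟩ := Nat.exists_eq_add_of_le' cr.2
        have h := ih (i) (j) (k) (p) (q) (m) (s) (i') (j') (k') (p') (q') (m') (s') (by clear * - hN hd; omega) (by clear * - hd; omega)
          (by linarith only [hi, hac, hbc]) (by linarith only [hj, hac, hbc]) (by linarith only [hk, hac, hbc])
        linear_combination v * h
      by_cases cs : 0 < s ∧ 0 < s'
      · obtain ⟨m, rfl⟩ := Nat.exists_eq_add_of_le' cs.1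
        obtain ⟨m', rfl⟩ := Nat.exists_eq_add_of_le' cs.2
        have h := ih (i) (j) (k) (p) (q) (r) (m) (i') (j') (k') (p') (q') (r') (m') (by clear * - hN hd; omega) (by clear * - hd; omega)
          (by linarith only [hi, hac, hbc]) (by linarith only [hj, hac, hbc]) (by linarith only [hk, hac, hbc])
        linear_combination w * h
      by_cases c3 : 3 ≤ s
      · obtain ⟨m, rfl⟩ := Nat.exists_eq_add_of_le' c3
        have h := ih (i + e) (j + e) (k + e) (p + 1) (q + 1) (r + 1) m i' j' k' p' q' r' s' (by clear * - hN hd; omega) (by clear * - hd; omega)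
          (by linarith only [hi, hac, hbc]) (by linarith only [hj, hac, hbc]) (by linarith only [hk, hac, hbc])
        linear_combination h + (x ^ i * y ^ j * z ^ k * t ^ p * u ^ q * v ^ r * w ^ m) * hE
      have hs2 : s ≤ 2 := by clear * - c3; omega
      obtain hs' : s' = 0 := by
        by_contra h; exact cs ⟨lt_of_lt_of_le (Nat.pos_of_ne_zero h) hs, Nat.pos_of_ne_zero h⟩
      subst hs'
      by_cases d0 : 0 < s ∧ 0 < p' ∧ b + c ≤ i
      · obtain ⟨m, rfl⟩ := Nat.exists_eq_add_of_le' d0.1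
        obtain ⟨l, rfl⟩ := Nat.exists_eq_add_of_le' d0.2.2
        have h := ih (l) (j + b) (k + b) (p + 1) (q) (r) (m) (i') (j') (k') (p') (q') (r') (0) (by clear * - hN hd; omega) (by clear * - hd; omega)
          (by linarith only [hi, hac, hbc]) (by linarith only [hj, hac, hbc]) (by linarith only [hk, hac, hbc])
        linear_combination h + (x ^ l * y ^ j * z ^ k * t ^ p * u ^ q * v ^ r * w ^ m) * g1
      by_cases d1 : 0 < s ∧ 0 < q' ∧ b + c ≤ j
      · obtain ⟨m, rfl⟩ := Nat.exists_eq_add_of_le' d1.1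
        obtain ⟨l, rfl⟩ := Nat.exists_eq_add_of_le' d1.2.2
        have h := ih (i + b) (l) (k + b) (p) (q + 1) (r) (m) (i') (j') (k') (p') (q') (r') (0) (by clear * - hN hd; omega) (by clear * - hd; omega)
          (by linarith only [hi, hac, hbc]) (by linarith only [hj, hac, hbc]) (by linarith only [hk, hac, hbc])
        linear_combination h + (x ^ i * y ^ l * z ^ k * t ^ p * u ^ q * v ^ r * w ^ m) * g2
      by_cases d2 : 0 < s ∧ 0 < r' ∧ b + c ≤ k
      · obtain ⟨m, rfl⟩ := Nat.exists_eq_add_of_le' d2.1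
        obtain ⟨l, rfl⟩ := Nat.exists_eq_add_of_le' d2.2.2
        have h := ih (i + b) (j + b) (l) (p) (q) (r + 1) (m) (i') (j') (k') (p') (q') (r') (0) (by clear * - hN hd; omega) (by clear * - hd; omega)
          (by linarith only [hi, hac, hbc]) (by linarith only [hj, hac, hbc]) (by linarith only [hk, hac, hbc])
        linear_combination h + (x ^ i * y ^ j * z ^ l * t ^ p * u ^ q * v ^ r * w ^ m) * g3
      by_cases e0 : 2 ≤ s ∧ c ≤ i ∧ c ≤ j
      · obtain ⟨m, rfl⟩ := Nat.exists_eq_add_of_le' e0.1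
        obtain ⟨l, rfl⟩ := Nat.exists_eq_add_of_le' e0.2.1
        obtain ⟨l', rfl⟩ := Nat.exists_eq_add_of_le' e0.2.2
        have h := ih (l) (l') (k + 2 * b) (p + 1) (q + 1) (r) (m) (i') (j') (k') (p') (q') (r') (0) (by clear * - hN hd; omega) (by clear * - hd; omega)
          (by linarith only [hi, hac, hbc]) (by linarith only [hj, hac, hbc]) (by linarith only [hk, hac, hbc])
        linear_combination h + (x ^ l * y ^ l' * z ^ k * t ^ p * u ^ q * v ^ r * w ^ m) * H1
      by_cases e1 : 2 ≤ s ∧ c ≤ i ∧ c ≤ k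
      · obtain ⟨m, rfl⟩ := Nat.exists_eq_add_of_le' e1.1
        obtain ⟨l, rfl⟩ := Nat.exists_eq_add_of_le' e1.2.1
        obtain ⟨l', rfl⟩ := Nat.exists_eq_add_of_le' e1.2.2
        have h := ih (l) (j + 2 * b) (l') (p + 1) (q) (r + 1) (m) (i') (j') (k') (p') (q') (r') (0) (by clear * - hN hd; omega) (by clear * - hd; omega)
          (by linarith only [hi, hac, hbc]) (by linarith only [hj, hac, hbc]) (by linarith only [hk, hac, hbc])
        linear_combination h + (x ^ l * y ^ j * z ^ l' * t ^ p * u ^ q * v ^ r * w ^ m) * H2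
      by_cases e2 : 2 ≤ s ∧ c ≤ j ∧ c ≤ k
      · obtain ⟨m, rfl⟩ := Nat.exists_eq_add_of_le' e2.1
        obtain ⟨l, rfl⟩ := Nat.exists_eq_add_of_le' e2.2.1
        obtain ⟨l', rfl⟩ := Nat.exists_eq_add_of_le' e2.2.2
        have h := ih (i + 2 * b) (l) (l') (p) (q + 1) (r + 1) (m) (i') (j') (k') (p') (q') (r') (0) (by clear * - hN hd; omega) (by clear * - hd; omega)
          (by linarith only [hi, hac, hbc]) (by linarith only [hj, hac, hbc]) (by linarith only [hk, hac, hbc])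
        linear_combination h + (x ^ i * y ^ l * z ^ l' * t ^ p * u ^ q * v ^ r * w ^ m) * H3
      by_cases k01 : 0 < p ∧ 0 < q' ∧ a ≤ j
      · obtain ⟨m, rfl⟩ := Nat.exists_eq_add_of_le' k01.1
        obtain ⟨m', rfl⟩ := Nat.exists_eq_add_of_le' k01.2.1
        obtain ⟨l, rfl⟩ := Nat.exists_eq_add_of_le' k01.2.2
        have h := ih (i + a) (l) (k) (m) (q) (r) (s) (i') (j') (k') (p') (m') (r') (0) (by clear * - hN hd; omega) (by clear * - hd; omega)
          (by linarith only [hi, hac, hbc]) (by linarith only [hj, hac, hbc]) (by linarith only [hk, hac, hbc])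
        linear_combination u * h - (x ^ i * y ^ l * z ^ k * t ^ m * u ^ q * v ^ r * w ^ s) * f1
      by_cases k02 : 0 < p ∧ 0 < r' ∧ a ≤ k
      · obtain ⟨m, rfl⟩ := Nat.exists_eq_add_of_le' k02.1
        obtain ⟨m', rfl⟩ := Nat.exists_eq_add_of_le' k02.2.1
        obtain ⟨l, rfl⟩ := Nat.exists_eq_add_of_le' k02.2.2
        have h := ih (i + a) (j) (l) (m) (q) (r) (s) (i') (j') (k') (p') (q') (m') (0) (by clear * - hN hd; omega) (by clear * - hd; omega)
          (by linarith only [hi, hac, hbc]) (by linarith only [hj, hac, hbc]) (by linarith only [hk, hac, hbc])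
        linear_combination v * h - (x ^ i * y ^ j * z ^ l * t ^ m * u ^ q * v ^ r * w ^ s) * f2
      by_cases k10 : 0 < q ∧ 0 < p' ∧ a ≤ i
      · obtain ⟨m, rfl⟩ := Nat.exists_eq_add_of_le' k10.1
        obtain ⟨m', rfl⟩ := Nat.exists_eq_add_of_le' k10.2.1
        obtain ⟨l, rfl⟩ := Nat.exists_eq_add_of_le' k10.2.2
        have h := ih (l) (j + a) (k) (p) (m) (r) (s) (i') (j') (k') (m') (q') (r') (0) (by clear * - hN hd; omega) (by clear * - hd; omega)
          (by linarith only [hi, hac, hbc]) (by linarith only [hj, hac, hbc]) (by linarith only [hk, hac, hbc])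
        linear_combination t * h + (x ^ l * y ^ j * z ^ k * t ^ p * u ^ m * v ^ r * w ^ s) * f1
      by_cases k12 : 0 < q ∧ 0 < r' ∧ a ≤ k
      · obtain ⟨m, rfl⟩ := Nat.exists_eq_add_of_le' k12.1
        obtain ⟨m', rfl⟩ := Nat.exists_eq_add_of_le' k12.2.1
        obtain ⟨l, rfl⟩ := Nat.exists_eq_add_of_le' k12.2.2
        have h := ih (i) (j + a) (l) (p) (m) (r) (s) (i') (j') (k') (p') (q') (m') (0) (by clear * - hN hd; omega) (by clear * - hd; omega)
          (by linarith only [hi, hac, hbc]) (by linarith only [hj, hac, hbc]) (by linarith only [hk, hac, hbc])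
        linear_combination v * h - (x ^ i * y ^ j * z ^ l * t ^ p * u ^ m * v ^ r * w ^ s) * f3
      by_cases k20 : 0 < r ∧ 0 < p' ∧ a ≤ i
      · obtain ⟨m, rfl⟩ := Nat.exists_eq_add_of_le' k20.1
        obtain ⟨m', rfl⟩ := Nat.exists_eq_add_of_le' k20.2.1
        obtain ⟨l, rfl⟩ := Nat.exists_eq_add_of_le' k20.2.2
        have h := ih (l) (j) (k + a) (p) (q) (m) (s) (i') (j') (k') (m') (q') (r') (0) (by clear * - hN hd; omega) (by clear * - hd; omega)
          (by linarith only [hi, hac, hbc]) (by linarith only [hj, hac, hbc]) (by linarith only [hk, hac, hbc])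
        linear_combination t * h + (x ^ l * y ^ j * z ^ k * t ^ p * u ^ q * v ^ m * w ^ s) * f2
      by_cases k21 : 0 < r ∧ 0 < q' ∧ a ≤ j
      · obtain ⟨m, rfl⟩ := Nat.exists_eq_add_of_le' k21.1
        obtain ⟨m', rfl⟩ := Nat.exists_eq_add_of_le' k21.2.1
        obtain ⟨l, rfl⟩ := Nat.exists_eq_add_of_le' k21.2.2
        have h := ih (i) (l) (k + a) (p) (q) (m) (s) (i') (j') (k') (p') (m') (r') (0) (by clear * - hN hd; omega) (by clear * - hd; omega)
          (by linarith only [hi, hac, hbc]) (by linarith only [hj, hac, hbc]) (by linarith only [hk, hac, hbc])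
        linear_combination u * h + (x ^ i * y ^ l * z ^ k * t ^ p * u ^ q * v ^ m * w ^ s) * f3
      have l1 := lb i p i' p' s cp hi
      have l2 := lb j q j' q' s cq hj
      have l3 := lb k r k' r' s cr hk
      have hs3 : s = 0 ∨ s = 1 ∨ s = 2 := by clear * - hs2; omega
      rcases hs3 with rfl | rfl | rfl
      · by_cases h0 : p + q + r = 0
        · obtain ⟨rfl, rfl, rfl⟩ : p = 0 ∧ q = 0 ∧ r = 0 := by clear * - h0; omega
          obtain ⟨rfl, rfl, rfl⟩ : p' = 0 ∧ q' = 0 ∧ r' = 0 := by clear * - hd; omega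
          obtain rfl : i = i' := by simpa using hi
          obtain rfl : j = j' := by simpa using hj
          obtain rfl : k = k' := by simpa using hk
          rfl
        · exfalso
          have h1 : 0 < p ∨ 0 < q ∨ 0 < r := by clear * - h0; omega
          have h2 : 0 < p' ∨ 0 < q' ∨ 0 < r' := by clear * - h0 hd; omega
          rcases h1 with h | h | h <;> rcases h2 with h' | h' | h' <;>
          first | exact cp ⟨h, h'⟩ | exact cq ⟨h, h'⟩ | exact cr ⟨h, h'⟩ |
            exact k01 ⟨h, h', hA0 _ (l2 h').2.1⟩ | exact k02 ⟨h, h', hA0 _ (l3 h').2.1⟩ |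
            exact k10 ⟨h, h', hA0 _ (l1 h').2.1⟩ | exact k12 ⟨h, h', hA0 _ (l3 h').2.1⟩ |
            exact k20 ⟨h, h', hA0 _ (l1 h').2.1⟩ | exact k21 ⟨h, h', hA0 _ (l2 h').2.1⟩
      · exfalso
        have h2 : 0 < p' ∨ 0 < q' ∨ 0 < r' := by clear * - hd; omega
        rcases h2 with h | h | h
        · exact d0 ⟨one_pos, h, hA1 _ (l1 h).2.1⟩
        · exact d1 ⟨one_pos, h, hA1 _ (l2 h).2.1⟩
        · exact d2 ⟨one_pos, h, hA1 _ (l3 h).2.1⟩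
      · exfalso
        have h2 : 2 ≤ p' ∨ 2 ≤ q' ∨ 2 ≤ r' ∨ (0 < p' ∧ 0 < q') ∨ (0 < p' ∧ 0 < r') ∨
            (0 < q' ∧ 0 < r') := by clear * - hd; omega
        rcases h2 with h | h | h | ⟨h, h'⟩ | ⟨h, h'⟩ | ⟨h, h'⟩
        · have h0 := lt_of_lt_of_le two_pos h
          exact d0 ⟨two_pos, h0, hA2 _ ((l1 h0).2.2 h)⟩
        · have h0 := lt_of_lt_of_le two_pos h
          exact d1 ⟨two_pos, h0, hA2 _ ((l2 h0).2.2 h)⟩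
        · have h0 := lt_of_lt_of_le two_pos h
          exact d2 ⟨two_pos, h0, hA2 _ ((l3 h0).2.2 h)⟩
        · exact e0 ⟨le_rfl, hA3 _ (l1 h).2.1, hA3 _ (l2 h').2.1⟩
        · exact e1 ⟨le_rfl, hA3 _ (l1 h).2.1, hA3 _ (l3 h').2.1⟩
        · exact e2 ⟨le_rfl, hA3 _ (l2 h).2.1, hA3 _ (l3 h').2.1⟩
    intro i j k p q r s i' j' k' p' q' r' s' hN hd hi hj hk
    rcases le_total s' s with h | h
    · exact one _ _ _ _ _ _ _ _ _ _ _ _ _ _ hN hd hi hj hk h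
    · exact (one _ _ _ _ _ _ _ _ _ _ _ _ _ _ (by omega) hd.symm hi.symm hj.symm hk.symm h).symm

/-- A linear map sending basis vectors to basis vectors has kernel spanned by differences. -/
theorem stmt16_lin {k V W U ι κ : Type*} [Field k] [AddCommGroup V] [Module k V]
    [AddCommGroup W] [Module k W] [AddCommGroup U] [Module k U]
    (B : Module.Basis ι k V) (D : Module.Basis κ k W) (F : V →ₗ[k] W) (Q : V →ₗ[k] U) (π : ι → κ)
    (hF : ∀ i, F (B i) = D (π i)) (hQ : ∀ i j, π i = π j → Q (B i) = Q (B j))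
    (m : V) (hm : F m = 0) : Q m = 0 := by
  classical
  let L : W →ₗ[k] U := D.constr k
    (fun n => if h : ∃ i, π i = n then Q (B h.choose) else 0)
  have hL : L ∘ₗ F = Q := by
    refine B.ext fun i => ?_
    have h : ∃ j, π j = π i := ⟨i, rfl⟩
    simp only [LinearMap.comp_apply, hF, L, Module.Basis.constr_basis]
    rw [dif_pos h]
    exact hQ _ _ h.choose_spec
  rw [← hL, LinearMap.comp_apply, hm, map_zero]

/-- The kernel is contained in any ideal containing the ten generators. -/
theorem stmt16_aux {k : Type*} [Field k] (a b c e : ℕ)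
    (hac : a = 2 * b + (c + 1)) (hbc : b = (c + 1) + e)
    (x y z : MvPolynomial (Fin 3) k) (t u v w : MvPolynomial (Fin 4) (MvPolynomial (Fin 3) k))
    (hx : x = X 0) (hy : y = X 1) (hz : z = X 2)
    (ht0 : t = X 0) (hu0 : u = X 1) (hv0 : v = X 2) (hw0 : w = X 3)
    (ψ : MvPolynomial (Fin 4) (MvPolynomial (Fin 3) k) →ₐ[MvPolynomial (Fin 3) k] Polynomial (MvPolynomial (Fin 3) k))
    (ht : ψ t = Polynomial.C (x ^ a) * Polynomial.X)
    (hu : ψ u = Polynomial.C (y ^ a) * Polynomial.X)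
    (hv : ψ v = Polynomial.C (z ^ a) * Polynomial.X)
    (hw : ψ w = Polynomial.C ((x * y * z) ^ b) * Polynomial.X)
    (J : Ideal (MvPolynomial (Fin 4) (MvPolynomial (Fin 3) k)))
    (f1 : C (x ^ a) * u - C (y ^ a) * t ∈ J)
    (f2 : C (x ^ a) * v - C (z ^ a) * t ∈ J)
    (f3 : C (y ^ a) * v - C (z ^ a) * u ∈ J)
    (g1 : C (x ^ (b + (c + 1))) * w - C ((y * z) ^ b) * t ∈ J)
    (g2 : C (y ^ (b + (c + 1))) * w - C ((x * z) ^ b) * u ∈ J)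
    (g3 : C (z ^ (b + (c + 1))) * w - C ((x * y) ^ b) * v ∈ J)
    (H1 : C ((x * y) ^ (c + 1)) * w ^ 2 - C (z ^ (2 * b)) * t * u ∈ J)
    (H2 : C ((x * z) ^ (c + 1)) * w ^ 2 - C (y ^ (2 * b)) * t * v ∈ J)
    (H3 : C ((y * z) ^ (c + 1)) * w ^ 2 - C (x ^ (2 * b)) * u * v ∈ J)
    (hE : w ^ 3 - C ((x * y * z) ^ e) * t * u * v ∈ J)
    (m : MvPolynomial (Fin 4) (MvPolynomial (Fin 3) k)) (hm0 : ψ m = 0) : m ∈ J := by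
    have hC : ∀ r, ψ (C r) = Polynomial.C r := fun r => ψ.commutes r
    let B := (basisMonomials (Fin 3) k).smulTower (basisMonomials (Fin 4) (MvPolynomial (Fin 3) k))
    let D := (basisMonomials (Fin 3) k).smulTower (Polynomial.basisMonomials (MvPolynomial (Fin 3) k))
    let F : MvPolynomial (Fin 4) (MvPolynomial (Fin 3) k) →ₗ[k] Polynomial (MvPolynomial (Fin 3) k) := ψ.toLinearMap.restrictScalars k
    let Q : MvPolynomial (Fin 4) (MvPolynomial (Fin 3) k) →ₗ[k] MvPolynomial (Fin 4) (MvPolynomial (Fin 3) k) ⧸ J := (Ideal.Quotient.mkₐ k J).toLinearMap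
    let π : (Fin 3 →₀ ℕ) × (Fin 4 →₀ ℕ) → (Fin 3 →₀ ℕ) × ℕ := fun n =>
      (Finsupp.equivFunOnFinite.symm ![n.1 0 + a * n.2 0 + b * n.2 3,
        n.1 1 + a * n.2 1 + b * n.2 3, n.1 2 + a * n.2 2 + b * n.2 3],
        n.2 0 + n.2 1 + n.2 2 + n.2 3)
    have hmon : ∀ n : Fin 3 →₀ ℕ, monomial n (1 : k) = x ^ n 0 * y ^ n 1 * z ^ n 2 := by
      intro n
      rw [monomial_eq, Finsupp.prod_fintype _ _ (by simp)]
      simp [Fin.prod_univ_succ, hx, hy, hz, mul_assoc]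
    have hB : ∀ n, B n = C (x ^ n.1 0 * y ^ n.1 1 * z ^ n.1 2) *
        (t ^ n.2 0 * u ^ n.2 1 * v ^ n.2 2 * w ^ n.2 3) := by
      intro n
      rw [Module.Basis.smulTower_apply, coe_basisMonomials, coe_basisMonomials]
      beta_reduce
      rw [hmon,
        smul_eq_C_mul, monomial_eq, Finsupp.prod_fintype _ _ (by simp)]
      simp [Fin.prod_univ_succ, ht0, hu0, hv0, hw0, mul_assoc]
    have hF : ∀ n, F (B n) = D (π n) := by
      intro n
      have h1 : F (B n) = ψ (B n) := rfl
      rw [h1, hB, map_mul ψ, map_mul ψ, map_mul ψ, map_mul ψ, map_pow ψ, map_pow ψ, map_pow ψ,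
        map_pow ψ, ht, hu, hv, hw, hC, Module.Basis.smulTower_apply, coe_basisMonomials,
        Polynomial.coe_basisMonomials]
      beta_reduce
      rw [hmon, Polynomial.smul_monomial, ← Polynomial.C_mul_X_pow_eq_monomial]
      simp only [π, Finsupp.equivFunOnFinite_symm_apply_apply, Matrix.cons_val, map_mul, map_pow,
        smul_eq_mul, mul_one]
      ring
    have hQ : ∀ n n', π n = π n' → Q (B n) = Q (B n') := by
      intro n n' h
      have hd := congrArg Prod.snd h
      have h0 := DFunLike.congr_fun (congrArg Prod.fst h) 0
      have h1 := DFunLike.congr_fun (congrArg Prod.fst h) 1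
      have h2 := DFunLike.congr_fun (congrArg Prod.fst h) 2
      simp only [π, Finsupp.equivFunOnFinite_symm_apply_apply, Matrix.cons_val] at hd h0 h1 h2
      let q := Ideal.Quotient.mk J
      have rel : ∀ f g : MvPolynomial (Fin 4) (MvPolynomial (Fin 3) k), f - g ∈ J → q f = q g := fun f g h => Ideal.Quotient.eq.2 h
      have key := stmt16_key (q (C x)) (q (C y)) (q (C z)) (q t) (q u) (q v) (q w) a b (c + 1) e
        hac hbc
        (by simpa only [map_mul, map_pow] using rel (C (x ^ a) * u) (C (y ^ a) * t)
              f1)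
        (by simpa only [map_mul, map_pow] using rel (C (x ^ a) * v) (C (z ^ a) * t)
              f2)
        (by simpa only [map_mul, map_pow] using rel (C (y ^ a) * v) (C (z ^ a) * u)
              f3)
        (by simpa only [map_mul, map_pow] using
              rel (C (x ^ (b + (c + 1))) * w) (C ((y * z) ^ b) * t)
              g1)
        (by simpa only [map_mul, map_pow] using
              rel (C (y ^ (b + (c + 1))) * w) (C ((x * z) ^ b) * u)
              g2)
        (by simpa only [map_mul, map_pow] using
              rel (C (z ^ (b + (c + 1))) * w) (C ((x * y) ^ b) * v)
              g3)
        (by simpa only [map_mul, map_pow] using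
              rel (C ((x * y) ^ (c + 1)) * w ^ 2) (C (z ^ (2 * b)) * t * u)
              H1)
        (by simpa only [map_mul, map_pow] using
              rel (C ((x * z) ^ (c + 1)) * w ^ 2) (C (y ^ (2 * b)) * t * v)
              H2)
        (by simpa only [map_mul, map_pow] using
              rel (C ((y * z) ^ (c + 1)) * w ^ 2) (C (x ^ (2 * b)) * u * v)
              H3)
        (by simpa only [map_mul, map_pow] using
              rel (w ^ 3) (C ((x * y * z) ^ e) * t * u * v)
              hE)
        _ _ _ _ _ _ _ _ _ _ _ _ _ _ _ (Nat.lt_succ_self _) hd h0 h1 h2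
      have hq : ∀ s : MvPolynomial (Fin 4) (MvPolynomial (Fin 3) k), Q s = q s := fun _ => rfl
      rw [hq, hq, hB, hB]
      simp only [map_mul, map_pow]
      linear_combination key
    have := stmt16_lin B D F Q π hF hQ m hm0
    exact Ideal.Quotient.eq_zero_iff_mem.1 this

/-- Let `I = (x^a, y^a, z^a, (xyz)^b) ⊆ k[x,y,z]` with
`2b < a ≤ 3b`, and let `𝓘` be the Rees ideal of `I` (kernel of `S = R[t,u,v,w] → R[T]`,
`t ↦ x^a T, u ↦ y^a T, v ↦ z^a T, w ↦ (xyz)^b T`).  Then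
`𝓘 = (f1, f2, f3, g1, g2, g3, H1, H2, H3, E)` with `E = w^3 - (xyz)^{3b-a} t u v`. -/
theorem stmt16 {k : Type*} [Field k] (a b : ℕ) (hb : 0 < b) (h2b : 2 * b < a)
    (h3b : a ≤ 3 * b) :
    let R := MvPolynomial (Fin 3) k
    let x : R := X 0
    let y : R := X 1
    let z : R := X 2
    let S := MvPolynomial (Fin 4) R
    let t : S := X 0
    let u : S := X 1
    let v : S := X 2
    let w : S := X 3
    let ψ : S →ₐ[R] Polynomial R :=
      aeval ![Polynomial.C (x ^ a) * Polynomial.X, Polynomial.C (y ^ a) * Polynomial.X,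
        Polynomial.C (z ^ a) * Polynomial.X,
        Polynomial.C ((x * y * z) ^ b) * Polynomial.X]
    RingHom.ker ψ.toRingHom = Ideal.span
      { C (x ^ a) * u - C (y ^ a) * t,
        C (x ^ a) * v - C (z ^ a) * t,
        C (y ^ a) * v - C (z ^ a) * u,
        C (x ^ (a - b)) * w - C ((y * z) ^ b) * t,
        C (y ^ (a - b)) * w - C ((x * z) ^ b) * u,
        C (z ^ (a - b)) * w - C ((x * y) ^ b) * v,
        C ((x * y) ^ (a - 2 * b)) * w ^ 2 - C (z ^ (2 * b)) * t * u,
        C ((x * z) ^ (a - 2 * b)) * w ^ 2 - C (y ^ (2 * b)) * t * v,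
        C ((y * z) ^ (a - 2 * b)) * w ^ 2 - C (x ^ (2 * b)) * u * v,
        w ^ 3 - C ((x * y * z) ^ (3 * b - a)) * t * u * v } := by
  intro R x y z S t u v w ψ
  obtain ⟨c, hc⟩ := Nat.exists_eq_add_of_lt h2b
  obtain ⟨e, he⟩ := Nat.exists_eq_add_of_le h3b
  have hab : a - b = b + (c + 1) := by omega
  have hab2 : a - 2 * b = c + 1 := by omega
  have hab3 : 3 * b - a = e := by omega
  have hac : a = 2 * b + (c + 1) := by omega
  have hbc : b = (c + 1) + e := by omega
  rw [hab, hab2, hab3]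
  have ht : ψ t = Polynomial.C (x ^ a) * Polynomial.X := aeval_X _ _
  have hu : ψ u = Polynomial.C (y ^ a) * Polynomial.X := aeval_X _ _
  have hv : ψ v = Polynomial.C (z ^ a) * Polynomial.X := aeval_X _ _
  have hw : ψ w = Polynomial.C ((x * y * z) ^ b) * Polynomial.X := aeval_X _ _
  have hC : ∀ r : R, ψ (C r) = Polynomial.C r := fun r => ψ.commutes r
  apply le_antisymm
  · intro m hm
    have hm0 : ψ m = 0 := hm
    refine stmt16_aux a b c e hac hbc x y z t u v w rfl rfl rfl rfl rfl rfl rfl ψ ht hu hv hw _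
      ?_ ?_ ?_ ?_ ?_ ?_ ?_ ?_ ?_ ?_ m hm0 <;>
    · apply Ideal.subset_span
      simp only [Set.mem_insert_iff, Set.mem_singleton_iff, true_or, or_true]
  · rw [Ideal.span_le]
    intro f hf
    change ψ f = 0
    simp only [Set.mem_insert_iff, Set.mem_singleton_iff] at hf
    rcases hf with rfl | rfl | rfl | rfl | rfl | rfl | rfl | rfl | rfl | rfl <;>
    · simp only [map_sub ψ, map_mul ψ, map_pow ψ, ht, hu, hv, hw, hC]
      simp only [map_mul, map_pow]
      subst hac
      subst hbc
      ring
end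

section
/- Assume a > 3b and set E' := (xyz)^{a-3b} w^3 − t u v. Then the Rees ideal 𝓘 of I = (x^a, y^a, z^a, (xyz)^b) equals the ideal of S generated by f1, f2, f3, g1, g2, g3, H1, H2, H3 and E'. -/
open MvPolynomial

set_option maxHeartbeats 8000000 in
/-- Two monomials with the same image in the Rees algebra agree modulo the ten relations. -/
lemma conn_aux {A : Type*} [CommRing A] (x y z t u v w : A) (a b c : ℕ) (hac : a = 3 * b + c)
    (f1 : x^a*u = y^a*t) (f2 : x^a*v = z^a*t) (f3 : y^a*v = z^a*u)
    (g1 : x^(2*b+c)*w = (y*z)^b*t) (g2 : y^(2*b+c)*w = (x*z)^b*u) (g3 : z^(2*b+c)*w = (x*y)^b*v)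
    (h1 : (x*y)^(b+c)*w^2 = z^(2*b)*t*u) (h2 : (x*z)^(b+c)*w^2 = y^(2*b)*t*v)
    (h3 : (y*z)^(b+c)*w^2 = x^(2*b)*u*v) (e1 : (x*y*z)^c*w^3 = t*u*v) (N : ℕ) :
    ∀ p q r i j k l p' q' r' i' j' k' l' : ℕ,
      (i-i')+(i'-i)+((j-j')+(j'-j))+((k-k')+(k'-k))+((l-l')+(l'-l)) ≤ N →
      i+j+k+l = i'+j'+k'+l' →
      p+a*i+b*l = p'+a*i'+b*l' → q+a*j+b*l = q'+a*j'+b*l' → r+a*k+b*l = r'+a*k'+b*l' →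
      x^p*y^q*z^r*t^i*u^j*v^k*w^l = x^p'*y^q'*z^r'*t^i'*u^j'*v^k'*w^l' := by
  induction N with
  | zero =>
    intro p q r i j k l p' q' r' i' j' k' l' hN hn hp hq hr
    obtain rfl : i = i' := by omega
    obtain rfl : j = j' := by omega
    obtain rfl : k = k' := by omega
    obtain rfl : l = l' := by omega
    obtain rfl : p = p' := by linarith
    obtain rfl : q = q' := by linarith
    obtain rfl : r = r' := by linarith
    rfl
  | succ N ih =>
    intro p q r i j k l p' q' r' i' j' k' l' hN hn hp hq hr
    wlog hl : l ≤ l' generalizing p q r i j k l p' q' r' i' j' k' l'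
    · exact (this p' q' r' i' j' k' l' p q r i j k l (by omega) hn.symm hp.symm hq.symm hr.symm
        (by omega)).symm
    obtain ⟨d, rfl⟩ := Nat.exists_eq_add_of_le hl
    by_cases hc : i' < i ∧ j < j'
    · obtain ⟨hc0, hc1⟩ := hc
      obtain ⟨m0, rfl⟩ : ∃ m, i = i'+m+1 := ⟨i-i'-1, by omega⟩
      obtain ⟨n, rfl⟩ : ∃ n, j' = j+n+1 := ⟨j'-j-1, by omega⟩
      obtain rfl : q = q'+a*n+b*d+a := by linarith
      have key : x^(p)*y^(q'+a*n+b*d+a)*z^(r)*t^(i'+m0+1)*u^(j)*v^(k)*w^(l)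
          = x^(p+a)*y^(q'+a*n+b*d)*z^(r)*t^(i'+m0)*u^(j+1)*v^(k)*w^(l) := by
        linear_combination (-(x^(p)*y^(q'+a*n+b*d)*z^(r)*t^(i'+m0)*u^(j)*v^(k)*w^(l)))*f1
      rw [key]
      apply ih
      · omega
      · omega
      · linarith
      · linarith
      · linarith
    by_cases hc : i' < i ∧ k < k'
    · obtain ⟨hc0, hc1⟩ := hc
      obtain ⟨m0, rfl⟩ : ∃ m, i = i'+m+1 := ⟨i-i'-1, by omega⟩
      obtain ⟨n, rfl⟩ : ∃ n, k' = k+n+1 := ⟨k'-k-1, by omega⟩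
      obtain rfl : r = r'+a*n+b*d+a := by linarith
      have key : x^(p)*y^(q)*z^(r'+a*n+b*d+a)*t^(i'+m0+1)*u^(j)*v^(k)*w^(l)
          = x^(p+a)*y^(q)*z^(r'+a*n+b*d)*t^(i'+m0)*u^(j)*v^(k+1)*w^(l) := by
        linear_combination (-(x^(p)*y^(q)*z^(r'+a*n+b*d)*t^(i'+m0)*u^(j)*v^(k)*w^(l)))*f2
      rw [key]
      apply ih
      · omega
      · omega
      · linarith
      · linarith
      · linarith
    by_cases hc : j' < j ∧ i < i'
    · obtain ⟨hc0, hc1⟩ := hc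
      obtain ⟨m1, rfl⟩ : ∃ m, j = j'+m+1 := ⟨j-j'-1, by omega⟩
      obtain ⟨n, rfl⟩ : ∃ n, i' = i+n+1 := ⟨i'-i-1, by omega⟩
      obtain rfl : p = p'+a*n+b*d+a := by linarith
      have key : x^(p'+a*n+b*d+a)*y^(q)*z^(r)*t^(i)*u^(j'+m1+1)*v^(k)*w^(l)
          = x^(p'+a*n+b*d)*y^(q+a)*z^(r)*t^(i+1)*u^(j'+m1)*v^(k)*w^(l) := by
        linear_combination ((x^(p'+a*n+b*d)*y^(q)*z^(r)*t^(i)*u^(j'+m1)*v^(k)*w^(l)))*f1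
      rw [key]
      apply ih
      · omega
      · omega
      · linarith
      · linarith
      · linarith
    by_cases hc : j' < j ∧ k < k'
    · obtain ⟨hc0, hc1⟩ := hc
      obtain ⟨m1, rfl⟩ : ∃ m, j = j'+m+1 := ⟨j-j'-1, by omega⟩
      obtain ⟨n, rfl⟩ : ∃ n, k' = k+n+1 := ⟨k'-k-1, by omega⟩
      obtain rfl : r = r'+a*n+b*d+a := by linarith
      have key : x^(p)*y^(q)*z^(r'+a*n+b*d+a)*t^(i)*u^(j'+m1+1)*v^(k)*w^(l)
          = x^(p)*y^(q+a)*z^(r'+a*n+b*d)*t^(i)*u^(j'+m1)*v^(k+1)*w^(l) := by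
        linear_combination (-(x^(p)*y^(q)*z^(r'+a*n+b*d)*t^(i)*u^(j'+m1)*v^(k)*w^(l)))*f3
      rw [key]
      apply ih
      · omega
      · omega
      · linarith
      · linarith
      · linarith
    by_cases hc : k' < k ∧ i < i'
    · obtain ⟨hc0, hc1⟩ := hc
      obtain ⟨m2, rfl⟩ : ∃ m, k = k'+m+1 := ⟨k-k'-1, by omega⟩
      obtain ⟨n, rfl⟩ : ∃ n, i' = i+n+1 := ⟨i'-i-1, by omega⟩
      obtain rfl : p = p'+a*n+b*d+a := by linarith
      have key : x^(p'+a*n+b*d+a)*y^(q)*z^(r)*t^(i)*u^(j)*v^(k'+m2+1)*w^(l)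
          = x^(p'+a*n+b*d)*y^(q)*z^(r+a)*t^(i+1)*u^(j)*v^(k'+m2)*w^(l) := by
        linear_combination ((x^(p'+a*n+b*d)*y^(q)*z^(r)*t^(i)*u^(j)*v^(k'+m2)*w^(l)))*f2
      rw [key]
      apply ih
      · omega
      · omega
      · linarith
      · linarith
      · linarith
    by_cases hc : k' < k ∧ j < j'
    · obtain ⟨hc0, hc1⟩ := hc
      obtain ⟨m2, rfl⟩ : ∃ m, k = k'+m+1 := ⟨k-k'-1, by omega⟩
      obtain ⟨n, rfl⟩ : ∃ n, j' = j+n+1 := ⟨j'-j-1, by omega⟩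
      obtain rfl : q = q'+a*n+b*d+a := by linarith
      have key : x^(p)*y^(q'+a*n+b*d+a)*z^(r)*t^(i)*u^(j)*v^(k'+m2+1)*w^(l)
          = x^(p)*y^(q'+a*n+b*d)*z^(r+a)*t^(i)*u^(j+1)*v^(k'+m2)*w^(l) := by
        linear_combination ((x^(p)*y^(q'+a*n+b*d)*z^(r)*t^(i)*u^(j)*v^(k'+m2)*w^(l)))*f3
      rw [key]
      apply ih
      · omega
      · omega
      · linarith
      · linarith
      · linarith
    by_cases hd : d = 0
    · subst hd
      obtain rfl : i = i' := by omega
      obtain rfl : j = j' := by omega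
      obtain rfl : k = k' := by omega
      obtain rfl : p = p' := by linarith
      obtain rfl : q = q' := by linarith
      obtain rfl : r = r' := by linarith
      rfl
    by_cases hc : i' < i ∧ j' < j ∧ k' < k
    · obtain ⟨hc0, hc1, hc2⟩ := hc
      obtain ⟨m0, rfl⟩ : ∃ m, i = i'+m+1 := ⟨i-i'-1, by omega⟩
      obtain ⟨m1, rfl⟩ : ∃ m, j = j'+m+1 := ⟨j-j'-1, by omega⟩
      obtain ⟨m2, rfl⟩ : ∃ m, k = k'+m+1 := ⟨k-k'-1, by omega⟩
      obtain ⟨d, rfl⟩ : ∃ d', d = d'+3 := ⟨d-3, by omega⟩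
      have key : x^(p)*y^(q)*z^(r)*t^(i'+m0+1)*u^(j'+m1+1)*v^(k'+m2+1)*w^(l)
          = x^(p+(c))*y^(q+(c))*z^(r+(c))*t^(i'+m0)*u^(j'+m1)*v^(k'+m2)*w^(l+3) := by
        clear ih hN hn hp hq hr
        linear_combination (-(x^(p)*y^(q)*z^(r)*t^(i'+m0)*u^(j'+m1)*v^(k'+m2)*w^(l)))*e1
      rw [key]
      apply ih
      · omega
      · omega
      · linarith
      · linarith
      · linarith
    by_cases hc : i' < i ∧ j' < j
    · obtain ⟨hc0, hc1⟩ := hc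
      obtain ⟨m0, rfl⟩ : ∃ m, i = i'+m+1 := ⟨i-i'-1, by omega⟩
      obtain ⟨m1, rfl⟩ : ∃ m, j = j'+m+1 := ⟨j-j'-1, by omega⟩
      obtain ⟨d, rfl⟩ : ∃ d', d = d'+2 := ⟨d-2, by omega⟩
      obtain rfl : k = k' := by omega
      obtain rfl : r = r'+b*d+2*b := by linarith
      have key : x^(p)*y^(q)*z^(r'+b*d+2*b)*t^(i'+m0+1)*u^(j'+m1+1)*v^(k)*w^(l)
          = x^(p+(b+c))*y^(q+(b+c))*z^(r'+b*d)*t^(i'+m0)*u^(j'+m1)*v^(k)*w^(l+2) := by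
        clear ih hN hn hp hq hr
        linear_combination (-(x^(p)*y^(q)*z^(r'+b*d)*t^(i'+m0)*u^(j'+m1)*v^(k)*w^(l)))*h1
      rw [key]
      apply ih
      · omega
      · omega
      · linarith
      · linarith
      · linarith
    by_cases hc : i' < i ∧ k' < k
    · obtain ⟨hc0, hc1⟩ := hc
      obtain ⟨m0, rfl⟩ : ∃ m, i = i'+m+1 := ⟨i-i'-1, by omega⟩
      obtain ⟨m2, rfl⟩ : ∃ m, k = k'+m+1 := ⟨k-k'-1, by omega⟩
      obtain ⟨d, rfl⟩ : ∃ d', d = d'+2 := ⟨d-2, by omega⟩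
      obtain rfl : j = j' := by omega
      obtain rfl : q = q'+b*d+2*b := by linarith
      have key : x^(p)*y^(q'+b*d+2*b)*z^(r)*t^(i'+m0+1)*u^(j)*v^(k'+m2+1)*w^(l)
          = x^(p+(b+c))*y^(q'+b*d)*z^(r+(b+c))*t^(i'+m0)*u^(j)*v^(k'+m2)*w^(l+2) := by
        clear ih hN hn hp hq hr
        linear_combination (-(x^(p)*y^(q'+b*d)*z^(r)*t^(i'+m0)*u^(j)*v^(k'+m2)*w^(l)))*h2
      rw [key]
      apply ih
      · omega
      · omega
      · linarith
      · linarith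
      · linarith
    by_cases hc : j' < j ∧ k' < k
    · obtain ⟨hc0, hc1⟩ := hc
      obtain ⟨m1, rfl⟩ : ∃ m, j = j'+m+1 := ⟨j-j'-1, by omega⟩
      obtain ⟨m2, rfl⟩ : ∃ m, k = k'+m+1 := ⟨k-k'-1, by omega⟩
      obtain ⟨d, rfl⟩ : ∃ d', d = d'+2 := ⟨d-2, by omega⟩
      obtain rfl : i = i' := by omega
      obtain rfl : p = p'+b*d+2*b := by linarith
      have key : x^(p'+b*d+2*b)*y^(q)*z^(r)*t^(i)*u^(j'+m1+1)*v^(k'+m2+1)*w^(l)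
          = x^(p'+b*d)*y^(q+(b+c))*z^(r+(b+c))*t^(i)*u^(j'+m1)*v^(k'+m2)*w^(l+2) := by
        clear ih hN hn hp hq hr
        linear_combination (-(x^(p'+b*d)*y^(q)*z^(r)*t^(i)*u^(j'+m1)*v^(k'+m2)*w^(l)))*h3
      rw [key]
      apply ih
      · omega
      · omega
      · linarith
      · linarith
      · linarith
    by_cases hc : i' < i
    · have hc0 := hc
      obtain ⟨m0, rfl⟩ : ∃ m, i = i'+m+1 := ⟨i-i'-1, by omega⟩
      obtain ⟨d, rfl⟩ : ∃ d', d = d'+1 := ⟨d-1, by omega⟩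
      obtain rfl : j = j' := by omega
      obtain rfl : q = q'+b*d+1*b := by linarith
      obtain rfl : k = k' := by omega
      obtain rfl : r = r'+b*d+1*b := by linarith
      have key : x^(p)*y^(q'+b*d+1*b)*z^(r'+b*d+1*b)*t^(i'+m0+1)*u^(j)*v^(k)*w^(l)
          = x^(p+(2*b+c))*y^(q'+b*d)*z^(r'+b*d)*t^(i'+m0)*u^(j)*v^(k)*w^(l+1) := by
        clear ih hN hn hp hq hr
        linear_combination (-(x^(p)*y^(q'+b*d)*z^(r'+b*d)*t^(i'+m0)*u^(j)*v^(k)*w^(l)))*g1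
      rw [key]
      apply ih
      · omega
      · omega
      · linarith
      · linarith
      · linarith
    by_cases hc : j' < j
    · have hc0 := hc
      obtain ⟨m1, rfl⟩ : ∃ m, j = j'+m+1 := ⟨j-j'-1, by omega⟩
      obtain ⟨d, rfl⟩ : ∃ d', d = d'+1 := ⟨d-1, by omega⟩
      obtain rfl : i = i' := by omega
      obtain rfl : p = p'+b*d+1*b := by linarith
      obtain rfl : k = k' := by omega
      obtain rfl : r = r'+b*d+1*b := by linarith
      have key : x^(p'+b*d+1*b)*y^(q)*z^(r'+b*d+1*b)*t^(i)*u^(j'+m1+1)*v^(k)*w^(l)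
          = x^(p'+b*d)*y^(q+(2*b+c))*z^(r'+b*d)*t^(i)*u^(j'+m1)*v^(k)*w^(l+1) := by
        clear ih hN hn hp hq hr
        linear_combination (-(x^(p'+b*d)*y^(q)*z^(r'+b*d)*t^(i)*u^(j'+m1)*v^(k)*w^(l)))*g2
      rw [key]
      apply ih
      · omega
      · omega
      · linarith
      · linarith
      · linarith
    by_cases hc : k' < k
    · have hc0 := hc
      obtain ⟨m2, rfl⟩ : ∃ m, k = k'+m+1 := ⟨k-k'-1, by omega⟩
      obtain ⟨d, rfl⟩ : ∃ d', d = d'+1 := ⟨d-1, by omega⟩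
      obtain rfl : i = i' := by omega
      obtain rfl : p = p'+b*d+1*b := by linarith
      obtain rfl : j = j' := by omega
      obtain rfl : q = q'+b*d+1*b := by linarith
      have key : x^(p'+b*d+1*b)*y^(q'+b*d+1*b)*z^(r)*t^(i)*u^(j)*v^(k'+m2+1)*w^(l)
          = x^(p'+b*d)*y^(q'+b*d)*z^(r+(2*b+c))*t^(i)*u^(j)*v^(k'+m2)*w^(l+1) := by
        clear ih hN hn hp hq hr
        linear_combination (-(x^(p'+b*d)*y^(q'+b*d)*z^(r)*t^(i)*u^(j)*v^(k'+m2)*w^(l)))*g3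
      rw [key]
      apply ih
      · omega
      · omega
      · linarith
      · linarith
      · linarith
    omega

/-- The monomials of `S`. -/
lemma mem_of_monomials {k : Type*} [Field k]
    (P : MvPolynomial (Fin 4) (MvPolynomial (Fin 3) k) → Prop)
    (hadd : ∀ f g, P f → P g → P (f + g))
    (hmon : ∀ (c : k) (p q r i j l m : ℕ),
      P (C (C c) * (C (X 0 ^ p * X 1 ^ q * X 2 ^ r) * (X 0 ^ i * X 1 ^ j * X 2 ^ l * X 3 ^ m))))
    (f) : P f := by
  induction f using MvPolynomial.induction_on' with
  | add f g hf hg => exact hadd f g hf hg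
  | monomial s g =>
    induction g using MvPolynomial.induction_on' with
    | add f g hf hg => rw [map_add]; exact hadd _ _ hf hg
    | monomial e c =>
      convert hmon c (e 0) (e 1) (e 2) (s 0) (s 1) (s 2) (s 3) using 1
      rw [MvPolynomial.monomial_eq, MvPolynomial.monomial_eq]
      rw [Finsupp.prod_fintype _ _ (by simp), Finsupp.prod_fintype _ _ (by simp)]
      simp only [Fin.prod_univ_three, Fin.prod_univ_four, map_mul]
      ring

/-- Exponent vector. -/
noncomputable def expo (P Q R : ℕ) : Fin 3 →₀ ℕ :=
  Finsupp.single 0 P + Finsupp.single 1 Q + Finsupp.single 2 R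

lemma expo_inj {P Q R P' Q' R' : ℕ} (h : expo P Q R = expo P' Q' R') :
    P = P' ∧ Q = Q' ∧ R = R' := by
  have h0 := DFunLike.congr_fun h 0
  have h1 := DFunLike.congr_fun h 1
  have h2 := DFunLike.congr_fun h 2
  simp [expo] at h0 h1 h2
  exact ⟨h0, h1, h2⟩

lemma monomial_expo {k : Type*} [Field k] (P Q R : ℕ) :
    (monomial (expo P Q R) 1 : MvPolynomial (Fin 3) k) = X 0 ^ P * X 1 ^ Q * X 2 ^ R := by
  simp [expo, X_pow_eq_monomial, monomial_mul]

/-- Exists a `k`-linear map with prescribed values on monomials. -/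
lemma exists_lin {k : Type*} [Field k] {M : Type*} [AddCommGroup M] [Module k M]
    (g : (Fin 3 →₀ ℕ) → ℕ → M) :
    ∃ σ : Polynomial (MvPolynomial (Fin 3) k) →ₗ[k] M,
      ∀ e n, σ (Polynomial.C (monomial e 1) * Polynomial.X ^ n) = g e n := by
  let B := (MvPolynomial.basisMonomials (Fin 3) k).smulTower
    (Polynomial.basisMonomials (MvPolynomial (Fin 3) k))
  refine ⟨B.constr k (fun s => g s.1 s.2), fun e n => ?_⟩
  have : Polynomial.C (monomial e (1 : k)) * Polynomial.X ^ n = B (e, n) := by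
    simp [B, Module.Basis.smulTower_apply, Polynomial.smul_monomial,
      Polynomial.C_mul_X_pow_eq_monomial]
  rw [this, Module.Basis.constr_basis]

/-- An algebra map out of `S` killing the ten relations kills the Rees ideal. -/
lemma rees_le {k : Type*} [Field k] (a b c : ℕ) (hac : a = 3 * b + c)
    (x y z : MvPolynomial (Fin 3) k) (hx : x = X 0) (hy : y = X 1) (hz : z = X 2)
    (t u v w : MvPolynomial (Fin 4) (MvPolynomial (Fin 3) k))
    (ht0 : t = X 0) (hu0 : u = X 1) (hv0 : v = X 2) (hw0 : w = X 3)
    (ψ : MvPolynomial (Fin 4) (MvPolynomial (Fin 3) k) →ₐ[MvPolynomial (Fin 3) k]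
      Polynomial (MvPolynomial (Fin 3) k))
    (hC : ∀ s, ψ (C s) = Polynomial.C s)
    (ht : ψ t = Polynomial.C (x ^ a) * Polynomial.X)
    (hu : ψ u = Polynomial.C (y ^ a) * Polynomial.X)
    (hv : ψ v = Polynomial.C (z ^ a) * Polynomial.X)
    (hw : ψ w = Polynomial.C ((x * y * z) ^ b) * Polynomial.X)
    {A : Type*} [CommRing A] [Algebra k A] (mk : MvPolynomial (Fin 4) (MvPolynomial (Fin 3) k) →ₐ[k] A)
    (f1 : mk (C (x ^ a) * u) = mk (C (y ^ a) * t))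
    (f2 : mk (C (x ^ a) * v) = mk (C (z ^ a) * t))
    (f3 : mk (C (y ^ a) * v) = mk (C (z ^ a) * u))
    (g1 : mk (C (x ^ (2 * b + c)) * w) = mk (C ((y * z) ^ b) * t))
    (g2 : mk (C (y ^ (2 * b + c)) * w) = mk (C ((x * z) ^ b) * u))
    (g3 : mk (C (z ^ (2 * b + c)) * w) = mk (C ((x * y) ^ b) * v))
    (h1 : mk (C ((x * y) ^ (b + c)) * w ^ 2) = mk (C (z ^ (2 * b)) * t * u))
    (h2 : mk (C ((x * z) ^ (b + c)) * w ^ 2) = mk (C (y ^ (2 * b)) * t * v))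
    (h3 : mk (C ((y * z) ^ (b + c)) * w ^ 2) = mk (C (x ^ (2 * b)) * u * v))
    (e1 : mk (C ((x * y * z) ^ c) * w ^ 3) = mk (t * u * v))
    (f : MvPolynomial (Fin 4) (MvPolynomial (Fin 3) k)) (hf : ψ f = 0) : mk f = 0 := by
  simp only [map_mul, map_pow] at f1 f2 f3 g1 g2 g3 h1 h2 h3 e1
  let M : ℕ → ℕ → ℕ → ℕ → ℕ → ℕ → ℕ → (MvPolynomial (Fin 4) (MvPolynomial (Fin 3) k)) := fun p q r i j l m =>
    C (x ^ p * y ^ q * z ^ r) * (t ^ i * u ^ j * v ^ l * w ^ m)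
  have hψM : ∀ p q r i j l m, ψ (M p q r i j l m) =
      Polynomial.C (monomial (expo (p + a * i + b * m) (q + a * j + b * m) (r + a * l + b * m))
        (1 : k)) * Polynomial.X ^ (i + j + l + m) := by
    intro p q r i j l m
    rw [monomial_expo]
    simp only [M, map_mul, map_pow, hC, ht, hu, hv, hw]
    rw [← hx, ← hy, ← hz]
    ring
  have conn : ∀ p q r i j l m p' q' r' i' j' l' m',
      i + j + l + m = i' + j' + l' + m' → p + a * i + b * m = p' + a * i' + b * m' →
      q + a * j + b * m = q' + a * j' + b * m' → r + a * l + b * m = r' + a * l' + b * m' →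
      mk (M p q r i j l m) = mk (M p' q' r' i' j' l' m') := by
    intro p q r i j l m p' q' r' i' j' l' m' hn hp hq hr
    have key := conn_aux (mk (C x)) (mk (C y)) (mk (C z)) (mk t) (mk u) (mk v) (mk w) a b c hac
      f1 f2 f3 g1 g2 g3 h1 h2 h3 e1
      _ p q r i j l m p' q' r' i' j' l' m' le_rfl hn hp hq hr
    simp only [M, map_mul, map_pow]
    linear_combination key
  classical
  obtain ⟨σ, hσ⟩ := exists_lin (k := k) (M := A) (fun e n =>
    if h : ∃ s : ℕ × ℕ × ℕ × ℕ × ℕ × ℕ × ℕ, 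
        e = expo (s.1 + a * s.2.2.2.1 + b * s.2.2.2.2.2.2)
          (s.2.1 + a * s.2.2.2.2.1 + b * s.2.2.2.2.2.2)
          (s.2.2.1 + a * s.2.2.2.2.2.1 + b * s.2.2.2.2.2.2) ∧
        n = s.2.2.2.1 + s.2.2.2.2.1 + s.2.2.2.2.2.1 + s.2.2.2.2.2.2 then
      mk (M h.choose.1 h.choose.2.1 h.choose.2.2.1 h.choose.2.2.2.1 h.choose.2.2.2.2.1
        h.choose.2.2.2.2.2.1 h.choose.2.2.2.2.2.2) else 0)
  have main : ∀ f : (MvPolynomial (Fin 4) (MvPolynomial (Fin 3) k)), σ (ψ f) = mk f := by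
    intro f
    refine mem_of_monomials (fun f => σ (ψ f) = mk f) ?_ ?_ f
    · intro f g hf hg
      rw [map_add, map_add, map_add, hf, hg]
    · intro c p q r i j l m
      have h1 : (C (C c) * (C (X 0 ^ p * X 1 ^ q * X 2 ^ r) *
          (X 0 ^ i * X 1 ^ j * X 2 ^ l * X 3 ^ m)) : (MvPolynomial (Fin 4) (MvPolynomial (Fin 3) k))) = c • M p q r i j l m := by
        subst hx hy hz ht0 hu0 hv0 hw0; rw [Algebra.smul_def]; rfl
      have h2 : ψ (c • M p q r i j l m) = c • ψ (M p q r i j l m) := 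
        map_smul (ψ.restrictScalars k) c _
      have h3 : mk (c • M p q r i j l m) = c • mk (M p q r i j l m) :=
        map_smul mk c _
      show σ (ψ _) = mk _
      rw [h1, h2, h3, map_smul, hψM, hσ]
      congr 1
      have hex : ∃ s : ℕ × ℕ × ℕ × ℕ × ℕ × ℕ × ℕ, 
        expo (p + a * i + b * m) (q + a * j + b * m) (r + a * l + b * m) 
          = expo (s.1 + a * s.2.2.2.1 + b * s.2.2.2.2.2.2)
          (s.2.1 + a * s.2.2.2.2.1 + b * s.2.2.2.2.2.2)
          (s.2.2.1 + a * s.2.2.2.2.2.1 + b * s.2.2.2.2.2.2) ∧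
        i + j + l + m = s.2.2.2.1 + s.2.2.2.2.1 + s.2.2.2.2.2.1 + s.2.2.2.2.2.2 :=
        ⟨(p, q, r, i, j, l, m), rfl, rfl⟩
      rw [dif_pos hex]
      obtain ⟨he, hn⟩ := hex.choose_spec
      obtain ⟨e1, e2, e3⟩ := expo_inj he
      exact (conn _ _ _ _ _ _ _ _ _ _ _ _ _ _ hn e1 e2 e3).symm
  have := main f
  rw [hf, map_zero] at this
  exact this.symm

universe u in
/-- Every ideal is the kernel of an algebra map. -/
lemma exists_quot {k : Type*} [Field k] {S : Type u} [CommRing S] [Algebra k S] (J : Ideal S) :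
    ∃ (A : Type u) (_ : CommRing A) (_ : Algebra k A) (mk : S →ₐ[k] A), ∀ f, mk f = 0 ↔ f ∈ J :=
  ⟨S ⧸ J, inferInstance, inferInstance, Ideal.Quotient.mkₐ k J,
    fun _ => Ideal.Quotient.eq_zero_iff_mem⟩

set_option maxHeartbeats 1000000 in
/-- The main theorem with the data given as variables. -/
lemma rees_aux {k : Type*} [Field k] (a b : ℕ) (h3b : 3 * b < a)
    (x y z : MvPolynomial (Fin 3) k) (hx : x = X 0) (hy : y = X 1) (hz : z = X 2)
    (t u v w : MvPolynomial (Fin 4) (MvPolynomial (Fin 3) k))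
    (ht0 : t = X 0) (hu0 : u = X 1) (hv0 : v = X 2) (hw0 : w = X 3)
    (ψ : MvPolynomial (Fin 4) (MvPolynomial (Fin 3) k) →ₐ[MvPolynomial (Fin 3) k]
      Polynomial (MvPolynomial (Fin 3) k))
    (hC : ∀ s, ψ (C s) = Polynomial.C s)
    (ht : ψ t = Polynomial.C (x ^ a) * Polynomial.X)
    (hu : ψ u = Polynomial.C (y ^ a) * Polynomial.X)
    (hv : ψ v = Polynomial.C (z ^ a) * Polynomial.X)
    (hw : ψ w = Polynomial.C ((x * y * z) ^ b) * Polynomial.X) :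
    RingHom.ker ψ.toRingHom = Ideal.span
      { C (x ^ a) * u - C (y ^ a) * t,
        C (x ^ a) * v - C (z ^ a) * t,
        C (y ^ a) * v - C (z ^ a) * u,
        C (x ^ (a - b)) * w - C ((y * z) ^ b) * t,
        C (y ^ (a - b)) * w - C ((x * z) ^ b) * u,
        C (z ^ (a - b)) * w - C ((x * y) ^ b) * v,
        C ((x * y) ^ (a - 2 * b)) * w ^ 2 - C (z ^ (2 * b)) * t * u,
        C ((x * z) ^ (a - 2 * b)) * w ^ 2 - C (y ^ (2 * b)) * t * v,
        C ((y * z) ^ (a - 2 * b)) * w ^ 2 - C (x ^ (2 * b)) * u * v,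
        C ((x * y * z) ^ (a - 3 * b)) * w ^ 3 - t * u * v } := by
  obtain ⟨c, rfl⟩ := Nat.exists_eq_add_of_le h3b.le
  have s1 : 3 * b + c - b = 2 * b + c := by omega
  have s2 : 3 * b + c - 2 * b = b + c := by omega
  have s3 : 3 * b + c - 3 * b = c := by omega
  rw [s1, s2, s3]
  apply le_antisymm
  · intro f hf
    have hf' : ψ f = 0 := hf
    revert hf'
    generalize hG : ({_, _, _, _, _, _, _, _, _, _} : Set (MvPolynomial (Fin 4) (MvPolynomial (Fin 3) k))) = G
    intro hf'
    obtain ⟨A, _, _, mk, hmk⟩ := exists_quot (k := k) (Ideal.span G)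
    have rel : ∀ A B : MvPolynomial (Fin 4) (MvPolynomial (Fin 3) k), A - B ∈ G → mk A = mk B :=
      fun A B h => sub_eq_zero.1 (by rw [← map_sub]; exact (hmk _).2 (Ideal.subset_span h))
    have r0 := rel (C (x ^ (3 * b + c)) * u) (C (y ^ (3 * b + c)) * t) (by
      rw [← hG]; simp only [Set.mem_insert_iff, Set.mem_singleton_iff, true_or, or_true])
    have r1 := rel (C (x ^ (3 * b + c)) * v) (C (z ^ (3 * b + c)) * t) (by
      rw [← hG]; simp only [Set.mem_insert_iff, Set.mem_singleton_iff, true_or, or_true])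
    have r2 := rel (C (y ^ (3 * b + c)) * v) (C (z ^ (3 * b + c)) * u) (by
      rw [← hG]; simp only [Set.mem_insert_iff, Set.mem_singleton_iff, true_or, or_true])
    have r3 := rel (C (x ^ (2 * b + c)) * w) (C ((y * z) ^ b) * t) (by
      rw [← hG]; simp only [Set.mem_insert_iff, Set.mem_singleton_iff, true_or, or_true])
    have r4 := rel (C (y ^ (2 * b + c)) * w) (C ((x * z) ^ b) * u) (by
      rw [← hG]; simp only [Set.mem_insert_iff, Set.mem_singleton_iff, true_or, or_true])
    have r5 := rel (C (z ^ (2 * b + c)) * w) (C ((x * y) ^ b) * v) (by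
      rw [← hG]; simp only [Set.mem_insert_iff, Set.mem_singleton_iff, true_or, or_true])
    have r6 := rel (C ((x * y) ^ (b + c)) * w ^ 2) (C (z ^ (2 * b)) * t * u) (by
      rw [← hG]; simp only [Set.mem_insert_iff, Set.mem_singleton_iff, true_or, or_true])
    have r7 := rel (C ((x * z) ^ (b + c)) * w ^ 2) (C (y ^ (2 * b)) * t * v) (by
      rw [← hG]; simp only [Set.mem_insert_iff, Set.mem_singleton_iff, true_or, or_true])
    have r8 := rel (C ((y * z) ^ (b + c)) * w ^ 2) (C (x ^ (2 * b)) * u * v) (by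
      rw [← hG]; simp only [Set.mem_insert_iff, Set.mem_singleton_iff, true_or, or_true])
    have r9 := rel (C ((x * y * z) ^ (c)) * w ^ 3) (t * u * v) (by
      rw [← hG]; simp only [Set.mem_insert_iff, Set.mem_singleton_iff, true_or, or_true])
    have key := rees_le (3 * b + c) b c rfl x y z hx hy hz t u v w ht0 hu0 hv0 hw0 ψ hC ht hu hv hw
      mk r0 r1 r2 r3 r4 r5 r6 r7 r8 r9 f hf'
    exact (hmk f).1 key
  · rw [Ideal.span_le]
    intro f hf
    show ψ f = 0
    simp only [Set.mem_insert_iff, Set.mem_singleton_iff] at hf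
    rcases hf with rfl | rfl | rfl | rfl | rfl | rfl | rfl | rfl | rfl | rfl <;>
    · simp only [map_sub, map_mul, map_pow, hC, ht, hu, hv, hw]
      ring

/-- Let `I = (x^a, y^a, z^a, (xyz)^b) ⊆ k[x,y,z]` with
`a > 3b`, and let `𝓘` be the Rees ideal of `I` (kernel of `S = R[t,u,v,w] → R[T]`,
`t ↦ x^a T, u ↦ y^a T, v ↦ z^a T, w ↦ (xyz)^b T`).  Then
`𝓘 = (f1, f2, f3, g1, g2, g3, H1, H2, H3, E')` with `E' = (xyz)^{a-3b} w^3 - t u v`. -/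
theorem stmt17 {k : Type*} [Field k] (a b : ℕ) (hb : 0 < b) (h2b : 2 * b < a)
    (h3b : 3 * b < a) :
    let R := MvPolynomial (Fin 3) k
    let x : R := X 0
    let y : R := X 1
    let z : R := X 2
    let S := MvPolynomial (Fin 4) R
    let t : S := X 0
    let u : S := X 1
    let v : S := X 2
    let w : S := X 3
    let ψ : S →ₐ[R] Polynomial R :=
      aeval ![Polynomial.C (x ^ a) * Polynomial.X, Polynomial.C (y ^ a) * Polynomial.X,
        Polynomial.C (z ^ a) * Polynomial.X,
        Polynomial.C ((x * y * z) ^ b) * Polynomial.X]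
    RingHom.ker ψ.toRingHom = Ideal.span
      { C (x ^ a) * u - C (y ^ a) * t,
        C (x ^ a) * v - C (z ^ a) * t,
        C (y ^ a) * v - C (z ^ a) * u,
        C (x ^ (a - b)) * w - C ((y * z) ^ b) * t,
        C (y ^ (a - b)) * w - C ((x * z) ^ b) * u,
        C (z ^ (a - b)) * w - C ((x * y) ^ b) * v,
        C ((x * y) ^ (a - 2 * b)) * w ^ 2 - C (z ^ (2 * b)) * t * u,
        C ((x * z) ^ (a - 2 * b)) * w ^ 2 - C (y ^ (2 * b)) * t * v,
        C ((y * z) ^ (a - 2 * b)) * w ^ 2 - C (x ^ (2 * b)) * u * v,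
        C ((x * y * z) ^ (a - 3 * b)) * w ^ 3 - t * u * v } := by
  intro R x y z S t u v w ψ
  exact rees_aux a b h3b x y z rfl rfl rfl t u v w rfl rfl rfl rfl ψ
    (fun s => MvPolynomial.aeval_C _ s) (MvPolynomial.aeval_X _ _) (MvPolynomial.aeval_X _ _)
    (MvPolynomial.aeval_X _ _) (MvPolynomial.aeval_X _ _)
end
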